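/- arXiv:1712.03676 — 3 statements merged into one kernel-verified Lean document; each statement's English description precedes it below -/
import Mathlib

section
/- Let Λ be a nonempty finite set and let M be a symmetric positive definite real Λ×Λ matrix whose largest eigenvalue ‖M‖ satisfies ‖M‖ < 1. Let ν be the probability measure on {−1,1}^Λ defined by ν({σ}) = Z^{−1} exp(−(1/2) Σ_{x,y∈Λ} M_{xy} σ_x σ_y), where Z is the normalising constant. Then for every function F : {−1,1}^Λ → ℝ, Ent_ν(F²) ≤ (1/2)(1 + 2‖M‖/(1 − ‖M‖)) Σ_{x∈Λ} ν((F(σ) − F(σ^x))²), where σ^x denotes the configuration obtained from σ by negating the spin at site x. -/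
/-!
Write `r - M = BᵀB` (a positive semidefinite matrix, bounded by `r`) and let `aₖ` be the rows of
`B`. Since spins square to one, `ν` is the measure at `t = 1`, `h = 0` of the family
`ν_{t,h} ∝ exp (t/2 ∑ₖ (aₖ · σ)² + h · σ)`, which consists of product measures at `t = 0`.
The inequality `(1 - r t) Ent(F²) ≤ ½ ∑ₓ ν_{t,h} ((F - F ∘ flipₓ)²)` is propagated from `t = 0` to
`t = 1`, uniformly in the field `h`.

The propagation rests on one identity. For every `g` the expectation `ν_{t,h}(g)` is annihilated by
`∂ₜ - ½ ∑ₖ ∂ₖ² - ∑ₖ ν_{t,h}(aₖ · σ) ∂ₖ`, where `∂ₖ` is the derivative in `h` along `aₖ`, while the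
operator sends `ψ(ν_{t,h}(f))` to `-½ ψ''(ν f) ∑ₖ Cov(f, aₖ · σ)²`. A parabolic maximum principle
on the space of fields (`gap_nonneg`, with a quadratic barrier) therefore reduces an inequality for
all `t` to the one at `t = 0` and a bound on these squared covariances. It is used twice:

* with `ψ x = x²`, to get `Var(v · σ) ≤ |v|² / (1 - r t)` in every field (`variance_bound`);
* with `ψ x = x log x`, to get the logarithmic Sobolev inequality (`flow_LSI`). The covariance
  bound needed is `entropic_stability`: by the variance bound linear observables are sub-Gaussian,
  and the Gibbs variational principle turns this into
  `∑ₓ Cov(F², σₓ)² ≤ 2 / (1 - r t) · ν(F²) · Ent(F²)`.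

The initial condition `product_LSI` is the two-point inequality `two_point_LSI`, whose constant does
not depend on the weights, tensorized over the sites. The argument yields the constant
`½ / (1 - r)`, which is at most the claimed `½ (1 + r) / (1 - r)`.
-/

open Matrix Real

/-! ### Gibbs expectations on a finite set -/

/-- Expectation of `g` under the probability measure with weights proportional to `exp (U ω)`
(no minus sign in front of `U`). -/
noncomputable def gibbs {Ω : Type*} [Fintype Ω] (U g : Ω → ℝ) : ℝ :=
  (∑ ω, exp (U ω) * g ω) / ∑ ω, exp (U ω)

/-- Covariance of `f` and `g` under the measure of `gibbs U`. -/
noncomputable def gcov {Ω : Type*} [Fintype Ω] (U f g : Ω → ℝ) : ℝ :=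
  gibbs U (fun ω => f ω * g ω) - gibbs U f * gibbs U g

section Gibbs
variable {Ω : Type*} [Fintype Ω]

lemma partition_pos [Nonempty Ω] (U : Ω → ℝ) : 0 < ∑ ω, exp (U ω) :=
  Finset.sum_pos (fun _ _ => exp_pos _) Finset.univ_nonempty

lemma gibbs_add (U f g : Ω → ℝ) :
    gibbs U (fun ω => f ω + g ω) = gibbs U f + gibbs U g := by
  simp only [gibbs, mul_add, Finset.sum_add_distrib, add_div]

lemma gibbs_const_mul (U g : Ω → ℝ) (c : ℝ) :
    gibbs U (fun ω => c * g ω) = c * gibbs U g := by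
  simp only [gibbs, mul_left_comm _ c, ← Finset.mul_sum, mul_div_assoc]

lemma gibbs_sub (U f g : Ω → ℝ) :
    gibbs U (fun ω => f ω - g ω) = gibbs U f - gibbs U g := by
  simp only [gibbs, mul_sub, Finset.sum_sub_distrib, sub_div]

lemma gibbs_sum {ι : Type*} (s : Finset ι) (U : Ω → ℝ) (g : ι → Ω → ℝ) :
    gibbs U (fun ω => ∑ i ∈ s, g i ω) = ∑ i ∈ s, gibbs U (g i) := by
  simp only [gibbs, Finset.mul_sum]
  rw [Finset.sum_comm, Finset.sum_div]

lemma gibbs_const [Nonempty Ω] (U : Ω → ℝ) (c : ℝ) : gibbs U (fun _ => c) = c := by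
  simp only [gibbs, ← Finset.sum_mul]
  field_simp [(partition_pos U).ne']

lemma gibbs_mono (U : Ω → ℝ) {f g : Ω → ℝ} (h : ∀ ω, f ω ≤ g ω) : gibbs U f ≤ gibbs U g := by
  unfold gibbs
  gcongr
  exact h _

lemma gibbs_pos [Nonempty Ω] (U : Ω → ℝ) {f : Ω → ℝ} (h : ∀ ω, 0 < f ω) : 0 < gibbs U f :=
  div_pos (Finset.sum_pos (fun ω _ => mul_pos (exp_pos _) (h ω)) Finset.univ_nonempty)
    (partition_pos U)

lemma gibbs_nonneg (U : Ω → ℝ) {f : Ω → ℝ} (h : ∀ ω, 0 ≤ f ω) : 0 ≤ gibbs U f :=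
  div_nonneg (Finset.sum_nonneg fun ω _ => mul_nonneg (exp_pos _).le (h ω))
    (Finset.sum_nonneg fun _ _ => (exp_pos _).le)

lemma gcov_sum_right {ι : Type*} (s : Finset ι) (U f : Ω → ℝ) (g : ι → Ω → ℝ) :
    gcov U f (fun ω => ∑ i ∈ s, g i ω) = ∑ i ∈ s, gcov U f (g i) := by
  simp only [gcov, Finset.mul_sum, gibbs_sum, Finset.sum_sub_distrib]

lemma gcov_const_mul_right (U f g : Ω → ℝ) (c : ℝ) :
    gcov U f (fun ω => c * g ω) = c * gcov U f g := by
  simp only [gcov, gibbs_const_mul, mul_left_comm _ c, mul_sub]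

lemma gcov_comm (U f g : Ω → ℝ) : gcov U f g = gcov U g f := by
  simp only [gcov, mul_comm]

lemma gcov_self_eq [Nonempty Ω] (U f : Ω → ℝ) :
    gcov U f f = gibbs U (fun ω => (f ω - gibbs U f) ^ 2) := by
  have h : (fun ω => (f ω - gibbs U f) ^ 2) =
      fun ω => (f ω * f ω - (2 * gibbs U f) * f ω) + (gibbs U f) ^ 2 := by
    funext ω; ring
  rw [h, gibbs_add, gibbs_sub, gibbs_const_mul, gibbs_const, gcov]
  ring

lemma gcov_self_nonneg [Nonempty Ω] (U f : Ω → ℝ) : 0 ≤ gcov U f f := by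
  rw [gcov_self_eq]
  exact gibbs_nonneg U fun _ => sq_nonneg _

lemma gcov_sq_le [Nonempty Ω] (U f g : Ω → ℝ) :
    gcov U f g ^ 2 ≤ gcov U f f * gcov U g g := by
  have h (x : ℝ) : 0 ≤ gcov U g g * (x * x) + (2 * gcov U f g) * x + gcov U f f := by
    have h1 := gcov_self_nonneg U (fun ω => f ω + x * g ω)
    have h2 : gcov U (fun ω => f ω + x * g ω) (fun ω => f ω + x * g ω) =
        gcov U g g * (x * x) + (2 * gcov U f g) * x + gcov U f f := by
      have h3 : (fun ω => (f ω + x * g ω) * (f ω + x * g ω)) = fun ω =>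
          (f ω * f ω + (2 * x) * (f ω * g ω)) + (x * x) * (g ω * g ω) := by
        funext ω; ring
      simp only [gcov, h3, gibbs_add, gibbs_const_mul]
      ring
    linarith
  have := discrim_le_zero h
  unfold discrim at this
  nlinarith

/-- Differentiating a Gibbs expectation in the energy gives a covariance. -/
lemma hasDerivAt_gibbs [Nonempty Ω] {U : ℝ → Ω → ℝ} {q : Ω → ℝ} {t : ℝ}
    (hU : ∀ ω, HasDerivAt (fun s => U s ω) (q ω) t) (g : Ω → ℝ) :
    HasDerivAt (fun s => gibbs (U s) g) (gcov (U t) g q) t := by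
  have h1 : HasDerivAt (fun s => ∑ ω, exp (U s ω) * g ω)
      (∑ ω, exp (U t ω) * q ω * g ω) t :=
    HasDerivAt.fun_sum fun ω _ => ((hU ω).exp).mul_const _
  have h2 : HasDerivAt (fun s => ∑ ω, exp (U s ω)) (∑ ω, exp (U t ω) * q ω) t :=
    HasDerivAt.fun_sum fun ω _ => (hU ω).exp
  have hZ := (partition_pos (U t)).ne'
  have h3 := h1.div h2 hZ
  refine h3.congr_deriv ?_
  have e : ∑ ω, exp (U t ω) * q ω * g ω = ∑ ω, exp (U t ω) * (g ω * q ω) :=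
    Finset.sum_congr rfl fun ω _ => by ring
  rw [e]
  simp only [gcov, gibbs]
  field_simp

lemma gibbs_congr_add_const (U : Ω → ℝ) (c : ℝ) (g : Ω → ℝ) :
    gibbs (fun ω => U ω + c) g = gibbs U g := by
  simp only [gibbs, exp_add, mul_right_comm _ (exp c), ← Finset.sum_mul]
  exact mul_div_mul_right _ _ (exp_pos c).ne'

/-- One direction of the Gibbs variational principle: with `m` the mean of `f`, the entropy of `f`
dominates the mean of `f * g` minus `m` times the log-Laplace transform of `g`. Pointwise it is
`1 + x ≤ exp x` with `x = g - log z + log m - log f`. -/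
lemma gibbs_variational [Nonempty Ω] (U : Ω → ℝ) {f : Ω → ℝ} (hf : ∀ ω, 0 < f ω) (g : Ω → ℝ) :
    gibbs U (fun ω => f ω * g ω) - gibbs U f * log (gibbs U fun ω => exp (g ω)) ≤
      gibbs U (fun ω => f ω * log (f ω)) - gibbs U f * log (gibbs U f) := by
  set m := gibbs U f
  set z := gibbs U fun ω => exp (g ω)
  have hm : 0 < m := gibbs_pos U hf
  have hz : 0 < z := gibbs_pos U fun _ => exp_pos _
  have key : ∀ ω, f ω * g ω ≤ (f ω * log (f ω) + (log z - log m - 1) * f ω)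
      + (m / z) * exp (g ω) := by
    intro ω
    have h1 := add_one_le_exp (g ω - log z + log m - log (f ω))
    have h2 : exp (g ω - log z + log m - log (f ω)) = (m / z) * exp (g ω) / f ω := by
      rw [exp_sub, exp_add, exp_sub, exp_log hz, exp_log hm, exp_log (hf ω)]
      ring
    rw [h2, le_div_iff₀ (hf ω)] at h1
    nlinarith
  have h := gibbs_mono U key
  rw [gibbs_add, gibbs_add, gibbs_const_mul, gibbs_const_mul] at h
  change _ ≤ _ + _ * m + m / z * z at h
  rw [div_mul_cancel₀ _ hz.ne'] at h
  linarith

end Gibbs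

/-! ### Minimum tests and a Taylor bound on the line -/

lemma deriv_nonpos_of_min_left {φ : ℝ → ℝ} {d t : ℝ} (ht : 0 < t) (hd : HasDerivAt φ d t)
    (hmin : ∀ s, 0 ≤ s → s ≤ t → φ t ≤ φ s) : d ≤ 0 := by
  have h1 := (hasDerivAt_iff_tendsto_slope_left_right.1 hd).1
  refine le_of_tendsto h1 ?_
  filter_upwards [Ioo_mem_nhdsLT ht] with s hs
  rw [slope_def_field]
  exact div_nonpos_of_nonneg_of_nonpos (sub_nonneg.2 (hmin s hs.1.le hs.2.le)) (by linarith [hs.2])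

lemma second_deriv_nonneg_of_min {φ φ' : ℝ → ℝ} {d : ℝ} (h1 : ∀ s, HasDerivAt φ (φ' s) s)
    (h2 : HasDerivAt φ' d 0) (hmin : ∀ s, φ 0 ≤ φ s) : φ' 0 = 0 ∧ 0 ≤ d := by
  have h0 : φ' 0 = 0 :=
    IsLocalMin.hasDerivAt_eq_zero (Filter.Eventually.of_forall hmin) (h1 0)
  refine ⟨h0, ?_⟩
  by_contra! hd
  have h3 := (hasDerivAt_iff_tendsto_slope_left_right.1 h2).2
  have h4 := h3.eventually (gt_mem_nhds hd)
  obtain ⟨u, hu, hu'⟩ := mem_nhdsGT_iff_exists_Ioo_subset.1 h4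
  have hu0 : (0 : ℝ) < u := hu
  have hneg : ∀ x ∈ Set.Ioo 0 (u / 2), φ' x < 0 := by
    intro x hx
    have : slope φ' 0 x < 0 := hu' ⟨hx.1, by linarith [hx.2]⟩
    rw [slope_def_field, h0, sub_zero, sub_zero] at this
    exact (div_neg_iff.1 this).elim (fun h => absurd h.2 (by linarith [hx.1])) (fun h => h.1)
  obtain ⟨c, hc, hc'⟩ := exists_hasDerivAt_eq_slope φ φ' (half_pos hu0)
    (fun x _ => (h1 x).continuousAt.continuousWithinAt) (fun x _ => h1 x)
  have h5 := hneg c hc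
  rw [hc'] at h5
  have := div_nonneg (sub_nonneg.2 (hmin (u / 2))) (by linarith : (0 : ℝ) ≤ u / 2 - 0)
  linarith

/-- A function with second derivative at most `c` lies below its quadratic Taylor bound. -/
lemma taylor_upper {K K' K'' : ℝ → ℝ} {c : ℝ} (h1 : ∀ s, HasDerivAt K (K' s) s)
    (h2 : ∀ s, HasDerivAt K' (K'' s) s) (hc : ∀ s, K'' s ≤ c) :
    K 1 ≤ K 0 + K' 0 + c / 2 := by
  have hb : ∀ s, 0 ≤ s → K' s ≤ K' 0 + c * s := by
    intro s hs
    have hm : Antitone fun s => K' s - c * s := by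
      refine antitone_of_hasDerivAt_nonpos (f' := fun s => K'' s - c) (fun x => ?_) (fun x => by simpa using hc x)
      exact ((h2 x).sub ((hasDerivAt_id x).const_mul c)).congr_deriv (by simp)
    have := hm hs
    simp at this
    linarith
  have hm : AntitoneOn (fun s => K s - (K' 0 * s + c / 2 * s ^ 2)) (Set.Icc 0 1) := by
    have hd : ∀ x, HasDerivAt (fun s => K s - (K' 0 * s + c / 2 * s ^ 2)) (K' x - (K' 0 + c * x)) x := by
      intro x
      have := (h1 x).sub (((hasDerivAt_id x).const_mul (K' 0)).add (((hasDerivAt_id x).pow 2).const_mul (c/2)))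
      refine this.congr_deriv ?_
      simp; ring
    refine antitoneOn_of_deriv_nonpos (convex_Icc 0 1) (fun x _ => (hd x).continuousAt.continuousWithinAt)
      (fun x _ => (hd x).differentiableAt.differentiableWithinAt) ?_
    intro x hx
    rw [interior_Icc] at hx
    rw [(hd x).deriv]
    linarith [hb x hx.1.le]
  have := hm (by simp : (0:ℝ) ∈ Set.Icc 0 1) (by simp : (1:ℝ) ∈ Set.Icc 0 1) zero_le_one
  simp at this
  linarith

/-! ### The two-point logarithmic Sobolev inequality -/

/-- The difference of the two sides vanishes at `z = 1` and has derivative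
`(z - 1) ^ 3 / (3 * (1 + z + z ^ 2))`, so `1` is its minimum on the whole line. -/
lemma log_heronian (z : ℝ) :
    (-7 + 8 * z - z ^ 2) / 6 ≤ log ((1 + z + z ^ 2) / 3) := by
  set g : ℝ → ℝ := fun z => log ((1 + z + z ^ 2) / 3) - (-7 + 8 * z - z ^ 2) / 6 with hg
  have hpos : ∀ x : ℝ, 0 < 1 + x + x ^ 2 := fun x => by nlinarith [sq_nonneg (x + 1/2)]
  have hd : ∀ x, HasDerivAt g ((x - 1) ^ 3 / (3 * (1 + x + x ^ 2))) x := by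
    intro x
    have hp := hpos x
    have h1 : HasDerivAt (fun z : ℝ => (1 + z + z ^ 2) / 3) ((1 + 2 * x) / 3) x := by
      have := ((((hasDerivAt_id x).const_add 1).add ((hasDerivAt_id x).pow 2)).div_const 3)
      refine this.congr_deriv ?_
      simp
    have h2 : HasDerivAt (fun z : ℝ => (-7 + 8 * z - z ^ 2) / 6) ((8 - 2 * x) / 6) x := by
      have := (((((hasDerivAt_id x).const_mul 8).const_add (-7)).sub ((hasDerivAt_id x).pow 2)).div_const 6)
      refine this.congr_deriv ?_
      simp
    refine ((h1.log (by positivity)).sub h2).congr_deriv ?_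
    field_simp
    ring
  have hg1 : g 1 = 0 := by simp [hg]; norm_num
  have hcont : Continuous g := continuous_iff_continuousAt.2 fun x => (hd x).continuousAt
  have hdiff : Differentiable ℝ g := fun x => (hd x).differentiableAt
  have : 0 ≤ g z := by
    rw [← hg1]
    rcases le_total 1 z with h | h
    · refine monotoneOn_of_deriv_nonneg (convex_Ici 1) hcont.continuousOn hdiff.differentiableOn ?_
        Set.self_mem_Ici h h
      intro x hx
      rw [interior_Ici] at hx
      rw [(hd x).deriv]
      have := hpos x
      have : 0 ≤ x - 1 := by linarith [Set.mem_Ioi.1 hx]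
      positivity
    · refine antitoneOn_of_deriv_nonpos (convex_Iic 1) hcont.continuousOn hdiff.differentiableOn ?_
        h Set.self_mem_Iic h
      intro x hx
      rw [interior_Iic] at hx
      rw [(hd x).deriv]
      have := hpos x
      have h3 : (x - 1) ^ 3 ≤ 0 := by
        have : x - 1 ≤ 0 := by linarith [Set.mem_Iio.1 hx]
        exact Odd.pow_nonpos (by decide) this
      exact div_nonpos_of_nonpos_of_nonneg h3 (by positivity)
  simp only [hg] at this
  linarith

/-- Rescaled form of `log_heronian`. The left side is the Bregman divergence of `x log x` between
`a ^ 2` and `(a ^ 2 + a * b + b ^ 2) / 3`, a reference point symmetric in `a` and `b`. -/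
lemma young_half {a b : ℝ} (ha : 0 < a) (hb : 0 < b) :
    a ^ 2 * log (a ^ 2) - a ^ 2 * log ((a ^ 2 + a * b + b ^ 2) / 3) - a ^ 2
      + (a ^ 2 + a * b + b ^ 2) / 3 ≤ (a - b) ^ 2 / 2 := by
  have h := log_heronian (b / a)
  have e : (a ^ 2 + a * b + b ^ 2) / 3 = a ^ 2 * ((1 + b / a + (b / a) ^ 2) / 3) := by
    field_simp
  have hl : log ((a ^ 2 + a * b + b ^ 2) / 3) =
      log (a ^ 2) + log ((1 + b / a + (b / a) ^ 2) / 3) := by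
    rw [e, log_mul (by positivity) (by positivity)]
  rw [hl]
  have h2 := mul_le_mul_of_nonneg_left h (sq_nonneg a)
  have e2 : a ^ 2 * ((-7 + 8 * (b / a) - (b / a) ^ 2) / 6) = (-7 * a ^ 2 + 8 * a * b - b ^ 2) / 6 := by
    field_simp
  rw [e2] at h2
  nlinarith

/-- Logarithmic Sobolev inequality on two points, with the same constant for all weights `p, q`.
The entropy is the minimum over `y` of the averaged Bregman divergence from `y`; the choice
`y = (a ^ 2 + a * b + b ^ 2) / 3` bounds both terms of the average by `(a - b) ^ 2 / 2`. -/
lemma two_point_LSI {p q a b : ℝ} (hp : 0 ≤ p) (hq : 0 ≤ q) (hpq : p + q = 1)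
    (ha : 0 < a) (hb : 0 < b) :
    p * (a ^ 2 * log (a ^ 2)) + q * (b ^ 2 * log (b ^ 2))
      - (p * a ^ 2 + q * b ^ 2) * log (p * a ^ 2 + q * b ^ 2) ≤ (a - b) ^ 2 / 2 := by
  set y := (a ^ 2 + a * b + b ^ 2) / 3 with hy
  have hy0 : 0 < y := by positivity
  set m := p * a ^ 2 + q * b ^ 2 with hm
  have hm0 : 0 < m := by
    rcases hp.lt_or_eq with h | h
    · positivity
    · have : q = 1 := by linarith
      rw [hm, this]; positivity
  have h1 := young_half ha hb
  have h2 := young_half hb ha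
  rw [show b ^ 2 + b * a + a ^ 2 = a ^ 2 + a * b + b ^ 2 by ring] at h2
  rw [← hy] at h1 h2
  have h3 : m * log y + m - y ≤ m * log m := by
    have := add_one_le_exp (log y - log m)
    rw [exp_sub, exp_log hy0, exp_log hm0, le_div_iff₀ hm0] at this
    nlinarith
  have h4 := mul_le_mul_of_nonneg_left h1 hp
  have h5 := mul_le_mul_of_nonneg_left h2 hq
  have hq' : q = 1 - p := by linarith
  rw [hm] at h3 ⊢
  subst hq'
  nlinarith

/-! ### The interpolating family of Ising measures -/

/-- The spin value `±1` encoded by a Boolean. -/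
def sp (b : Bool) : ℝ := if b then 1 else -1

/-- The linear observable `v · σ`. -/
def lin {Λ : Type*} [Fintype Λ] (v : Λ → ℝ) (σ : Λ → Bool) : ℝ := ∑ x, v x * sp (σ x)

/-- Exponent of the interpolating Ising measure at time `t` with external field `h`; the interaction
is the quadratic form of the Gram matrix of the columns of `a`, multiplied by `t`. -/
noncomputable def energy {Λ : Type*} [Fintype Λ] (a : Λ → Λ → ℝ) (t : ℝ) (h : Λ → ℝ)
    (σ : Λ → Bool) : ℝ :=
  t / 2 * ∑ k, lin (a k) σ ^ 2 + lin h σ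

section
variable {Λ : Type*} [Fintype Λ]

lemma lin_add_smul (h v : Λ → ℝ) (s : ℝ) (σ : Λ → Bool) :
    lin (h + s • v) σ = lin h σ + s * lin v σ := by
  simp only [lin, Pi.add_apply, Pi.smul_apply, smul_eq_mul, add_mul, Finset.sum_add_distrib,
    Finset.mul_sum, mul_assoc]

lemma energy_add_smul (a : Λ → Λ → ℝ) (t : ℝ) (h v : Λ → ℝ) (s : ℝ) :
    energy a t (h + s • v) = fun σ => energy a t h σ + s * lin v σ := by
  funext σ
  simp only [energy, lin_add_smul, add_assoc]

lemma hasDerivAt_energy_time (a : Λ → Λ → ℝ) (t : ℝ) (h : Λ → ℝ) (σ : Λ → Bool) :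
    HasDerivAt (fun s => energy a s h σ) (1 / 2 * ∑ k, lin (a k) σ ^ 2) t := by
  simp only [energy]
  exact ((((hasDerivAt_id t).div_const 2).mul_const _).add_const _)

lemma hasDerivAt_energy_field (a : Λ → Λ → ℝ) (t : ℝ) (h v : Λ → ℝ) (σ : Λ → Bool) (s : ℝ) :
    HasDerivAt (fun s => energy a t (h + s • v) σ) (lin v σ) s := by
  simp only [energy_add_smul]
  simpa using (((hasDerivAt_id s).mul_const (lin v σ)).const_add (energy a t h σ))

lemma abs_lin_le (v : Λ → ℝ) (σ : Λ → Bool) : |lin v σ| ≤ ∑ x, |v x| := by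
  refine (Finset.abs_sum_le_sum_abs _ _).trans (Finset.sum_le_sum fun x _ => ?_)
  rw [abs_mul]
  cases σ x <;> simp [sp]

lemma continuous_lin (σ : Λ → Bool) : Continuous fun v : Λ → ℝ => lin v σ := by
  unfold lin
  fun_prop

/-- Deficit at time `t` and field `h` of the inequality
`(1 - r t) (ν Ψ - ψ (ν f)) ≤ ν G`, with `ν` the interpolating Ising measure. For `Ψ = ψ ∘ f` the
bracket is the `ψ`-entropy of `f`: the variance if `ψ x = x ^ 2`, the entropy if `ψ x = x log x`. -/
noncomputable def gap (a : Λ → Λ → ℝ) (r : ℝ) (ψ : ℝ → ℝ) (f Ψ G : (Λ → Bool) → ℝ) [DecidableEq Λ]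
    (t : ℝ) (h : Λ → ℝ) : ℝ :=
  gibbs (energy a t h) G - (1 - r * t) * (gibbs (energy a t h) Ψ - ψ (gibbs (energy a t h) f))

variable [DecidableEq Λ]

/-! ### A parabolic maximum principle -/

lemma hasDerivAt_gap_time (a : Λ → Λ → ℝ) (r : ℝ) {ψ : ℝ → ℝ} {f : (Λ → Bool) → ℝ}
    (Ψ G : (Λ → Bool) → ℝ) {t : ℝ} {h : Λ → ℝ} {d : ℝ}
    (hψ : HasDerivAt ψ d (gibbs (energy a t h) f)) :
    HasDerivAt (fun s => gap a r ψ f Ψ G s h)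
      (r * (gibbs (energy a t h) Ψ - ψ (gibbs (energy a t h) f))
        + ∑ k, 1 / 2 * (gcov (energy a t h) G (fun σ => lin (a k) σ ^ 2)
          - (1 - r * t) * (gcov (energy a t h) Ψ (fun σ => lin (a k) σ ^ 2)
            - d * gcov (energy a t h) f (fun σ => lin (a k) σ ^ 2)))) t := by
  have hE := fun g => hasDerivAt_gibbs (U := fun s => energy a s h)
    (hasDerivAt_energy_time a t h) g
  have hrt : HasDerivAt (fun s => 1 - r * s) (-r) t := by
    simpa using ((hasDerivAt_id t).const_mul r).const_sub 1
  have hc := hψ.comp t (hE f)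
  have := (hE G).sub (hrt.mul ((hE Ψ).sub hc))
  refine this.congr_deriv ?_
  simp only [gcov_const_mul_right, gcov_sum_right]
  simp only [← Finset.mul_sum, Finset.sum_sub_distrib]
  simp
  ring

lemma hasDerivAt_gap_field (a : Λ → Λ → ℝ) (r : ℝ) {ψ : ℝ → ℝ} {f : (Λ → Bool) → ℝ}
    (Ψ G : (Λ → Bool) → ℝ) {t : ℝ} {h v : Λ → ℝ} {d : ℝ} {s : ℝ}
    (hψ : HasDerivAt ψ d (gibbs (energy a t (h + s • v)) f)) :
    HasDerivAt (fun s => gap a r ψ f Ψ G t (h + s • v))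
      (gcov (energy a t (h + s • v)) G (lin v)
          - (1 - r * t) * (gcov (energy a t (h + s • v)) Ψ (lin v)
            - d * gcov (energy a t (h + s • v)) f (lin v))) s := by
  have hE := fun g => hasDerivAt_gibbs (U := fun s => energy a t (h + s • v))
    (fun σ => hasDerivAt_energy_field a t h v σ s) g
  have hc := hψ.comp s (hE f)
  exact (hE G).sub (((hE Ψ).sub hc).const_mul (1 - r * t))

lemma hasDerivAt_gcov_field (a : Λ → Λ → ℝ) (t : ℝ) (h v : Λ → ℝ) (s : ℝ) (g : (Λ → Bool) → ℝ) :
    HasDerivAt (fun s => gcov (energy a t (h + s • v)) g (lin v))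
      (gcov (energy a t (h + s • v)) g (fun σ => lin v σ ^ 2)
        - 2 * gibbs (energy a t (h + s • v)) (lin v) * gcov (energy a t (h + s • v)) g (lin v)) s := by
  have hE := fun g => hasDerivAt_gibbs (U := fun s => energy a t (h + s • v))
    (fun σ => hasDerivAt_energy_field a t h v σ s) g
  refine ((hE _).sub ((hE g).mul (hE (lin v)))).congr_deriv ?_
  simp only [gcov, pow_two, mul_assoc]
  ring

/-- Second derivative of `gap` in the direction `v` of the field: the function differentiated here
is the first derivative given by `hasDerivAt_gap_field`. -/
lemma hasDerivAt_gap_field' (a : Λ → Λ → ℝ) (r : ℝ) {ψ' : ℝ → ℝ} {f : (Λ → Bool) → ℝ}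
    (Ψ G : (Λ → Bool) → ℝ) {t : ℝ} {h v : Λ → ℝ} {d : ℝ} {s : ℝ}
    (hψ : HasDerivAt ψ' d (gibbs (energy a t (h + s • v)) f)) :
    HasDerivAt (fun s => gcov (energy a t (h + s • v)) G (lin v)
          - (1 - r * t) * (gcov (energy a t (h + s • v)) Ψ (lin v)
            - ψ' (gibbs (energy a t (h + s • v)) f) * gcov (energy a t (h + s • v)) f (lin v)))
      ((gcov (energy a t (h + s • v)) G (fun σ => lin v σ ^ 2)
          - (1 - r * t) * (gcov (energy a t (h + s • v)) Ψ (fun σ => lin v σ ^ 2)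
            - ψ' (gibbs (energy a t (h + s • v)) f) * gcov (energy a t (h + s • v)) f (fun σ => lin v σ ^ 2)
            - d * gcov (energy a t (h + s • v)) f (lin v) ^ 2))
        - 2 * gibbs (energy a t (h + s • v)) (lin v) *
          (gcov (energy a t (h + s • v)) G (lin v)
          - (1 - r * t) * (gcov (energy a t (h + s • v)) Ψ (lin v)
            - ψ' (gibbs (energy a t (h + s • v)) f) * gcov (energy a t (h + s • v)) f (lin v)))) s := by
  have hE := hasDerivAt_gibbs (U := fun s => energy a t (h + s • v))
    (fun σ => hasDerivAt_energy_field a t h v σ s) f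
  have hc := hψ.comp s hE
  have hC := hasDerivAt_gcov_field a t h v s
  refine ((hC G).sub (((hC Ψ).sub (hc.mul (hC f))).const_mul (1 - r * t))).congr_deriv ?_
  simp only [Function.comp]
  ring

/-- Parabolic maximum principle for the deficit. The operator
`∂ₜ - ½ ∑ₖ ∂ₖ² - ∑ₖ ν(aₖ · σ) ∂ₖ`, with `∂ₖ` the derivative in `h` along `aₖ`, annihilates every
expectation `ν g`, so applied to the deficit it leaves only
`r (ν Ψ - ψ (ν f)) - ½ (1 - r t) ψ''(ν f) ∑ₖ Cov(f, aₖ · σ) ^ 2`.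
If this is at least `γ` times the deficit at each `(t, h, p)` where the deficit is negative and
minimal in the parameter `p`, a deficit that is nonnegative at time `0` stays nonnegative up to
time `1`. The restriction to minimal `p` is what makes the hypothesis `hstep` usable for the
variance, where `p` ranges over unit vectors. -/
theorem gap_nonneg {P : Type*} [TopologicalSpace P] {K : Set P} (hK : IsCompact K)
    (a : Λ → Λ → ℝ) {r : ℝ} (hr0 : 0 ≤ r) (hr1 : r ≤ 1) {ψ ψ' ψ'' : ℝ → ℝ}
    {f Ψ G : P → (Λ → Bool) → ℝ}
    (hfc : ∀ σ, Continuous fun p => f p σ) (hΨc : ∀ σ, Continuous fun p => Ψ p σ)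
    (hGc : ∀ σ, Continuous fun p => G p σ)
    (hψ : ∀ p U, HasDerivAt ψ (ψ' (gibbs U (f p))) (gibbs U (f p)))
    (hψ' : ∀ p U, HasDerivAt ψ' (ψ'' (gibbs U (f p))) (gibbs U (f p)))
    {C : ℝ} (hψb : ∀ p U, -1 ≤ ψ (gibbs U (f p))) (hG : ∀ p σ, 0 ≤ G p σ)
    (hC0 : 0 ≤ C) (hC : ∀ p ∈ K, ∀ σ, Ψ p σ ≤ C)
    (h0 : ∀ h, ∀ p ∈ K, 0 ≤ gap a r ψ (f p) (Ψ p) (G p) 0 h)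
    {γ : ℝ}
    (hstep : ∀ t, 0 ≤ t → t ≤ 1 → ∀ h, ∀ p ∈ K,
      gap a r ψ (f p) (Ψ p) (G p) t h < 0 →
      (∀ p' ∈ K, gap a r ψ (f p) (Ψ p) (G p) t h ≤ gap a r ψ (f p') (Ψ p') (G p') t h) →
      γ * gap a r ψ (f p) (Ψ p) (G p) t h ≤
        r * (gibbs (energy a t h) (Ψ p) - ψ (gibbs (energy a t h) (f p)))
        - (1 - r * t) / 2 * ψ'' (gibbs (energy a t h) (f p)) *
          ∑ k, gcov (energy a t h) (f p) (lin (a k)) ^ 2)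
    {t : ℝ} (ht0 : 0 ≤ t) (ht1 : t ≤ 1) (h : Λ → ℝ) {p : P} (hp : p ∈ K) :
    0 ≤ gap a r ψ (f p) (Ψ p) (G p) t h := by
  by_contra! hneg
  -- `κ` is chosen so that `exp (κ t) (1 + |h| ^ 2)` is a strict supersolution (see `hbar`);
  -- it compensates the noncompactness of the space of fields.
  set T : Λ → ℝ := fun k => ∑ x, |a k x| with hT
  set κ : ℝ := 1 + Fintype.card Λ + ∑ k, ∑ x, (a k x ^ 2 + (T k) ^ 2 * a k x ^ 2) with hκ
  set W : ℝ → (Λ → ℝ) → P → ℝ := fun t h p => gap a r ψ (f p) (Ψ p) (G p) t h with hW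
  set b : ℝ → (Λ → ℝ) → ℝ := fun t h => exp (κ * t) * (1 + ∑ x, h x ^ 2) with hb
  have hbpos : ∀ t h, 0 < b t h := fun t h => by
    have : 0 ≤ ∑ x, h x ^ 2 := Finset.sum_nonneg fun x _ => sq_nonneg _
    simp only [hb]; positivity
  have hκ0 : 0 ≤ κ := by positivity
  obtain ⟨ε, hε, hε'⟩ : ∃ ε : ℝ, 0 < ε ∧ exp (-γ * t) * W t h p + ε * b t h < 0 := by
    have hn : exp (-γ * t) * W t h p < 0 := mul_neg_of_pos_of_neg (exp_pos _) hneg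
    refine ⟨-(exp (-γ * t) * W t h p) / (2 * b t h), by have := hbpos t h; apply div_pos <;> linarith, ?_⟩
    have hb0 := (hbpos t h).ne'
    have e1 : -(exp (-γ * t) * W t h p) / (2 * b t h) * b t h = -(exp (-γ * t) * W t h p) / 2 := by
      field_simp
    rw [e1]
    linarith
  set Om : ℝ × (Λ → ℝ) × P → ℝ := fun z =>
    exp (-γ * z.1) * W z.1 z.2.1 z.2.2 + ε * b z.1 z.2.1 with hOm
  have hgc : ∀ g : P → (Λ → Bool) → ℝ, (∀ σ, Continuous fun p => g p σ) →
      Continuous fun z : ℝ × (Λ → ℝ) × P => gibbs (energy a z.1 z.2.1) (g z.2.2) := by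
    intro g hg
    have hl : ∀ σ : Λ → Bool, Continuous fun z : ℝ × (Λ → ℝ) × P => lin z.2.1 σ :=
      fun σ => (continuous_lin σ).comp (continuous_fst.comp continuous_snd)
    have hg' : ∀ σ, Continuous fun z : ℝ × (Λ → ℝ) × P => g z.2.2 σ :=
      fun σ => (hg σ).comp (continuous_snd.comp continuous_snd)
    unfold gibbs energy
    refine Continuous.div ?_ ?_ (fun z => (partition_pos _).ne')
    · fun_prop
    · fun_prop
  have hWc : Continuous fun z : ℝ × (Λ → ℝ) × P => W z.1 z.2.1 z.2.2 := by
    simp only [hW, gap]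
    have h1 : Continuous fun z : ℝ × (Λ → ℝ) × P => ψ (gibbs (energy a z.1 z.2.1) (f z.2.2)) := by
      rw [continuous_iff_continuousAt]
      intro z
      exact ContinuousAt.comp (f := fun z : ℝ × (Λ → ℝ) × P => gibbs (energy a z.1 z.2.1) (f z.2.2))
        (hψ z.2.2 (energy a z.1 z.2.1)).continuousAt (hgc f hfc).continuousAt
    have h2 := hgc G hGc
    have h3 := hgc Ψ hΨc
    exact h2.sub ((continuous_const.sub (continuous_const.mul continuous_fst)).mul (h3.sub h1))
  have hOmc : Continuous Om := by
    simp only [hOm, hb]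
    fun_prop
  have hWb : ∀ t, 0 ≤ t → t ≤ 1 → ∀ h, ∀ p ∈ K, -(C + 1) ≤ W t h p := by
    intro t ht0 ht1 h p hp
    have h1 : 0 ≤ gibbs (energy a t h) (G p) := gibbs_nonneg _ (hG p)
    have h2 : gibbs (energy a t h) (Ψ p) ≤ C := by
      rw [← gibbs_const (energy a t h) C]
      exact gibbs_mono _ (hC p hp)
    have h3 := hψb p (energy a t h)
    have h4 : 0 ≤ r * t := mul_nonneg hr0 ht0
    have h5 : r * t ≤ 1 := by nlinarith
    simp only [hW, gap]
    nlinarith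
  -- The deficit is bounded below, so outside a ball of fields the barrier makes `Om` nonnegative
  -- and the negative minimum of `Om` is attained.
  set R : ℝ := exp |γ| * (C + 1) / ε with hR
  set B : Set (Λ → ℝ) := {h | ∑ x, h x ^ 2 ≤ R} with hB
  have hBc : IsCompact B := by
    refine Metric.isCompact_of_isClosed_isBounded (isClosed_le (by fun_prop) continuous_const) ?_
    refine (Metric.isBounded_closedBall (x := (0 : Λ → ℝ)) (r := √R)).subset ?_
    intro h hh
    rw [mem_closedBall_zero_iff, pi_norm_le_iff_of_nonneg (sqrt_nonneg _)]
    intro x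
    rw [norm_eq_abs]
    apply abs_le_sqrt
    exact (Finset.single_le_sum (f := fun x => h x ^ 2) (fun x _ => sq_nonneg _) (Finset.mem_univ x)).trans hh
  have hout : ∀ t, 0 ≤ t → t ≤ 1 → ∀ h, h ∉ B → ∀ p ∈ K, 0 ≤ Om (t, h, p) := by
    intro t ht0 ht1 h hh p hp
    simp only [hB, Set.mem_ofPred_eq, not_le, hR] at hh
    rw [div_lt_iff₀ hε] at hh
    have h1 := hWb t ht0 ht1 h p hp
    have h2 : exp (-γ * t) ≤ exp |γ| := by
      apply exp_le_exp.2
      have := neg_le_abs γ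
      have := abs_nonneg γ
      nlinarith
    have h3 : 1 ≤ exp (κ * t) := one_le_exp (by positivity)
    have h4 : 0 ≤ ∑ x, h x ^ 2 := Finset.sum_nonneg fun x _ => sq_nonneg _
    have h5 : ∑ x, h x ^ 2 ≤ b t h := by simp only [hb]; nlinarith
    have h6 : -(exp |γ| * (C + 1)) ≤ exp (-γ * t) * W t h p := by
      have := exp_pos (-γ * t)
      nlinarith
    have h7 : ε * ∑ x, h x ^ 2 ≤ ε * b t h := mul_le_mul_of_nonneg_left h5 hε.le
    simp only [hOm]
    linarith
  have hmem : (t, h, p) ∈ Set.Icc (0 : ℝ) 1 ×ˢ B ×ˢ K := by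
    refine ⟨⟨ht0, ht1⟩, ?_, hp⟩
    by_contra hh
    have := hout t ht0 ht1 h hh p hp
    simp only [hOm] at this
    linarith
  obtain ⟨⟨t₀, h₀, p₀⟩, ⟨⟨ht00, ht01⟩, hh₀, hp₀⟩, hmin⟩ :=
    (isCompact_Icc.prod (hBc.prod hK)).exists_isMinOn ⟨_, hmem⟩ hOmc.continuousOn
  simp only at ht00 ht01 hh₀ hp₀
  have hOm0 : Om (t₀, h₀, p₀) < 0 := lt_of_le_of_lt (hmin hmem) hε'
  have hglob : ∀ t, 0 ≤ t → t ≤ 1 → ∀ h, ∀ p ∈ K, Om (t₀, h₀, p₀) ≤ Om (t, h, p) := by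
    intro t ht0 ht1 h p hp
    by_cases hh : h ∈ B
    · exact hmin (show (t, h, p) ∈ Set.Icc (0 : ℝ) 1 ×ˢ B ×ˢ K from ⟨⟨ht0, ht1⟩, hh, hp⟩)
    · exact hOm0.le.trans (hout t ht0 ht1 h hh p hp)
  have ht0pos : 0 < t₀ := by
    rcases ht00.lt_or_eq with hlt | heq
    · exact hlt
    · exfalso
      subst heq
      have h1 : 0 ≤ W 0 h₀ p₀ := h0 h₀ p₀ hp₀
      have h2 := hbpos 0 h₀
      simp only [hOm] at hOm0
      have := exp_pos (-γ * 0)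
      have : 0 ≤ exp (-γ * 0) * W 0 h₀ p₀ := by positivity
      have : 0 ≤ ε * b 0 h₀ := by positivity
      linarith
  have hWneg : W t₀ h₀ p₀ < 0 := by
    by_contra! hge
    have h2 := hbpos t₀ h₀
    simp only [hOm] at hOm0
    have := exp_pos (-γ * t₀)
    have : 0 ≤ exp (-γ * t₀) * W t₀ h₀ p₀ := by positivity
    have : 0 ≤ ε * b t₀ h₀ := by positivity
    linarith
  have hWmin : ∀ p' ∈ K, W t₀ h₀ p₀ ≤ W t₀ h₀ p' := by
    intro p' hp'
    have := hglob t₀ ht00 ht01 h₀ p' hp'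
    simp only [hOm] at this
    exact le_of_mul_le_mul_left (by linarith) (exp_pos (-γ * t₀))
  have hs := hstep t₀ ht00 ht01 h₀ p₀ hp₀ hWneg hWmin
  set U := energy a t₀ h₀ with hU
  set e := exp (-γ * t₀) with he
  set E := exp (κ * t₀) with hE
  have he0 : 0 < e := exp_pos _
  have hE0 : 0 < E := exp_pos _
  set A2 : Λ → ℝ := fun k => ∑ x, a k x ^ 2 with hA2
  set Ah : Λ → ℝ := fun k => ∑ x, a k x * h₀ x with hAh
  set S : ℝ := ∑ x, h₀ x ^ 2 with hS
  set d1 := ψ' (gibbs U (f p₀)) with hd1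
  set d2 := ψ'' (gibbs U (f p₀)) with hd2
  -- The minimum may lie at `t₀ = 1`, so only the one-sided condition in time is available.
  have htime := deriv_nonpos_of_min_left (φ := fun s => Om (s, h₀, p₀)) ht0pos
    (((((hasDerivAt_id t₀).const_mul (-γ)).exp).mul
      (hasDerivAt_gap_time a r (Ψ p₀) (G p₀) (hψ p₀ U))).add
      (((((hasDerivAt_id t₀).const_mul κ).exp).mul_const (1 + S)).const_mul ε))
    (fun s hs0 hs1 => hglob s hs0 (hs1.trans ht01) h₀ p₀ hp₀)
  have hfield : ∀ k, _ ∧ _ := fun k =>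
    second_deriv_nonneg_of_min (φ := fun s => Om (t₀, h₀ + s • a k, p₀))
      (φ' := fun s => e * (gcov (energy a t₀ (h₀ + s • a k)) (G p₀) (lin (a k))
          - (1 - r * t₀) * (gcov (energy a t₀ (h₀ + s • a k)) (Ψ p₀) (lin (a k))
            - ψ' (gibbs (energy a t₀ (h₀ + s • a k)) (f p₀)) * gcov (energy a t₀ (h₀ + s • a k)) (f p₀) (lin (a k))))
          + ε * (E * (2 * Ah k + 2 * s * A2 k)))
      (fun s => by
        refine HasDerivAt.add ((hasDerivAt_gap_field a r (Ψ p₀) (G p₀) (hψ p₀ _)).const_mul e)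
          (HasDerivAt.const_mul ε (HasDerivAt.const_mul E ?_))
        have hx : ∀ x ∈ Finset.univ, HasDerivAt (fun s : ℝ => (h₀ + s • a k) x ^ 2)
            (2 * (a k x * h₀ x) + 2 * s * a k x ^ 2) s := by
          intro x _
          have := (((hasDerivAt_id s).mul_const (a k x)).const_add (h₀ x)).pow 2
          refine this.congr_deriv ?_
          simp; ring
        refine ((HasDerivAt.fun_sum hx).const_add 1).congr_deriv ?_
        simp only [hA2, hAh, Finset.sum_add_distrib, Finset.mul_sum])
      (((hasDerivAt_gap_field' a r (Ψ p₀) (G p₀) (hψ' p₀ _)).const_mul e).add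
        (HasDerivAt.const_mul ε (HasDerivAt.const_mul E
          ((((hasDerivAt_id (0:ℝ)).const_mul 2).mul_const (A2 k)).const_add (2 * Ah k)))))
      (fun s => by
        simp only [zero_smul, add_zero]
        exact hglob t₀ ht00 ht01 _ p₀ hp₀)
  simp only [zero_smul, add_zero, mul_zero, zero_mul, id, mul_one] at hfield htime
  rw [← hU] at htime
  simp only [← hU, ← hd1, ← hd2, ← he, ← hE] at hfield htime
  -- Half the second-order condition minus `ν(aₖ · σ)` times the first-order one, which cancels
  -- the drift produced by the second derivative of the deficit.
  have hk : ∀ k, 0 ≤ e * (1 / 2 * (gcov U (G p₀) (fun σ => lin (a k) σ ^ 2)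
          - (1 - r * t₀) * (gcov U (Ψ p₀) (fun σ => lin (a k) σ ^ 2)
            - d1 * gcov U (f p₀) (fun σ => lin (a k) σ ^ 2))))
      + e * ((1 - r * t₀) / 2 * d2) * gcov U (f p₀) (lin (a k)) ^ 2
      + ε * E * (A2 k + 2 * gibbs U (lin (a k)) * Ah k) := by
    intro k
    obtain ⟨h1, h2⟩ := hfield k
    linear_combination (1 / 2) * h2 - gibbs U (lin (a k)) * h1
  have hsum := Finset.sum_nonneg fun k (_ : k ∈ Finset.univ) => hk k
  simp only [Finset.sum_add_distrib (s := Finset.univ), ← Finset.mul_sum] at hsum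
  -- The time derivative of the barrier exceeds its diffusion and drift terms.
  have hbar : ∑ k, (A2 k + 2 * gibbs U (lin (a k)) * Ah k) < κ * (1 + S) := by
    have hN : ∀ k, gibbs U (lin (a k)) ^ 2 ≤ T k ^ 2 := by
      intro k
      apply sq_le_sq.2
      have hTk : 0 ≤ T k := Finset.sum_nonneg fun x _ => abs_nonneg _
      rw [abs_of_nonneg hTk, abs_le]
      constructor
      · rw [← gibbs_const U (-T k)]
        exact gibbs_mono U fun σ => (abs_le.1 (abs_lin_le (a k) σ)).1
      · rw [← gibbs_const U (T k)]
        exact gibbs_mono U fun σ => (abs_le.1 (abs_lin_le (a k) σ)).2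
    have hone : ∀ k, A2 k + 2 * gibbs U (lin (a k)) * Ah k ≤
        S + ∑ x, (a k x ^ 2 + (T k) ^ 2 * a k x ^ 2) := by
      intro k
      simp only [hA2, hAh, hS, Finset.mul_sum, ← Finset.sum_add_distrib]
      refine Finset.sum_le_sum fun x _ => ?_
      have := hN k
      nlinarith [sq_nonneg (h₀ x - gibbs U (lin (a k)) * a k x),
        mul_le_mul_of_nonneg_right this (sq_nonneg (a k x))]
    have h1 := Finset.sum_le_sum fun k (_ : k ∈ Finset.univ) => hone k
    rw [Finset.sum_add_distrib (f := fun _ => S)] at h1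
    simp only [Finset.sum_const, Finset.card_univ, nsmul_eq_mul] at h1
    have hS0 : 0 ≤ S := Finset.sum_nonneg fun x _ => sq_nonneg _
    have hD0 : 0 ≤ ∑ k, ∑ x, (a k x ^ 2 + (T k) ^ 2 * a k x ^ 2) :=
      Finset.sum_nonneg fun k _ => Finset.sum_nonneg fun x _ => by positivity
    have hc0 : (0 : ℝ) ≤ Fintype.card Λ := by positivity
    rw [hκ]
    nlinarith
  have h1 := mul_lt_mul_of_pos_left hbar (mul_pos hε hE0)
  have h2 := mul_le_mul_of_nonneg_left hs he0.le
  change e * (γ * W t₀ h₀ p₀) ≤ _ at h2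
  have h3 : e * -γ * W t₀ h₀ p₀ + e * (r * (gibbs U (Ψ p₀) - ψ (gibbs U (f p₀)))
        + ∑ k, 1 / 2 * (gcov U (G p₀) (fun σ => lin (a k) σ ^ 2)
          - (1 - r * t₀) * (gcov U (Ψ p₀) (fun σ => lin (a k) σ ^ 2)
            - d1 * gcov U (f p₀) (fun σ => lin (a k) σ ^ 2)))) + ε * (E * κ * (1 + S)) ≤ 0 := htime
  simp only [Finset.sum_add_distrib, ← Finset.mul_sum] at h3 h1
  linarith
end

set_option linter.unusedSectionVars false

section
variable {Λ : Type*} [Fintype Λ] [DecidableEq Λ]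

/-! ### Linear observables -/

lemma gcov_lin_right (U f : (Λ → Bool) → ℝ) (v : Λ → ℝ) :
    gcov U f (lin v) = ∑ x, v x * gcov U f (fun σ => sp (σ x)) := by
  have : lin v = fun σ : Λ → Bool => ∑ x, v x * sp (σ x) := rfl
  rw [this, gcov_sum_right]
  exact Finset.sum_congr rfl fun x _ => gcov_const_mul_right _ _ _ _

lemma lin_sq_le (v : Λ → ℝ) (σ : Λ → Bool) : lin v σ ^ 2 ≤ (∑ x, v x ^ 2) * Fintype.card Λ := by
  refine (Finset.sum_mul_sq_le_sq_mul_sq _ _ _).trans_eq ?_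
  congr 1
  have : ∀ x, sp (σ x) ^ 2 = 1 := fun x => by cases σ x <;> simp [sp]
  simp [this]

lemma lin_smul (c : ℝ) (v : Λ → ℝ) : lin (c • v) = fun σ => c * lin v σ := by
  funext σ
  simp only [lin, Pi.smul_apply, smul_eq_mul, Finset.mul_sum, mul_assoc]

lemma variance_of_unit {U : (Λ → Bool) → ℝ} {c : ℝ}
    (hc : ∀ u : Λ → ℝ, ∑ x, u x ^ 2 = 1 → gcov U (lin u) (lin u) ≤ c) (v : Λ → ℝ) :
    gcov U (lin v) (lin v) ≤ c * ∑ x, v x ^ 2 := by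
  set B := ∑ x, v x ^ 2 with hB
  have hB0 : 0 ≤ B := Finset.sum_nonneg fun x _ => sq_nonneg _
  rcases hB0.lt_or_eq with hpos | hz
  · have hu := hc ((√B)⁻¹ • v) (by
      simp only [Pi.smul_apply, smul_eq_mul, mul_pow, ← Finset.mul_sum, inv_pow, sq_sqrt hB0]
      exact inv_mul_cancel₀ hpos.ne')
    rw [lin_smul, gcov_const_mul_right, gcov_comm, gcov_const_mul_right, ← mul_assoc,
      ← mul_inv, mul_self_sqrt hB0, inv_mul_le_iff₀ hpos] at hu
    linarith
  · have hv : v = 0 := by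
      funext x
      have := (Finset.sum_eq_zero_iff_of_nonneg (fun x _ => sq_nonneg (v x))).1 hz.symm x
        (Finset.mem_univ x)
      simpa using this
    have h0 : gcov U (lin v) (lin v) = 0 := by
      rw [gcov_lin_right]
      simp [hv]
    rw [h0, ← hz, mul_zero]

/-! ### Product measures: the initial time -/

/-- The configuration `σ` with the spin at `x` negated. -/
def spinFlip (x : Λ) (σ : Λ → Bool) : Λ → Bool := Function.update σ x (!(σ x))

@[simp] lemma spinFlip_same (x : Λ) (σ : Λ → Bool) : spinFlip x σ x = !(σ x) := by simp [spinFlip]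

lemma spinFlip_of_ne {x y : Λ} (h : y ≠ x) (σ : Λ → Bool) : spinFlip x σ y = σ y := by simp [spinFlip, h]

@[simp] lemma spinFlip_flip (x : Λ) (σ : Λ → Bool) : spinFlip x (spinFlip x σ) = σ := by
  funext y
  by_cases h : y = x
  · subst h; simp
  · simp [spinFlip_of_ne h]

lemma spinFlip_comm {x y : Λ} (hxy : x ≠ y) (σ : Λ → Bool) :
    spinFlip x (spinFlip y σ) = spinFlip y (spinFlip x σ) := by
  simp only [spinFlip]
  rw [Function.update_of_ne hxy, Function.update_of_ne hxy.symm, Function.update_comm hxy]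

/-- The spin flip at `x` as an involutive permutation of the configurations. -/
def spinFlipEquiv (x : Λ) : (Λ → Bool) ≃ (Λ → Bool) := ⟨spinFlip x, spinFlip x, spinFlip_flip x, spinFlip_flip x⟩

lemma lin_flip (h : Λ → ℝ) (x : Λ) (σ : Λ → Bool) :
    lin h (spinFlip x σ) = lin h σ - 2 * (h x * sp (σ x)) := by
  simp only [lin]
  rw [← Finset.add_sum_erase _ _ (Finset.mem_univ x), ← Finset.add_sum_erase _ (fun y => h y * sp (σ y)) (Finset.mem_univ x)]
  have : ∑ y ∈ Finset.univ.erase x, h y * sp (spinFlip x σ y) = ∑ y ∈ Finset.univ.erase x, h y * sp (σ y) :=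
    Finset.sum_congr rfl fun y hy => by rw [spinFlip_of_ne (Finset.ne_of_mem_erase hy)]
  rw [this, spinFlip_same]
  cases σ x <;> simp [sp] <;> ring

/-- Probability of the spin value `b` at site `x` under the product measure with field `h`. -/
noncomputable def siteProb (h : Λ → ℝ) (x : Λ) (b : Bool) : ℝ :=
  exp (h x * sp b) / (exp (h x) + exp (-h x))

lemma siteProb_pos (h : Λ → ℝ) (x : Λ) (b : Bool) : 0 < siteProb h x b := by
  unfold siteProb; positivity

lemma siteProb_add (h : Λ → ℝ) (x : Λ) (b : Bool) : siteProb h x b + siteProb h x (!b) = 1 := by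
  have : exp (h x) + exp (-h x) ≠ 0 := by positivity
  unfold siteProb
  cases b <;> simp [sp] <;> field_simp
  ring

/-- Average over the spin at `x` with law `siteProb h x`, all other spins being kept: the conditional
expectation of the product measure given the spins off `x`. -/
noncomputable def siteAvg (h : Λ → ℝ) (x : Λ) : ((Λ → Bool) → ℝ) →ₗ[ℝ] ((Λ → Bool) → ℝ) where
  toFun g σ := siteProb h x (σ x) * g σ + siteProb h x (!(σ x)) * g (spinFlip x σ)
  map_add' f g := by funext σ; simp only [Pi.add_apply]; ring
  map_smul' c g := by
    funext σ; simp only [Pi.smul_apply, smul_eq_mul, RingHom.id_apply]; ring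

lemma siteAvg_apply (h : Λ → ℝ) (x : Λ) (g : (Λ → Bool) → ℝ) (σ : Λ → Bool) :
    siteAvg h x g σ = siteProb h x (σ x) * g σ + siteProb h x (!(σ x)) * g (spinFlip x σ) := rfl

lemma gibbs_siteAvg (h : Λ → ℝ) (x : Λ) (g : (Λ → Bool) → ℝ) :
    gibbs (lin h) (siteAvg h x g) = gibbs (lin h) g := by
  unfold gibbs
  congr 1
  simp only [siteAvg_apply, mul_add, Finset.sum_add_distrib]
  have e : ∑ σ : Λ → Bool, exp (lin h σ) * (siteProb h x (!(σ x)) * g (spinFlip x σ)) =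
      ∑ σ : Λ → Bool, exp (lin h σ) * (siteProb h x (!(σ x)) * g σ) := by
    rw [← Equiv.sum_comp (spinFlipEquiv x)]
    refine Finset.sum_congr rfl fun σ _ => ?_
    change exp (lin h (spinFlip x σ)) * (siteProb h x (!(spinFlip x σ x)) * g (spinFlip x (spinFlip x σ))) = _
    have key : exp (lin h σ - 2 * (h x * sp (σ x))) * siteProb h x (σ x) =
        exp (lin h σ) * siteProb h x (!(σ x)) := by
      unfold siteProb
      rw [← mul_div_assoc, ← mul_div_assoc, ← exp_add, ← exp_add]
      congr 2
      cases σ x <;> simp [sp] <;> ring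
    rw [spinFlip_flip, spinFlip_same, Bool.not_not, lin_flip, ← mul_assoc, key, mul_assoc]
  rw [e, ← Finset.sum_add_distrib]
  refine Finset.sum_congr rfl fun σ _ => ?_
  rw [← mul_add, ← add_mul, siteProb_add, one_mul]

/-- Distinct spins are uncorrelated under a product measure. -/
lemma gcov_product_ne (h : Λ → ℝ) {x y : Λ} (hxy : x ≠ y) :
    gcov (lin h) (fun σ => sp (σ x)) (fun σ => sp (σ y)) = 0 := by
  set m := siteProb h x true - siteProb h x false with hm
  have h1 : siteAvg h x (fun σ => sp (σ x)) = fun _ => m := by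
    funext σ
    rw [siteAvg_apply, spinFlip_same]
    cases σ x <;> simp [sp, hm] <;> ring
  have h2 : siteAvg h x (fun σ => sp (σ x) * sp (σ y)) = fun σ => m * sp (σ y) := by
    funext σ
    rw [← congrFun h1 σ, siteAvg_apply, siteAvg_apply, spinFlip_of_ne hxy.symm]
    ring
  rw [gcov, ← gibbs_siteAvg h x, h2, gibbs_const_mul, ← gibbs_siteAvg h x (fun σ => sp (σ x)), h1,
    gibbs_const, sub_self]

lemma variance_product (h v : Λ → ℝ) : gcov (lin h) (lin v) (lin v) ≤ ∑ x, v x ^ 2 := by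
  rw [gcov_lin_right]
  refine Finset.sum_le_sum fun x _ => ?_
  rw [gcov_comm, gcov_lin_right, Finset.sum_eq_single x]
  · have h1 : gcov (lin h) (fun σ => sp (σ x)) (fun σ => sp (σ x)) ≤ 1 := by
      have : (fun σ : Λ → Bool => sp (σ x) * sp (σ x)) = fun _ => 1 := by
        funext σ; cases σ x <;> simp [sp]
      rw [gcov, this, gibbs_const]
      nlinarith [mul_self_nonneg (gibbs (lin h) fun σ : Λ → Bool => sp (σ x))]
    nlinarith [sq_nonneg (v x)]
  · intro y _ hy
    rw [gcov_product_ne h hy.symm, mul_zero]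
  · simp

lemma siteAvg_nonneg (h : Λ → ℝ) (x : Λ) {g : (Λ → Bool) → ℝ} (hg : ∀ σ, 0 ≤ g σ) (σ : Λ → Bool) :
    0 ≤ siteAvg h x g σ := by
  have h1 := siteProb_pos h x (σ x)
  have h2 := siteProb_pos h x (!(σ x))
  have h3 := hg σ
  have h4 := hg (spinFlip x σ)
  rw [siteAvg_apply]; positivity

lemma siteAvg_pos (h : Λ → ℝ) (x : Λ) {g : (Λ → Bool) → ℝ} (hg : ∀ σ, 0 < g σ) (σ : Λ → Bool) :
    0 < siteAvg h x g σ := by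
  have h1 := siteProb_pos h x (σ x)
  have h2 := siteProb_pos h x (!(σ x))
  have h3 := hg σ
  have h4 := hg (spinFlip x σ)
  rw [siteAvg_apply]; positivity

lemma siteAvg_of_flip_invariant (h : Λ → ℝ) {x : Λ} {g : (Λ → Bool) → ℝ} {σ : Λ → Bool}
    (hg : g (spinFlip x σ) = g σ) : siteAvg h x g σ = g σ := by
  rw [siteAvg_apply, hg, ← add_mul, siteProb_add, one_mul]

lemma siteAvg_flip_self (h : Λ → ℝ) (x : Λ) (g : (Λ → Bool) → ℝ) (σ : Λ → Bool) :
    siteAvg h x g (spinFlip x σ) = siteAvg h x g σ := by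
  simp only [siteAvg_apply, spinFlip_same, spinFlip_flip, Bool.not_not]
  ring

lemma siteAvg_flip_of_ne (h : Λ → ℝ) {x y : Λ} (hxy : x ≠ y) (g : (Λ → Bool) → ℝ) (σ : Λ → Bool) :
    siteAvg h x g (spinFlip y σ) = siteAvg h x (fun σ => g (spinFlip y σ)) σ := by
  simp only [siteAvg_apply, spinFlip_of_ne hxy, spinFlip_comm hxy]

/-- Successive averages over the sites of a list. -/
noncomputable def listAvg (h : Λ → ℝ) : List Λ → ((Λ → Bool) → ℝ) →ₗ[ℝ] ((Λ → Bool) → ℝ)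
  | [] => LinearMap.id
  | x :: l => (siteAvg h x).comp (listAvg h l)

lemma listAvg_nonneg (h : Λ → ℝ) (l : List Λ) {g : (Λ → Bool) → ℝ} (hg : ∀ σ, 0 ≤ g σ) :
    ∀ σ, 0 ≤ listAvg h l g σ := by
  induction l with
  | nil => exact hg
  | cons x l ih => exact siteAvg_nonneg h x ih

lemma listAvg_pos (h : Λ → ℝ) (l : List Λ) {g : (Λ → Bool) → ℝ} (hg : ∀ σ, 0 < g σ) :
    ∀ σ, 0 < listAvg h l g σ := by
  induction l with
  | nil => exact hg
  | cons x l ih => exact siteAvg_pos h x ih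

lemma gibbs_listAvg (h : Λ → ℝ) (l : List Λ) (g : (Λ → Bool) → ℝ) :
    gibbs (lin h) (listAvg h l g) = gibbs (lin h) g := by
  induction l with
  | nil => rfl
  | cons x l ih => exact (gibbs_siteAvg h x _).trans ih

lemma listAvg_flip_of_notMem (h : Λ → ℝ) (l : List Λ) {y : Λ} (hy : y ∉ l) (g : (Λ → Bool) → ℝ) :
    ∀ σ, listAvg h l g (spinFlip y σ) = listAvg h l (fun σ => g (spinFlip y σ)) σ := by
  induction l with
  | nil => exact fun _ => rfl
  | cons x l ih =>
    intro σ
    rw [List.mem_cons, not_or] at hy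
    change siteAvg h x _ (spinFlip y σ) = siteAvg h x _ σ
    rw [siteAvg_flip_of_ne h (Ne.symm hy.1)]
    exact congrFun (congrArg (siteAvg h x) (funext fun σ => ih hy.2 σ)) σ

lemma listAvg_flip_of_mem (h : Λ → ℝ) (l : List Λ) {y : Λ} (hy : y ∈ l) (g : (Λ → Bool) → ℝ) :
    ∀ σ, listAvg h l g (spinFlip y σ) = listAvg h l g σ := by
  induction l with
  | nil => simp at hy
  | cons x l ih =>
    intro σ
    by_cases hxy : x = y
    · subst hxy
      exact siteAvg_flip_self h x _ σ
    · have hy' : y ∈ l := (List.mem_cons.1 hy).resolve_left (Ne.symm hxy)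
      change siteAvg h x _ (spinFlip y σ) = siteAvg h x _ σ
      rw [siteAvg_flip_of_ne h hxy]
      exact congrFun (congrArg (siteAvg h x) (funext fun σ => ih hy' σ)) σ

/-- Reverse triangle inequality in `L²` of the averaging measure. -/
lemma listAvg_minkowski (h : Λ → ℝ) (l : List Λ) {F F' : (Λ → Bool) → ℝ} (hF : ∀ σ, 0 < F σ)
    (hF' : ∀ σ, 0 < F' σ) (σ : Λ → Bool) :
    (√(listAvg h l (fun σ => F σ ^ 2) σ) - √(listAvg h l (fun σ => F' σ ^ 2) σ)) ^ 2 ≤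
      listAvg h l (fun σ => (F σ - F' σ) ^ 2) σ := by
  have hA := listAvg_pos h l (g := fun σ => F σ ^ 2) (fun σ => pow_pos (hF σ) 2) σ
  have hB := listAvg_pos h l (g := fun σ => F' σ ^ 2) (fun σ => pow_pos (hF' σ) 2) σ
  have hexp : ∀ c d : ℝ, listAvg h l (fun σ => (c * F σ - d * F' σ) ^ 2) σ =
      c ^ 2 * listAvg h l (fun σ => F σ ^ 2) σ - 2 * c * d * listAvg h l (fun σ => F σ * F' σ) σ
        + d ^ 2 * listAvg h l (fun σ => F' σ ^ 2) σ := by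
    intro c d
    have : (fun σ => (c * F σ - d * F' σ) ^ 2) = c ^ 2 • (fun σ => F σ ^ 2)
        - (2 * c * d) • (fun σ => F σ * F' σ) + d ^ 2 • (fun σ => F' σ ^ 2) := by
      funext σ; simp; ring
    rw [this, map_add, map_sub, map_smul, map_smul, map_smul]
    simp
  set A := listAvg h l (fun σ => F σ ^ 2) σ
  set B := listAvg h l (fun σ => F' σ ^ 2) σ
  set X := listAvg h l (fun σ => F σ * F' σ) σ
  have h1 := hexp 1 1
  simp only [one_mul] at h1
  have h2 := hexp (√B) (√A)
  have h3 := listAvg_nonneg h l (g := fun σ => (√B * F σ - √A * F' σ) ^ 2) (fun _ => sq_nonneg _) σ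
  have sA : 0 < √A := sqrt_pos.2 hA
  have sB : 0 < √B := sqrt_pos.2 hB
  have qA : √A ^ 2 = A := sq_sqrt hA.le
  have qB : √B ^ 2 = B := sq_sqrt hB.le
  rw [h2, qA, qB] at h3
  have h4 : X ≤ √A * √B := by
    have : 0 ≤ 2 * (√A * √B) * (√A * √B - X) := by nlinarith
    by_contra! hc
    have h5 : 2 * (√A * √B) * (√A * √B - X) < 0 :=
      mul_neg_of_pos_of_neg (by positivity) (by linarith)
    linarith
  rw [h1]
  nlinarith

/-- Tensorization: the logarithmic Sobolev inequality for the product of the one-site laws over a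
list of sites, the other spins being frozen. Averaging over one more site `x` adds the two-point
entropy of `g`, the average of `F ^ 2` over the list; by `two_point_LSI` it is controlled by the
difference of `√g` across the flip at `x`, and by `listAvg_minkowski` by that of `F`. -/
lemma listAvg_LSI (h : Λ → ℝ) (l : List Λ) (hl : l.Nodup) {F : (Λ → Bool) → ℝ}
    (hF : ∀ σ, 0 < F σ) : ∀ σ,
    listAvg h l (fun σ => F σ ^ 2 * log (F σ ^ 2)) σ
      - listAvg h l (fun σ => F σ ^ 2) σ * log (listAvg h l (fun σ => F σ ^ 2) σ) ≤
    1 / 2 * (l.map fun x => listAvg h l (fun σ => (F σ - F (spinFlip x σ)) ^ 2) σ).sum := by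
  induction l with
  | nil => intro σ; simp [listAvg]
  | cons x l ih =>
    intro σ
    obtain ⟨hx, hl'⟩ := List.nodup_cons.1 hl
    have ih := ih hl'
    set g := listAvg h l (fun σ => F σ ^ 2) with hg
    have hgpos : ∀ σ, 0 < g σ := listAvg_pos h l fun σ => pow_pos (hF σ) 2
    have hD : (√(g σ) - √(g (spinFlip x σ))) ^ 2 ≤ listAvg h l (fun σ => (F σ - F (spinFlip x σ)) ^ 2) σ := by
      have := listAvg_minkowski h l hF (fun σ => hF (spinFlip x σ)) σ
      rwa [← listAvg_flip_of_notMem h l hx (fun σ => F σ ^ 2)] at this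
    have hinv : listAvg h (x :: l) (fun σ => (F σ - F (spinFlip x σ)) ^ 2) σ =
        listAvg h l (fun σ => (F σ - F (spinFlip x σ)) ^ 2) σ := by
      refine siteAvg_of_flip_invariant h ?_
      rw [listAvg_flip_of_notMem h l hx]
      refine congrFun (congrArg (listAvg h l) (funext fun σ => ?_)) σ
      rw [spinFlip_flip]; ring
    have h2 := two_point_LSI (siteProb_pos h x (σ x)).le (siteProb_pos h x (!(σ x))).le
      (siteProb_add h x (σ x)) (sqrt_pos.2 (hgpos σ)) (sqrt_pos.2 (hgpos (spinFlip x σ)))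
    rw [sq_sqrt (hgpos _).le, sq_sqrt (hgpos _).le] at h2
    have hsum : ((x :: l).map fun y => listAvg h (x :: l) (fun σ => (F σ - F (spinFlip y σ)) ^ 2) σ).sum =
        listAvg h l (fun σ => (F σ - F (spinFlip x σ)) ^ 2) σ +
        (siteProb h x (σ x) * (l.map fun y => listAvg h l (fun σ => (F σ - F (spinFlip y σ)) ^ 2) σ).sum
        + siteProb h x (!(σ x)) * (l.map fun y => listAvg h l (fun σ => (F σ - F (spinFlip y σ)) ^ 2) (spinFlip x σ)).sum) := by
      rw [List.map_cons, List.sum_cons, hinv, ← List.sum_map_mul_left, ← List.sum_map_mul_left,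
        ← List.sum_map_add]
      rfl
    rw [hsum]
    change (siteProb h x (σ x) * _ + siteProb h x (!(σ x)) * _)
      - (siteProb h x (σ x) * g σ + siteProb h x (!(σ x)) * g (spinFlip x σ)) *
        log (siteProb h x (σ x) * g σ + siteProb h x (!(σ x)) * g (spinFlip x σ)) ≤ _
    have h3 := mul_le_mul_of_nonneg_left (ih σ) (siteProb_pos h x (σ x)).le
    have h4 := mul_le_mul_of_nonneg_left (ih (spinFlip x σ)) (siteProb_pos h x (!(σ x))).le
    linarith

lemma eq_of_flip_invariant {g : (Λ → Bool) → ℝ} (hg : ∀ x σ, g (spinFlip x σ) = g σ)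
    (σ τ : Λ → Bool) : g σ = g τ := by
  have key : ∀ s : Finset Λ, g (fun x => if x ∈ s then τ x else σ x) = g σ := by
    intro s
    induction s using Finset.induction_on with
    | empty => simp
    | insert x s hx ih =>
      rw [← ih]
      by_cases hστ : τ x = σ x
      · congr 1
        funext y
        by_cases hy : y = x
        · subst hy; simp [hx, hστ]
        · simp [hy]
      · rw [← hg x (fun y => if y ∈ s then τ y else σ y)]
        congr 1
        funext y
        by_cases hy : y = x
        · subst hy
          simp only [spinFlip_same, Finset.mem_insert_self, if_true, hx, if_false]
          cases h1 : τ y <;> cases h2 : σ y <;> simp_all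
        · rw [spinFlip_of_ne hy]; simp [hy]
  rw [← key Finset.univ]
  simp

/-- Averaging over all sites gives a function invariant under all flips, hence the constant equal to
the product expectation, and `listAvg_LSI` becomes the inequality for the product measure. -/
lemma product_LSI (h : Λ → ℝ) {F : (Λ → Bool) → ℝ} (hF : ∀ σ, 0 < F σ) :
    gibbs (lin h) (fun σ => F σ ^ 2 * log (F σ ^ 2))
      - gibbs (lin h) (fun σ => F σ ^ 2) * log (gibbs (lin h) (fun σ => F σ ^ 2)) ≤
    gibbs (lin h) (fun σ => 1 / 2 * ∑ x, (F σ - F (spinFlip x σ)) ^ 2) := by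
  have hc : ∀ g σ, listAvg h (Finset.univ : Finset Λ).toList g σ = gibbs (lin h) g := by
    intro g σ
    rw [← gibbs_listAvg h (Finset.univ : Finset Λ).toList g,
      ← gibbs_const (lin h) (listAvg h (Finset.univ : Finset Λ).toList g σ)]
    congr 1
    funext τ
    exact eq_of_flip_invariant (fun x σ => listAvg_flip_of_mem h _ (by simp) g σ) σ τ
  have := listAvg_LSI h (Finset.univ : Finset Λ).toList (Finset.nodup_toList _) hF (fun _ => true)
  simp only [hc, Finset.sum_map_toList] at this
  rwa [gibbs_const_mul, gibbs_sum]
end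

section
variable {Λ : Type*} [Fintype Λ] [DecidableEq Λ]

lemma energy_zero (a : Λ → Λ → ℝ) (h : Λ → ℝ) : energy a 0 h = lin h := by
  funext σ; simp [energy]

lemma sum_gcov_sq_le {a : Λ → Λ → ℝ} {r : ℝ}
    (hA : ∀ b : Λ → ℝ, ∑ k, (∑ x, a k x * b x) ^ 2 ≤ r * ∑ x, b x ^ 2) (U f : (Λ → Bool) → ℝ) :
    ∑ k, gcov U f (lin (a k)) ^ 2 ≤ r * ∑ x, gcov U f (fun σ => sp (σ x)) ^ 2 := by
  simp only [gcov_lin_right]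
  exact hA _

/-! ### Variance bound and entropic stability -/

/-- The covariance matrix of the interpolating measure at time `t` is at most `1 / (1 - r t)`,
uniformly in the field. This is the maximum principle with `ψ x = x ^ 2` and `f = u · σ`, the
parameter `u` ranging over the unit sphere: at a minimal `u` the variance `lam` of `u · σ` is the
largest eigenvalue of the covariance matrix, so `∑ₖ Cov(u · σ, aₖ · σ) ^ 2 ≤ r * lam ^ 2`. -/
theorem variance_bound {a : Λ → Λ → ℝ} {r : ℝ} (hr0 : 0 ≤ r) (hr1 : r < 1)
    (hA : ∀ b : Λ → ℝ, ∑ k, (∑ x, a k x * b x) ^ 2 ≤ r * ∑ x, b x ^ 2)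
    {t : ℝ} (ht0 : 0 ≤ t) (ht1 : t ≤ 1) (h v : Λ → ℝ) :
    gcov (energy a t h) (lin v) (lin v) ≤ (1 - r * t)⁻¹ * ∑ x, v x ^ 2 := by
  have hrt : ∀ t, 0 ≤ t → t ≤ 1 → 0 < 1 - r * t := fun t _ _ => by nlinarith
  refine variance_of_unit (fun u hu => ?_) v
  set n : ℝ := (Fintype.card Λ : ℝ) with hn
  have hn0 : 0 ≤ n := by positivity
  have hgap : ∀ (t : ℝ) (h u : Λ → ℝ), gap a r (fun x => x ^ 2) (lin u) (fun σ => lin u σ ^ 2)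
      (fun _ => ∑ x, u x ^ 2) t h =
      ∑ x, u x ^ 2 - (1 - r * t) * gcov (energy a t h) (lin u) (lin u) := by
    intro t h u
    simp only [gap, gibbs_const, gcov, pow_two]
  have hK : IsCompact {u : Λ → ℝ | ∑ x, u x ^ 2 = 1} := by
    refine Metric.isCompact_of_isClosed_isBounded (isClosed_eq (by fun_prop) continuous_const) ?_
    refine (Metric.isBounded_closedBall (x := (0 : Λ → ℝ)) (r := 1)).subset ?_
    intro u hu
    rw [mem_closedBall_zero_iff, pi_norm_le_iff_of_nonneg zero_le_one]
    intro x
    rw [norm_eq_abs, ← sq_le_one_iff_abs_le_one]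
    exact (Finset.single_le_sum (f := fun x => u x ^ 2) (fun x _ => sq_nonneg _)
      (Finset.mem_univ x)).trans_eq hu
  have main := gap_nonneg hK a hr0 hr1.le (ψ := fun x => x ^ 2) (ψ' := fun x => 2 * x)
    (ψ'' := fun _ => 2) (f := fun u => lin u) (Ψ := fun u σ => lin u σ ^ 2)
    (G := fun u _ => ∑ x, u x ^ 2) (C := n) (γ := r * n)
    continuous_lin (fun σ => (continuous_lin σ).pow 2) (fun _ => by fun_prop)
    (fun u U => by simpa using hasDerivAt_pow 2 (gibbs U (lin u)))
    (fun u U => by simpa using (hasDerivAt_id (gibbs U (lin u))).const_mul 2)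
    (fun u U => by linarith [sq_nonneg (gibbs U (lin u))])
    (fun u _ => Finset.sum_nonneg fun x _ => sq_nonneg _) hn0
    (fun u hu σ => (lin_sq_le u σ).trans_eq (by rw [show ∑ x, u x ^ 2 = 1 from hu, one_mul]))
    (fun h u hu => by
      rw [hgap, energy_zero]
      have := variance_product h u
      linarith)
    (by
      intro t ht0 ht1 h u hu hneg hmin
      have hu1 : ∑ x, u x ^ 2 = 1 := hu
      have hpos := hrt t ht0 ht1
      simp only [hgap] at hneg hmin ⊢
      set U := energy a t h with hU
      have hlam : gibbs U (fun σ => lin u σ ^ 2) - gibbs U (lin u) ^ 2 = gcov U (lin u) (lin u) := by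
        simp only [gcov, pow_two]
      rw [hlam]
      set lam := gcov U (lin u) (lin u) with hlamdef
      have hlam0 : 0 ≤ lam := gcov_self_nonneg _ _
      have hlamn : lam ≤ n := by
        have h1 : gibbs U (fun σ => lin u σ ^ 2) ≤ n := by
          rw [← gibbs_const U n]
          exact gibbs_mono U fun σ => (lin_sq_le u σ).trans_eq (by rw [hu1, one_mul])
        nlinarith [sq_nonneg (gibbs U (lin u))]
      have hop : ∀ v, gcov U (lin v) (lin v) ≤ lam * ∑ x, v x ^ 2 := by
        refine variance_of_unit fun w hw => ?_
        have := hmin w hw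
        rw [hu1, hw] at this
        exact le_of_mul_le_mul_left (by linarith) hpos
      set b : Λ → ℝ := fun x => gcov U (lin u) (fun σ => sp (σ x)) with hb
      set B := ∑ x, b x ^ 2 with hB
      have hB0 : 0 ≤ B := Finset.sum_nonneg fun x _ => sq_nonneg _
      have hBb : B = gcov U (lin u) (lin b) := by
        rw [gcov_lin_right, hB]
        exact Finset.sum_congr rfl fun x _ => pow_two _
      have hB2 : B ^ 2 ≤ lam * (lam * B) := by
        calc B ^ 2 = gcov U (lin u) (lin b) ^ 2 := by rw [← hBb]
          _ ≤ lam * gcov U (lin b) (lin b) := gcov_sq_le U _ _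
          _ ≤ lam * (lam * B) := mul_le_mul_of_nonneg_left (hop b) hlam0
      -- `B` is the squared length of the covariance matrix applied to `u`.
      have hBl : B ≤ lam ^ 2 := by
        by_contra! hc
        have : 0 < B := lt_of_le_of_lt (sq_nonneg _) hc
        nlinarith
      have hS := sum_gcov_sq_le hA U (lin u)
      change _ ≤ r * B at hS
      rw [hu1] at hneg ⊢
      have h1 : (1 - r * t) * ∑ k, gcov U (lin u) (lin (a k)) ^ 2 ≤ (1 - r * t) * (r * lam ^ 2) :=
        mul_le_mul_of_nonneg_left (hS.trans (mul_le_mul_of_nonneg_left hBl hr0)) hpos.le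
      have h2 : r * n * (1 - (1 - r * t) * lam) ≤ r * lam * (1 - (1 - r * t) * lam) :=
        mul_le_mul_of_nonpos_right (mul_le_mul_of_nonneg_left hlamn hr0) hneg.le
      linarith)
    ht0 ht1 h (p := u) hu
  rw [hgap, hu] at main
  rw [← one_div, le_div_iff₀ (hrt t ht0 ht1)]
  linarith

/-- The log-Laplace transform of `θ · σ` is sub-Gaussian: along `y ↦ h + y θ` its second derivative
is a variance in a shifted field, which `hvar` bounds by `s |θ| ^ 2`. -/
lemma log_mgf_le {a : Λ → Λ → ℝ} {t s : ℝ}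
    (hvar : ∀ h v : Λ → ℝ, gcov (energy a t h) (lin v) (lin v) ≤ s * ∑ x, v x ^ 2)
    (h θ : Λ → ℝ) :
    log (gibbs (energy a t h) fun σ => exp (lin θ σ)) ≤
      gibbs (energy a t h) (lin θ) + s * (∑ x, θ x ^ 2) / 2 := by
  set Z : ℝ → ℝ := fun y => ∑ σ, exp (energy a t (h + y • θ) σ) with hZ
  have hZpos : ∀ y, 0 < Z y := fun y => partition_pos _
  have h1 : ∀ y, HasDerivAt (fun y => log (Z y)) (gibbs (energy a t (h + y • θ)) (lin θ)) y := by
    intro y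
    exact (HasDerivAt.fun_sum (u := Finset.univ) fun σ _ =>
      (hasDerivAt_energy_field a t h θ σ y).exp).log (hZpos y).ne'
  have h2 : ∀ y, HasDerivAt (fun y => gibbs (energy a t (h + y • θ)) (lin θ))
      (gcov (energy a t (h + y • θ)) (lin θ) (lin θ)) y := fun y =>
    hasDerivAt_gibbs (U := fun y => energy a t (h + y • θ))
      (fun σ => hasDerivAt_energy_field a t h θ σ y) (lin θ)
  have h3 := taylor_upper h1 h2 (fun y => hvar _ θ)
  have h4 : gibbs (energy a t h) (fun σ => exp (lin θ σ)) = Z 1 / Z 0 := by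
    simp only [hZ, gibbs, energy_add_smul, one_mul, zero_mul, exp_zero, mul_one, exp_add]
  rw [h4, log_div (hZpos 1).ne' (hZpos 0).ne']
  simp only [zero_smul, add_zero] at h3
  linarith

/-- The covariance vector of `f` with the spins is controlled by the entropy of `f`: the Gibbs
variational principle with the test function `c b · σ`, `b` the covariance vector and
`c = 1 / (s m)` the optimal multiplier, combined with the sub-Gaussian bound. -/
lemma entropic_stability {a : Λ → Λ → ℝ} {t s : ℝ} (hs : 0 < s)
    (hvar : ∀ h v : Λ → ℝ, gcov (energy a t h) (lin v) (lin v) ≤ s * ∑ x, v x ^ 2)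
    (h : Λ → ℝ) {f : (Λ → Bool) → ℝ} (hf : ∀ σ, 0 < f σ) :
    ∑ x, gcov (energy a t h) f (fun σ => sp (σ x)) ^ 2 ≤
      2 * s * gibbs (energy a t h) f * (gibbs (energy a t h) (fun σ => f σ * log (f σ))
        - gibbs (energy a t h) f * log (gibbs (energy a t h) f)) := by
  set U := energy a t h
  set m := gibbs U f with hm
  have hm0 : 0 < m := gibbs_pos U hf
  set b : Λ → ℝ := fun x => gcov U f (fun σ => sp (σ x)) with hb
  set B := ∑ x, b x ^ 2 with hB
  set c := (s * m)⁻¹ with hc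
  have h1 := gibbs_variational U hf (lin (c • b))
  have h2 := log_mgf_le hvar h (c • b)
  have h3 : gcov U f (lin (c • b)) = c * B := by
    rw [gcov_lin_right, hB, Finset.mul_sum]
    refine Finset.sum_congr rfl fun x _ => ?_
    simp only [Pi.smul_apply, smul_eq_mul, hb]; ring
  have h4 : ∑ x, (c • b) x ^ 2 = c ^ 2 * B := by
    simp only [Pi.smul_apply, smul_eq_mul, mul_pow, ← Finset.mul_sum, hB]
  rw [h4] at h2
  have h5 := mul_le_mul_of_nonneg_left h2 hm0.le
  rw [gcov] at h3
  have h6 : c * B - m * (s * (c ^ 2 * B) / 2) = B / (2 * s * m) := by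
    rw [hc]; field_simp; ring
  have h7 : B / (2 * s * m) ≤ gibbs U (fun σ => f σ * log (f σ)) - m * log m := by
    rw [← h6]
    change _ - m * log (gibbs U fun σ => exp (lin (c • b) σ)) ≤ _ at h1
    linarith
  rw [div_le_iff₀ (by positivity)] at h7
  linarith

/-- Maximum principle with `ψ x = x log x`. The source term has the right sign because
`variance_bound` and `entropic_stability` give
`½ (1 - r t) m⁻¹ ∑ₖ Cov(F ^ 2, aₖ · σ) ^ 2 ≤ r Ent(F ^ 2)`. -/
theorem flow_LSI {a : Λ → Λ → ℝ} {r : ℝ} (hr0 : 0 ≤ r) (hr1 : r < 1)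
    (hA : ∀ b : Λ → ℝ, ∑ k, (∑ x, a k x * b x) ^ 2 ≤ r * ∑ x, b x ^ 2)
    {F : (Λ → Bool) → ℝ} (hF : ∀ σ, 0 < F σ) (h : Λ → ℝ) :
    (1 - r) * (gibbs (energy a 1 h) (fun σ => F σ ^ 2 * log (F σ ^ 2))
      - gibbs (energy a 1 h) (fun σ => F σ ^ 2) * log (gibbs (energy a 1 h) (fun σ => F σ ^ 2))) ≤
    gibbs (energy a 1 h) (fun σ => 1 / 2 * ∑ x, (F σ - F (spinFlip x σ)) ^ 2) := by
  have hf : ∀ σ, 0 < F σ ^ 2 := fun σ => pow_pos (hF σ) 2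
  have hN : ∀ U, 0 < gibbs U (fun σ => F σ ^ 2) := fun U => gibbs_pos U hf
  set C : ℝ := ∑ σ, |F σ ^ 2 * log (F σ ^ 2)| with hC
  have main := gap_nonneg (P := Unit) (K := Set.univ) isCompact_univ a hr0 hr1.le
    (ψ := fun x => x * log x) (ψ' := fun x => log x + 1)
    (ψ'' := fun x => x⁻¹) (f := fun _ σ => F σ ^ 2) (Ψ := fun _ σ => F σ ^ 2 * log (F σ ^ 2))
    (G := fun _ σ => 1 / 2 * ∑ x, (F σ - F (spinFlip x σ)) ^ 2) (C := C) (γ := 0)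
    (fun _ => continuous_const) (fun _ => continuous_const) (fun _ => continuous_const)
    (fun _ U => hasDerivAt_mul_log (hN U).ne')
    (fun _ U => (hasDerivAt_log (hN U).ne').add_const 1)
    (fun _ U => by
      have h1 := one_sub_inv_le_log_of_pos (hN U)
      have h2 := mul_le_mul_of_nonneg_left h1 (hN U).le
      rw [mul_sub, mul_inv_cancel₀ (hN U).ne'] at h2
      linarith [hN U])
    (fun _ σ => mul_nonneg (by norm_num) (Finset.sum_nonneg fun x _ => sq_nonneg _))
    (Finset.sum_nonneg fun σ _ => abs_nonneg _)
    (fun _ _ σ => (le_abs_self _).trans (Finset.single_le_sum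
      (f := fun σ => |F σ ^ 2 * log (F σ ^ 2)|) (fun σ _ => abs_nonneg _) (Finset.mem_univ σ)))
    (fun h _ _ => by
      simp only [gap, energy_zero]
      have := product_LSI h hF
      linarith)
    (by
      intro t ht0 ht1 h _ _ _ _
      have hpos : 0 < 1 - r * t := by nlinarith
      have hst := entropic_stability (inv_pos.2 hpos)
        (variance_bound hr0 hr1 hA ht0 ht1) h hf
      have hS := sum_gcov_sq_le hA (energy a t h) (fun σ => F σ ^ 2)
      rw [zero_mul, sub_nonneg]
      set U := energy a t h
      set m := gibbs U (fun σ => F σ ^ 2)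
      have hm : 0 < m := hN U
      set H := gibbs U (fun σ => F σ ^ 2 * log (F σ ^ 2)) - m * log m
      calc (1 - r * t) / 2 * m⁻¹ * ∑ k, gcov U (fun σ => F σ ^ 2) (lin (a k)) ^ 2
          ≤ (1 - r * t) / 2 * m⁻¹ * (r * (2 * (1 - r * t)⁻¹ * m * H)) :=
            mul_le_mul_of_nonneg_left (hS.trans (mul_le_mul_of_nonneg_left hst hr0)) (by positivity)
        _ = r * H := by field_simp)
    zero_le_one le_rfl h (p := ()) (Set.mem_univ _)
  simp only [gap, mul_one] at main
  linarith

end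

/-! ### Conclusion -/

/-- The Ising model (`n = 1` case of the `O(n)` model) with symmetric positive definite
coupling matrix `M` whose largest eigenvalue `r = ‖M‖` is `< 1` satisfies the uniform
logarithmic Sobolev inequality
`Ent_ν(F²) ≤ (1/2)(1 + 2‖M‖/(1-‖M‖)) Σ_x ν((F(σ) - F(σˣ))²)`.
Spin configurations `σ : Λ → Bool` encode elements of `{-1,1}^Λ` via
`spin b = if b then 1 else -1`, and `σˣ = Function.update σ x (!(σ x))` flips the spin
at `x`.  The largest eigenvalue is encoded via the Rayleigh quotient bound
`(v, Mv) ≤ r (v, v)` for all `v`. -/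
theorem ising_LSI
    (Λ : Type*) [Fintype Λ] [DecidableEq Λ] [Nonempty Λ]
    (M : Matrix Λ Λ ℝ) (hMsymm : M.IsSymm) (hMpos : M.PosDef)
    (r : ℝ) (hMr : ∀ v : Λ → ℝ, v ⬝ᵥ M.mulVec v ≤ r * (v ⬝ᵥ v)) (hr : r < 1)
    (spin : Bool → ℝ) (hspin : spin = fun b => if b then 1 else -1)
    (ν : (Λ → Bool) → ℝ)
    (hν : ∀ σ, ν σ =
      Real.exp (-(1 / 2) * ∑ x, ∑ y, M x y * spin (σ x) * spin (σ y)) /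
        ∑ σ' : Λ → Bool,
          Real.exp (-(1 / 2) * ∑ x, ∑ y, M x y * spin (σ' x) * spin (σ' y)))
    (F : (Λ → Bool) → ℝ) :
    (∑ σ : Λ → Bool, ν σ * ((F σ) ^ 2 * Real.log ((F σ) ^ 2)))
      - (∑ σ : Λ → Bool, ν σ * (F σ) ^ 2)
          * Real.log (∑ σ : Λ → Bool, ν σ * (F σ) ^ 2)
    ≤ (1 / 2) * (1 + 2 * r / (1 - r)) *
        ∑ x : Λ, ∑ σ : Λ → Bool,
          ν σ * (F σ - F (Function.update σ x (!(σ x)))) ^ 2 := by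
  have hMnn : ∀ v : Λ → ℝ, 0 ≤ v ⬝ᵥ M.mulVec v := fun v => by
    simpa using hMpos.posSemidef.dotProduct_mulVec_nonneg v
  have hr0 : 0 ≤ r := by
    have h1 := hMr (fun _ => 1)
    have h2 := hMnn (fun _ => 1)
    have h3 : 0 < (fun _ : Λ => (1 : ℝ)) ⬝ᵥ (fun _ => 1) := by
      simp [dotProduct, Fintype.card_pos]
    by_contra! hc
    have := mul_neg_of_neg_of_pos hc h3
    linarith
  have hquad : ∀ v : Λ → ℝ, v ⬝ᵥ (r • (1 : Matrix Λ Λ ℝ) - M).mulVec v =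
      r * (v ⬝ᵥ v) - v ⬝ᵥ M.mulVec v := by
    intro v
    rw [sub_mulVec, smul_mulVec, one_mulVec, dotProduct_sub, dotProduct_smul, smul_eq_mul]
  have hpsd : (r • (1 : Matrix Λ Λ ℝ) - M).PosSemidef := by
    refine PosSemidef.of_dotProduct_mulVec_nonneg ?_ fun v => ?_
    · exact ((isHermitian_one (n := Λ) (α := ℝ)).smul (IsSelfAdjoint.all r)).sub hMpos.1
    · have := hMr v
      simp only [star_trivial]
      rw [hquad]
      linarith
  -- The rows of `Bm` are the directions of the flow.
  obtain ⟨Bm, hBm⟩ : ∃ Bm : Matrix Λ Λ ℝ, r • (1 : Matrix Λ Λ ℝ) - M = Bmᴴ * Bm := by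
    open scoped MatrixOrder Matrix.Norms.L2Operator in
    exact CStarAlgebra.nonneg_iff_eq_star_mul_self.mp hpsd.nonneg
  set a : Λ → Λ → ℝ := fun k x => Bm k x with ha
  have hgram : ∀ v : Λ → ℝ, ∑ k, (∑ x, a k x * v x) ^ 2 = r * (v ⬝ᵥ v) - v ⬝ᵥ M.mulVec v := by
    intro v
    rw [← hquad, hBm, ← mulVec_mulVec, dotProduct_mulVec, vecMul_conjTranspose]
    simp [dotProduct, mulVec, pow_two, ha]
  have hA : ∀ b : Λ → ℝ, ∑ k, (∑ x, a k x * b x) ^ 2 ≤ r * ∑ x, b x ^ 2 := by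
    intro b
    have h1 := hMnn b
    rw [hgram]
    have : b ⬝ᵥ b = ∑ x, b x ^ 2 := by simp [dotProduct, pow_two]
    rw [← this]
    linarith
  have hsp : spin = sp := hspin
  subst hsp
  -- Spins square to `1`, so replacing `-M` by `r - M` only shifts the exponent by a constant:
  -- `ν` is the interpolating measure at time `1` and zero field.
  have henergy : ∀ σ : Λ → Bool, energy a 1 0 σ =
      -(1 / 2) * (∑ x, ∑ y, M x y * sp (σ x) * sp (σ y)) + r * Fintype.card Λ / 2 := by
    intro σ
    have h1 := hgram (fun x => sp (σ x))
    have h2 : (fun x => sp (σ x)) ⬝ᵥ (fun x => sp (σ x)) = (Fintype.card Λ : ℝ) := by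
      have : ∀ x, sp (σ x) * sp (σ x) = 1 := fun x => by cases σ x <;> simp [sp]
      simp [dotProduct, this]
    have h3 : (fun x => sp (σ x)) ⬝ᵥ M.mulVec (fun x => sp (σ x)) =
        ∑ x, ∑ y, M x y * sp (σ x) * sp (σ y) := by
      simp only [dotProduct, mulVec, Finset.mul_sum]
      exact Finset.sum_congr rfl fun x _ => Finset.sum_congr rfl fun y _ => by ring
    have h4 : lin (0 : Λ → ℝ) σ = 0 := by simp [lin]
    rw [energy, h4]
    simp only [lin]
    rw [h1, h2, h3]
    ring
  have hgibbs : ∀ g : (Λ → Bool) → ℝ, gibbs (energy a 1 0) g = ∑ σ, ν σ * g σ := by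
    intro g
    rw [show energy a 1 0 = fun σ => _ from funext henergy, gibbs_congr_add_const, gibbs,
      Finset.sum_div]
    refine Finset.sum_congr rfl fun σ _ => ?_
    rw [hν]; ring
  have hν0 : ∀ σ, 0 ≤ ν σ := fun σ => by rw [hν]; positivity
  set D := ∑ x : Λ, ∑ σ : Λ → Bool, ν σ * (F σ - F (Function.update σ x (!(σ x)))) ^ 2 with hD
  have hD0 : 0 ≤ D := Finset.sum_nonneg fun x _ => Finset.sum_nonneg fun σ _ =>
    mul_nonneg (hν0 σ) (sq_nonneg _)
  have h1r : 0 < 1 - r := by linarith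
  -- `flow_LSI` needs a positive function: it is applied to `|F| + δ`, and `δ` tends to `0`.
  set H : ℝ → ℝ := fun δ => (∑ σ, ν σ * ((|F σ| + δ) ^ 2 * log ((|F σ| + δ) ^ 2)))
      - (∑ σ, ν σ * (|F σ| + δ) ^ 2) * log (∑ σ, ν σ * (|F σ| + δ) ^ 2) with hH
  have hδ : ∀ δ, 0 < δ → (1 - r) * H δ ≤ 1 / 2 * D := by
    intro δ hδ
    have h1 := flow_LSI hr0 hr hA (F := fun σ => |F σ| + δ)
      (fun σ => by have := abs_nonneg (F σ); linarith) 0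
    rw [gibbs_const_mul, gibbs_sum] at h1
    simp only [hgibbs] at h1
    refine h1.trans ?_
    gcongr ?_ * ?_
    refine Finset.sum_le_sum fun x _ => Finset.sum_le_sum fun σ _ =>
      mul_le_mul_of_nonneg_left ?_ (hν0 σ)
    rw [add_sub_add_right_eq_sub]
    exact sq_le_sq.2 (abs_abs_sub_abs_le_abs_sub _ _)
  have hcont : Continuous H := by
    have hc : ∀ σ, Continuous fun δ : ℝ => (|F σ| + δ) ^ 2 := fun σ => by fun_prop
    refine Continuous.sub (continuous_finsetSum _ fun σ _ => continuous_const.mul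
      (continuous_mul_log.comp (hc σ))) (continuous_mul_log.comp
      (continuous_finsetSum _ fun σ _ => continuous_const.mul (hc σ)))
  have hlim : (1 - r) * H 0 ≤ 1 / 2 * D := by
    have ht : Filter.Tendsto (fun δ => (1 - r) * H δ) (nhdsWithin 0 (Set.Ioi 0))
        (nhds ((1 - r) * H 0)) :=
      ((continuous_const.mul hcont).tendsto 0).mono_left nhdsWithin_le_nhds
    exact le_of_tendsto ht (Filter.eventually_of_mem self_mem_nhdsWithin fun δ h => hδ δ h)
  simp only [hH, add_zero, sq_abs] at hlim
  -- The constant obtained is `1 / (1 - r)`; the one claimed is `(1 + r) / (1 - r)`.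
  have e1 : 1 / 2 * (1 + 2 * r / (1 - r)) * D = (1 + r) * (1 / 2 * D) / (1 - r) := by
    field_simp; ring
  rw [e1, le_div_iff₀ h1r]
  nlinarith
end

section
/- Let Λ be a nonempty finite set and let M be a symmetric real Λ×Λ matrix (not necessarily positive definite) whose eigenvalues all lie in an interval [λ⁻, λ⁺] with δ := λ⁺ − λ⁻ < 1. Let ν be the probability measure on {−1,1}^Λ defined by ν({σ}) = Z^{−1} exp(−(1/2) Σ_{x,y∈Λ} M_{xy} σ_x σ_y). Then for every function F : {−1,1}^Λ → ℝ, Ent_ν(F²) ≤ (1/2)(1 + 2δ/(1 − δ)) Σ_{x∈Λ} ν((F(σ) − F(σ^x))²), where σ^x denotes σ with the spin at x negated. -/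
/-!
The constant obtained is `1/2 * (1 - δ)⁻¹`, which is at most the claimed one because `0 ≤ δ`.

Since `σ x ^ 2 = 1`, replacing `-M` by `B = λ⁺ - M` multiplies the weight by a constant. The matrix
`B` satisfies `0 ≤ B ≤ δ`, so `B = Uᵀ U` and `ν` is proportional to `exp (1/2 * ∑ i, X i ^ 2)` with
`X = U σ` (`exists_rows`, `gaussW`). This weight is the limit as `n → ∞` of
`(∏ i, cosh (X i / √n)) ^ n`, that is, of `n` steps of an evolution started from independent fair
spins. In each step, with `ε = 1/√n`, the weight is multiplied by
`∏ i, 2 cosh (ε X i) = ∑ τ, exp (ε * ∑ i, τ i * X i)`, the sum being over all choices of signs `τ`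
(`stepW`). The new measure is thus a mixture of tilts of the old one by small external fields.

Two bounds, uniform in an arbitrary external field, are propagated: the covariance matrix of the
spins is at most `K` (`CovBound`), and `ent g ≤ A * ⟨d⟩` for the given `g = f ^ 2` and for `d` the
Dirichlet form density (`EntBound`).

* The law of total variance splits the new variance into the mean of the variances of the tilted
  measures, still bounded by `K`, and the variance of the tilted means, which to leading order is
  `ε² |U H v|² ≤ ε² δ K² |v|²` where `H` is the covariance matrix. So `K' ≤ δ K²`
  (`CovBound.step`).
* The chain rule of entropy splits the new entropy in the same way. The entropy of the tilted means
  of `g` is to leading order `ε² |U cov (g, σ)|² / (2 ⟨g⟩)`. The covariance bound makes linear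
  statistics sub-Gaussian, and the Gibbs variational principle converts this into
  `|cov (g, σ)|² ≤ 2 K ⟨g⟩ ent g` (`CovBound.stability`). So `A' ≤ δ K A` (`EntBound.step`).

At time `0` one has `K = 1` and `A = 1/2`, the latter by the two-point logarithmic Sobolev
inequality and its tensorisation (`two_point_lsi`, `prod_lsi`). The equations `K' = δ K²` and
`A' = δ K A` give `K = (1 - δ t)⁻¹` and `A = 1/2 * (1 - δ t)⁻¹`, and the time reached is
`n ε² = 1` (`evolution`). The third-order errors of the steps are absorbed by a slightly larger
`δ'` and by adding a constant `θ > 0` to `d`; these, and the regularisation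
`f = √(F² + η)` of a general `F`, are removed at the end.
-/

open Matrix Real

set_option linter.unusedSectionVars false

namespace IsingLSI

/-! ### Weighted averages, covariance and entropy -/

section Averages

variable {Ω T : Type*} [Fintype Ω] [Fintype T]

/-- Expectation of `f` under the probability measure proportional to the weight `w`. -/
noncomputable def av (w f : Ω → ℝ) : ℝ := (∑ ω, w ω * f ω) / ∑ ω, w ω

/-- Covariance under the probability measure proportional to `w`. -/
noncomputable def cov (w f g : Ω → ℝ) : ℝ :=
  av w (fun ω => f ω * g ω) - av w f * av w g

/-- Entropy under the probability measure proportional to `w`. -/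
noncomputable def ent (w g : Ω → ℝ) : ℝ :=
  av w (fun ω => g ω * log (g ω)) - av w g * log (av w g)

/-- Exponential tilt of the weight `w` by `f`. -/
noncomputable def tilt (w f : Ω → ℝ) : Ω → ℝ := fun ω => w ω * exp (f ω)

theorem tilt_pos {Ω : Type*} {w : Ω → ℝ} (hw : ∀ ω, 0 < w ω) (f : Ω → ℝ) (ω : Ω) : 0 < tilt w f ω :=
  mul_pos (hw ω) (exp_pos _)

theorem av_add (w f g : Ω → ℝ) : av w (fun ω => f ω + g ω) = av w f + av w g := by
  simp only [av, mul_add, Finset.sum_add_distrib, add_div]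

theorem av_sub (w f g : Ω → ℝ) : av w (fun ω => f ω - g ω) = av w f - av w g := by
  simp only [av, mul_sub, Finset.sum_sub_distrib, sub_div]

theorem av_mul_left (w f : Ω → ℝ) (c : ℝ) : av w (fun ω => c * f ω) = c * av w f := by
  simp only [av, mul_left_comm _ c, ← Finset.mul_sum, mul_div_assoc]

theorem av_mul_right (w f : Ω → ℝ) (c : ℝ) : av w (fun ω => f ω * c) = av w f * c := by
  simp only [mul_comm _ c, av_mul_left]

theorem av_sum {ι : Type*} (s : Finset ι) (w : Ω → ℝ) (f : ι → Ω → ℝ) :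
    av w (fun ω => ∑ i ∈ s, f i ω) = ∑ i ∈ s, av w (f i) := by
  simp only [av, Finset.mul_sum, ← Finset.sum_div]
  rw [Finset.sum_comm]

theorem av_scale (w f : Ω → ℝ) {c : ℝ} (hc : c ≠ 0) : av (fun ω => c * w ω) f = av w f := by
  simp only [av, mul_assoc, ← Finset.mul_sum]
  exact mul_div_mul_left _ _ hc

theorem ent_scale (w g : Ω → ℝ) {c : ℝ} (hc : c ≠ 0) : ent (fun ω => c * w ω) g = ent w g := by
  simp only [ent, av_scale _ _ hc]

theorem cov_comm (w f g : Ω → ℝ) : cov w f g = cov w g f := by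
  simp only [cov, mul_comm]

theorem cov_add_right (w f g k : Ω → ℝ) :
    cov w f (fun ω => g ω + k ω) = cov w f g + cov w f k := by
  simp only [cov, mul_add, av_add]; ring

theorem cov_mul_right (w f g : Ω → ℝ) (c : ℝ) :
    cov w f (fun ω => c * g ω) = c * cov w f g := by
  simp only [cov, mul_left_comm _ c, av_mul_left]; ring

theorem cov_sum_right {ι : Type*} (s : Finset ι) (w f : Ω → ℝ) (g : ι → Ω → ℝ) :
    cov w f (fun ω => ∑ i ∈ s, g i ω) = ∑ i ∈ s, cov w f (g i) := by
  simp only [cov, Finset.mul_sum, av_sum, Finset.sum_sub_distrib]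

theorem sum_tilt (w f : Ω → ℝ) : ∑ ω, tilt w f ω = ∑ ω, w ω * exp (f ω) := rfl

variable [Nonempty Ω]

theorem sum_w_pos {w : Ω → ℝ} (hw : ∀ ω, 0 < w ω) : 0 < ∑ ω, w ω :=
  Finset.sum_pos (fun ω _ => hw ω) Finset.univ_nonempty

theorem av_const {w : Ω → ℝ} (hw : ∀ ω, 0 < w ω) (c : ℝ) : av w (fun _ => c) = c := by
  simp only [av, ← Finset.sum_mul]
  exact mul_div_cancel_left₀ _ (sum_w_pos hw).ne'

theorem av_mono {w : Ω → ℝ} (hw : ∀ ω, 0 < w ω) {f g : Ω → ℝ} (h : ∀ ω, f ω ≤ g ω) :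
    av w f ≤ av w g := by
  unfold av
  have := sum_w_pos hw
  gcongr with ω
  · exact (hw ω).le
  · exact h ω

theorem av_le {w : Ω → ℝ} (hw : ∀ ω, 0 < w ω) {f : Ω → ℝ} {c : ℝ} (h : ∀ ω, f ω ≤ c) :
    av w f ≤ c := (av_mono hw h).trans_eq (av_const hw c)

theorem le_av {w : Ω → ℝ} (hw : ∀ ω, 0 < w ω) {f : Ω → ℝ} {c : ℝ} (h : ∀ ω, c ≤ f ω) :
    c ≤ av w f := (av_const hw c).symm.trans_le (av_mono hw h)

theorem av_abs_le {w : Ω → ℝ} (hw : ∀ ω, 0 < w ω) {f : Ω → ℝ} {c : ℝ} (h : ∀ ω, |f ω| ≤ c) :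
    |av w f| ≤ c :=
  abs_le.2 ⟨le_av hw fun ω => (abs_le.1 (h ω)).1, av_le hw fun ω => (abs_le.1 (h ω)).2⟩

theorem av_pos {w : Ω → ℝ} (hw : ∀ ω, 0 < w ω) {f : Ω → ℝ} (h : ∀ ω, 0 < f ω) :
    0 < av w f :=
  div_pos (Finset.sum_pos (fun ω _ => mul_pos (hw ω) (h ω)) Finset.univ_nonempty) (sum_w_pos hw)

theorem cov_abs_le {w : Ω → ℝ} (hw : ∀ ω, 0 < w ω) {f g : Ω → ℝ} {b c : ℝ}
    (hf : ∀ ω, |f ω| ≤ b) (hg : ∀ ω, |g ω| ≤ c) : |cov w f g| ≤ 2 * b * c := by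
  have ω₀ := Classical.arbitrary Ω
  have hb : 0 ≤ b := (abs_nonneg _).trans (hf ω₀)
  have h1 : |av w (fun ω => f ω * g ω)| ≤ b * c := av_abs_le hw fun ω => by
    rw [abs_mul]; exact mul_le_mul (hf ω) (hg ω) (abs_nonneg _) hb
  have h2 : |av w f * av w g| ≤ b * c := by
    rw [abs_mul]; exact mul_le_mul (av_abs_le hw hf) (av_abs_le hw hg) (abs_nonneg _) hb
  calc |cov w f g| ≤ _ := abs_sub _ _
    _ ≤ 2 * b * c := by linarith

theorem cov_const_right {w : Ω → ℝ} (hw : ∀ ω, 0 < w ω) (f : Ω → ℝ) (c : ℝ) :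
    cov w f (fun _ => c) = 0 := by
  simp only [cov, av_const hw, av_mul_right]; ring

/-- The variance is the second moment about `c`, minus the squared bias. -/
theorem cov_self_eq {w : Ω → ℝ} (hw : ∀ ω, 0 < w ω) (f : Ω → ℝ) (c : ℝ) :
    cov w f f = av w (fun ω => (f ω - c) ^ 2) - (av w f - c) ^ 2 := by
  have : (fun ω => (f ω - c) ^ 2) = fun ω => (f ω * f ω - (2 * c) * f ω) + c ^ 2 := by
    funext ω; ring
  rw [this, av_add, av_sub, av_mul_left, av_const hw, cov]; ring

theorem cov_self_le {w : Ω → ℝ} (hw : ∀ ω, 0 < w ω) (f : Ω → ℝ) (c : ℝ) :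
    cov w f f ≤ av w (fun ω => (f ω - c) ^ 2) := by
  rw [cov_self_eq hw f c]; linarith [sq_nonneg (av w f - c)]

theorem cov_self_nonneg {w : Ω → ℝ} (hw : ∀ ω, 0 < w ω) (f : Ω → ℝ) : 0 ≤ cov w f f := by
  rw [cov_self_eq hw f (av w f)]
  simpa using le_av hw fun ω => sq_nonneg _

theorem mul_log_sub_add_one_nonneg {x : ℝ} (hx : 0 < x) : 0 ≤ x * log x - x + 1 := by
  have := Real.one_sub_inv_le_log_of_pos hx
  have := mul_le_mul_of_nonneg_left this hx.le
  rw [mul_sub, mul_inv_cancel₀ hx.ne'] at this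
  linarith

theorem mul_log_div_nonneg {x c : ℝ} (hx : 0 < x) (hc : 0 < c) :
    0 ≤ x * log (x / c) - x + c := by
  have := mul_nonneg hc.le (mul_log_sub_add_one_nonneg (div_pos hx hc))
  have h2 : c * (x / c * log (x / c) - x / c + 1) = x * log (x / c) - x + c := by
    field_simp
  linarith

/-- Variational upper bound for the entropy: any `c > 0` may replace the mean. -/
theorem ent_le {w : Ω → ℝ} (hw : ∀ ω, 0 < w ω) {g : Ω → ℝ} (hg : ∀ ω, 0 < g ω) {c : ℝ}
    (hc : 0 < c) : ent w g ≤ av w (fun ω => g ω * log (g ω / c) - g ω + c) := by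
  have h1 : (fun ω => g ω * log (g ω / c) - g ω + c)
      = fun ω => (g ω * log (g ω) - g ω * log c) - g ω + c := by
    funext ω; rw [log_div (hg ω).ne' hc.ne']; ring
  rw [h1, av_add, av_sub, av_sub, av_const hw, av_mul_right, ent]
  have hG := av_pos hw hg
  have := mul_log_div_nonneg hG hc
  rw [log_div hG.ne' hc.ne'] at this
  linarith

/-- Gibbs variational principle. -/
theorem gibbs {w : Ω → ℝ} (hw : ∀ ω, 0 < w ω) {g : Ω → ℝ} (hg : ∀ ω, 0 < g ω) (f : Ω → ℝ) :
    av w (fun ω => g ω * f ω) ≤ ent w g + av w g * log (av w fun ω => exp (f ω)) := by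
  have hG := av_pos hw hg
  have hE : 0 < av w fun ω => exp (f ω) := av_pos hw fun ω => exp_pos _
  set G := av w g with hGdef
  set E := av w fun ω => exp (f ω) with hEdef
  have key : 0 ≤ av w (fun ω => g ω * log (g ω) - g ω * (log G - log E) - g ω * f ω - g ω
      + (G / E) * exp (f ω)) := by
    refine le_av hw fun ω => ?_
    have hy : 0 < (G / E) * exp (f ω) := mul_pos (div_pos hG hE) (exp_pos _)
    have := mul_log_div_nonneg (hg ω) hy
    rw [log_div (hg ω).ne' hy.ne', log_mul (div_pos hG hE).ne' (exp_pos _).ne', log_exp,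
      log_div hG.ne' hE.ne'] at this
    linarith
  rw [av_add, av_sub, av_sub, av_sub, av_mul_right, av_mul_left, ← hGdef, ← hEdef,
    div_mul_cancel₀ _ hE.ne'] at key
  rw [ent, ← hGdef]
  linarith

theorem av_tilt {w : Ω → ℝ} (hw : ∀ ω, 0 < w ω) (f F : Ω → ℝ) :
    av (tilt w f) F = av w (fun ω => F ω * exp (f ω)) / av w (fun ω => exp (f ω)) := by
  have := (sum_w_pos hw).ne'
  simp only [av, tilt]
  rw [div_div_div_cancel_right₀ this]
  simp only [mul_assoc, mul_comm (exp _)]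

theorem av_tilt_sub {w : Ω → ℝ} (hw : ∀ ω, 0 < w ω) (f F : Ω → ℝ) :
    av (tilt w f) F - av w F = cov w F (fun ω => exp (f ω)) / av w (fun ω => exp (f ω)) := by
  have hE : 0 < av w fun ω => exp (f ω) := av_pos hw fun ω => exp_pos _
  rw [av_tilt hw, cov]; field_simp

/-- Tower property for a mixture of weights. -/
theorem av_mix {W : T → Ω → ℝ} (hW : ∀ τ ω, 0 < W τ ω) (f : Ω → ℝ) :
    av (fun ω => ∑ τ, W τ ω) f = av (fun τ => ∑ ω, W τ ω) (fun τ => av (W τ) f) := by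
  simp only [av]
  congr 1
  · simp only [Finset.sum_mul]
    rw [Finset.sum_comm]
    refine Finset.sum_congr rfl fun τ _ => ?_
    rw [← Finset.sum_mul, mul_div_cancel₀ _ (sum_w_pos (hW τ)).ne']
  · exact Finset.sum_comm

theorem cov_mix {W : T → Ω → ℝ} (hW : ∀ τ ω, 0 < W τ ω) (f : Ω → ℝ) :
    cov (fun ω => ∑ τ, W τ ω) f f = av (fun τ => ∑ ω, W τ ω) (fun τ => cov (W τ) f f)
      + cov (fun τ => ∑ ω, W τ ω) (fun τ => av (W τ) f) (fun τ => av (W τ) f) := by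
  simp only [cov, av_sub, av_mix hW]; ring

theorem ent_mix {W : T → Ω → ℝ} (hW : ∀ τ ω, 0 < W τ ω) (g : Ω → ℝ) :
    ent (fun ω => ∑ τ, W τ ω) g = av (fun τ => ∑ ω, W τ ω) (fun τ => ent (W τ) g)
      + ent (fun τ => ∑ ω, W τ ω) (fun τ => av (W τ) g) := by
  simp only [ent, av_sub, av_mix hW]; ring

end Averages

/-! ### Covariance bounds and entropic stability -/

section Stability

variable {Ω Λ : Type*} [Fintype Λ]

/-- The linear statistic `∑ x, v x * S x` of the spins `S x : Ω → ℝ`. -/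
def lin (S : Λ → Ω → ℝ) (v : Λ → ℝ) : Ω → ℝ := fun ω => ∑ x, v x * S x ω

theorem lin_smul (S : Λ → Ω → ℝ) (c : ℝ) (v : Λ → ℝ) :
    lin S (fun x => c * v x) = fun ω => c * lin S v ω := by
  funext ω; simp only [lin, Finset.mul_sum, mul_assoc]

theorem lin_add (S : Λ → Ω → ℝ) (u v : Λ → ℝ) :
    lin S (fun x => u x + v x) = fun ω => lin S u ω + lin S v ω := by
  funext ω; simp only [lin, add_mul, Finset.sum_add_distrib]

theorem lin_zero (S : Λ → Ω → ℝ) : lin S (fun _ => 0) = fun _ => 0 := by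
  funext ω; simp [lin]

theorem tilt_tilt (w f g : Ω → ℝ) : tilt (tilt w f) g = tilt w (fun ω => f ω + g ω) := by
  funext ω; simp only [tilt, exp_add, mul_assoc]

theorem tilt_zero (w : Ω → ℝ) : tilt w (fun _ => 0) = w := by
  funext ω; simp [tilt]

variable [Fintype Ω]

/-- The covariance matrix of the spins is at most `K • 1`, uniformly over all external fields. -/
def CovBound (S : Λ → Ω → ℝ) (w : Ω → ℝ) (K : ℝ) : Prop :=
  ∀ h v : Λ → ℝ, cov (tilt w (lin S h)) (lin S v) (lin S v) ≤ K * ∑ x, v x ^ 2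

theorem cov_lin (S : Λ → Ω → ℝ) (w f : Ω → ℝ) (v : Λ → ℝ) :
    cov w f (lin S v) = ∑ x, v x * cov w f (S x) := by
  unfold lin
  rw [cov_sum_right]
  simp only [cov_mul_right]

theorem CovBound.tilt {S : Λ → Ω → ℝ} {w : Ω → ℝ} {K : ℝ} (hK : CovBound S w K) (h : Λ → ℝ) :
    CovBound S (tilt w (lin S h)) K := by
  intro k v
  rw [tilt_tilt, ← lin_add]
  exact hK _ v

theorem CovBound.cov_le {S : Λ → Ω → ℝ} {w : Ω → ℝ} {K : ℝ} (hK : CovBound S w K) (v : Λ → ℝ) :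
    cov w (lin S v) (lin S v) ≤ K * ∑ x, v x ^ 2 := by
  have := hK (fun _ => 0) v
  rwa [lin_zero, tilt_zero] at this

theorem hasDerivAt_av_exp (w f Y : Ω → ℝ) (t : ℝ) :
    HasDerivAt (fun t : ℝ => av w (fun ω => f ω * exp (t * Y ω)))
      (av w (fun ω => f ω * Y ω * exp (t * Y ω))) t := by
  unfold av
  refine HasDerivAt.div_const (HasDerivAt.fun_sum fun ω _ => ?_) _
  have h1 : HasDerivAt (fun t : ℝ => exp (t * Y ω)) (exp (t * Y ω) * Y ω) t := by
    have := ((hasDerivAt_id t).mul_const (Y ω)).exp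
    simpa using this
  exact ((h1.const_mul (f ω)).const_mul (w ω)).congr_deriv (by ring)

variable [Nonempty Ω]

/-- Integrating the covariance bound twice along the fields `t * v` shows that linear statistics
are sub-Gaussian. -/
theorem CovBound.log_mgf_le {S : Λ → Ω → ℝ} {w : Ω → ℝ} {K : ℝ} (hw : ∀ ω, 0 < w ω)
    (hK : CovBound S w K) (v : Λ → ℝ) :
    log (av w (fun ω => exp (lin S v ω))) ≤ av w (lin S v) + K / 2 * ∑ x, v x ^ 2 := by
  set Y := lin S v with hY
  set s := ∑ x, v x ^ 2 with hs
  have hZ : ∀ t : ℝ, 0 < av w (fun ω => exp (t * Y ω)) := fun t => av_pos hw fun ω => exp_pos _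
  have dZ : ∀ t : ℝ, HasDerivAt (fun t : ℝ => av w (fun ω => exp (t * Y ω)))
      (av w (fun ω => Y ω * exp (t * Y ω))) t := fun t => by
    simpa using hasDerivAt_av_exp w (fun _ => 1) Y t
  set m : ℝ → ℝ := fun t =>
    av w (fun ω => Y ω * exp (t * Y ω)) / av w (fun ω => exp (t * Y ω)) with hm
  have m0 : m 0 = av w Y := by simp [hm, av_const hw]
  have dm : ∀ t, HasDerivAt (fun t => m t - K * s * t)
      (cov (IsingLSI.tilt w (fun ω => t * Y ω)) Y Y - K * s) t := fun t => by
    have h1 := (hasDerivAt_av_exp w Y Y t).fun_div (dZ t) (hZ t).ne'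
    have h2 := h1.sub ((hasDerivAt_id t).const_mul (K * s))
    refine h2.congr_deriv ?_
    have h3 := (hZ t).ne'
    rw [cov, av_tilt hw, av_tilt hw]
    generalize av w (fun ω => exp (t * Y ω)) = a at h3 ⊢
    generalize av w (fun ω => Y ω * Y ω * exp (t * Y ω)) = b
    generalize av w (fun ω => Y ω * exp (t * Y ω)) = c
    field_simp
  have am : Antitone (fun t => m t - K * s * t) := by
    refine antitone_of_deriv_nonpos (fun t => (dm t).differentiableAt) fun t => ?_
    rw [(dm t).deriv]
    have h := hK (fun x => t * v x) v
    rw [lin_smul] at h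
    linarith
  have dg : ∀ t, HasDerivAt (fun t => log (av w (fun ω => exp (t * Y ω))) - av w Y * t
      - K * s / 2 * t ^ 2) (m t - av w Y - K * s * t) t := fun t => by
    have h1 := (dZ t).log (hZ t).ne'
    have h2 := (h1.sub ((hasDerivAt_id t).const_mul (av w Y))).sub
      ((hasDerivAt_pow 2 t).const_mul (K * s / 2))
    refine h2.congr_deriv ?_
    simp only [hm]; ring
  have ag : AntitoneOn (fun t => log (av w (fun ω => exp (t * Y ω))) - av w Y * t
      - K * s / 2 * t ^ 2) (Set.Ici 0) := by
    refine antitoneOn_of_deriv_nonpos (convex_Ici 0)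
      (fun t _ => (dg t).continuousAt.continuousWithinAt)
      (fun t _ => (dg t).differentiableAt.differentiableWithinAt) fun t ht => ?_
    rw [interior_Ici] at ht
    rw [(dg t).deriv]
    have := am (le_of_lt ht)
    simp only [m0] at this
    linarith
  have := ag (Set.mem_Ici.2 le_rfl) (Set.mem_Ici.2 zero_le_one) zero_le_one
  simp only [one_mul, zero_mul, exp_zero, av_const hw, log_one] at this
  linarith

/-- Entropic stability: a density `g` moves the magnetisation by at most the square root of its
entropy. -/
theorem CovBound.stability {S : Λ → Ω → ℝ} {w : Ω → ℝ} {K : ℝ} (hw : ∀ ω, 0 < w ω)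
    (hK : CovBound S w K) (hK0 : 0 < K) {g : Ω → ℝ} (hg : ∀ ω, 0 < g ω) :
    ∑ x, cov w g (S x) ^ 2 ≤ 2 * K * av w g * ent w g := by
  have hG := av_pos hw hg
  set c := (K * av w g)⁻¹ with hc
  set v : Λ → ℝ := fun x => c * cov w g (S x) with hv
  have h1 := gibbs hw hg (lin S v)
  have h2 := mul_le_mul_of_nonneg_left (hK.log_mgf_le hw v) hG.le
  have h3 : cov w g (lin S v) = c * ∑ x, cov w g (S x) ^ 2 := by
    rw [cov_lin, Finset.mul_sum]
    exact Finset.sum_congr rfl fun x _ => by simp only [hv]; ring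
  have h4 : ∑ x, v x ^ 2 = c ^ 2 * ∑ x, cov w g (S x) ^ 2 := by
    rw [Finset.mul_sum]
    exact Finset.sum_congr rfl fun x _ => by simp only [hv]; ring
  rw [cov] at h3
  rw [h4] at h2
  set Q := ∑ x, cov w g (S x) ^ 2
  have h5 : c * Q ≤ ent w g + av w g * (K / 2 * (c ^ 2 * Q)) := by linarith
  have h6 : av w g * (K / 2 * (c ^ 2 * Q)) = c * Q / 2 := by
    rw [hc]; field_simp
  have h7 : c * Q ≤ 2 * ent w g := by linarith
  have h8 := mul_le_mul_of_nonneg_left h7 (mul_pos hK0 hG).le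
  rw [← mul_assoc, hc, mul_inv_cancel₀ (mul_pos hK0 hG).ne'] at h8
  linarith

/-- `|H v|² ≤ K² |v|²` for the covariance matrix `H`. -/
theorem CovBound.sum_cov_sq_le {S : Λ → Ω → ℝ} {w : Ω → ℝ} {K : ℝ} (hw : ∀ ω, 0 < w ω)
    (hK : CovBound S w K) (hK0 : 0 < K) (v : Λ → ℝ) :
    ∑ x, cov w (lin S v) (S x) ^ 2 ≤ K ^ 2 * ∑ x, v x ^ 2 := by
  set z : Λ → ℝ := fun x => cov w (lin S v) (S x) with hz
  have h1 : cov w (lin S v) (lin S z) = ∑ x, z x ^ 2 := by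
    rw [cov_lin]; exact Finset.sum_congr rfl fun x _ => by simp only [hz]; ring
  have h2 := hK.cov_le v
  have h3 := hK.cov_le z
  -- positivity of the variance of the statistic attached to `K v - H v`
  have h4 := cov_self_nonneg hw (lin S (fun x => K * v x + (-1) * z x))
  rw [lin_add, lin_smul, lin_smul, cov_add_right, cov_mul_right, cov_mul_right,
    cov_comm w _ (lin S v), cov_comm w _ (lin S z), cov_add_right, cov_add_right,
    cov_mul_right, cov_mul_right, cov_mul_right, cov_mul_right, cov_comm w (lin S z) (lin S v),
    h1] at h4
  have h5 := mul_le_mul_of_nonneg_left h2 (sq_nonneg K)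
  have h6 : K * ∑ x, z x ^ 2 ≤ K * (K ^ 2 * ∑ x, v x ^ 2) := by nlinarith
  exact le_of_mul_le_mul_left h6 hK0

end Stability

/-! ### One step of the discrete evolution -/

section Noise

variable {I : Type*} [Fintype I] [DecidableEq I]

/-- The real sign of a Boolean spin. -/
noncomputable def sg (b : Bool) : ℝ := if b then 1 else -1

theorem sg_sq (b : Bool) : sg b * sg b = 1 := by cases b <;> simp [sg]

theorem abs_sg (b : Bool) : |sg b| = 1 := by cases b <;> simp [sg]

theorem sum_prod_bool (f : I → Bool → ℝ) :
    ∑ σ : I → Bool, ∏ i, f i (σ i) = ∏ i, (f i true + f i false) := by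
  have := Finset.prod_univ_sum (fun _ : I => (Finset.univ : Finset Bool)) f
  rw [Fintype.piFinset_univ] at this
  rw [← this]
  exact Finset.prod_congr rfl fun i _ => by simp

/-- Under a product weight, two statistics of distinct coordinates, one of them centred, are
orthogonal. -/
theorem sum_prod_centred (p : I → Bool → ℝ) (φ : I → Bool → ℝ) {i j : I} (hij : i ≠ j)
    (hφ : p i true * φ i true + p i false * φ i false = 0) :
    ∑ σ : I → Bool, (∏ k, p k (σ k)) * (φ i (σ i) * φ j (σ j)) = 0 := by
  have h : ∀ σ : I → Bool, (∏ k, p k (σ k)) * (φ i (σ i) * φ j (σ j))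
      = ∏ k, (p k (σ k) * ((if k = i then φ k (σ k) else 1) *
          (if k = j then φ k (σ k) else 1))) := by
    intro σ
    rw [Finset.prod_mul_distrib, Finset.prod_mul_distrib]
    simp
  simp only [h]
  rw [sum_prod_bool (fun k b => p k b * ((if k = i then φ k b else 1) *
    (if k = j then φ k b else 1)))]
  refine Finset.prod_eq_zero (Finset.mem_univ i) ?_
  simpa [hij] using hφ

/-- Second moment of a Rademacher sum. -/
theorem av_rademacher_sq (a : I → ℝ) :
    av (fun _ : I → Bool => (1 : ℝ)) (fun τ => (∑ i, sg (τ i) * a i) ^ 2) = ∑ i, a i ^ 2 := by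
  have hpos : ∀ τ : I → Bool, (0 : ℝ) < (fun _ : I → Bool => (1 : ℝ)) τ := fun _ => one_pos
  have h : (fun τ : I → Bool => (∑ i, sg (τ i) * a i) ^ 2)
      = fun τ => ∑ i, ∑ j, (a i * a j) * (sg (τ i) * sg (τ j)) := by
    funext τ
    rw [sq, Finset.sum_mul_sum]
    exact Finset.sum_congr rfl fun i _ => Finset.sum_congr rfl fun j _ => by ring
  rw [h, av_sum]
  refine Finset.sum_congr rfl fun i _ => ?_
  rw [av_sum, Finset.sum_eq_single i]
  · rw [av_mul_left]; simp only [sg_sq, av_const hpos]; ring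
  · intro j _ hj
    have := sum_prod_centred (I := I) (fun _ _ => 1) (fun _ b => sg b) hj.symm (by simp [sg])
    rw [av_mul_left, av]
    simp only [Finset.prod_const_one, one_mul] at this
    simp [this]
  · simp

end Noise

section Step

variable {Ω I : Type*} [Fintype I]

/-- The random field `∑ i, ± X i` attached to the signs `τ`. -/
noncomputable def noise (X : I → Ω → ℝ) (τ : I → Bool) : Ω → ℝ := lin X (fun i => sg (τ i))

variable [DecidableEq I]

/-- One step of the discrete evolution: the weight `w` is multiplied by
`∏ i, 2 cosh (ε * X i)`, written as a sum of tilts of `w` by small random fields. -/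
noncomputable def stepW (X : I → Ω → ℝ) (ε : ℝ) (w : Ω → ℝ) : Ω → ℝ :=
  fun ω => ∑ τ : I → Bool, tilt w (fun ω => ε * noise X τ ω) ω

theorem stepW_eq (X : I → Ω → ℝ) (ε : ℝ) (w : Ω → ℝ) (ω : Ω) :
    stepW X ε w ω = w ω * ∏ i, (2 * cosh (ε * X i ω)) := by
  simp only [stepW, tilt, ← Finset.mul_sum]
  congr 1
  have : ∀ τ : I → Bool, exp (ε * noise X τ ω) = ∏ i, exp (ε * (sg (τ i) * X i ω)) := by
    intro τ; simp only [noise, lin, Finset.mul_sum, exp_sum]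
  simp only [this]
  rw [sum_prod_bool (fun i b => exp (ε * (sg b * X i ω)))]
  refine Finset.prod_congr rfl fun i _ => ?_
  rw [cosh_eq]; simp [sg]; ring

theorem stepW_tilt (X : I → Ω → ℝ) (ε : ℝ) (w f : Ω → ℝ) :
    stepW X ε (tilt w f) = tilt (stepW X ε w) f := by
  funext ω; simp only [stepW_eq, tilt]; ring

variable [Fintype Ω] [Nonempty Ω]

theorem stepW_pos {w : Ω → ℝ} (hw : ∀ ω, 0 < w ω) (X : I → Ω → ℝ) (ε : ℝ) (ω : Ω) :
    0 < stepW X ε w ω :=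
  Finset.sum_pos (fun _ _ => tilt_pos hw _ ω) Finset.univ_nonempty

/-- The total mass of the weight `w` tilted by the field of `τ`. -/
noncomputable def mass (X : I → Ω → ℝ) (ε : ℝ) (w : Ω → ℝ) : (I → Bool) → ℝ :=
  fun τ => ∑ ω, tilt w (fun ω => ε * noise X τ ω) ω

theorem mass_pos {w : Ω → ℝ} (hw : ∀ ω, 0 < w ω) (X : I → Ω → ℝ) (ε : ℝ) (τ : I → Bool) :
    0 < mass X ε w τ := sum_w_pos (tilt_pos hw _)

/-- The weight `mass` differs from the uniform one by a factor close to `1`. -/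
theorem av_mass_le {w : Ω → ℝ} (hw : ∀ ω, 0 < w ω) {X : I → Ω → ℝ} {ε a : ℝ} (ha : 0 < a)
    (hE : ∀ τ, a ≤ av w (fun ω => exp (ε * noise X τ ω)))
    {f : (I → Bool) → ℝ} (hf : ∀ τ, 0 ≤ f τ) :
    av (mass X ε w) f
      ≤ av (fun _ => 1) (fun τ => av w (fun ω => exp (ε * noise X τ ω)) * f τ) / a := by
  have hZ := sum_w_pos hw
  have h1 : mass X ε w = fun τ => (∑ ω, w ω) * av w (fun ω => exp (ε * noise X τ ω)) := by
    funext τ; rw [av, mul_div_cancel₀ _ hZ.ne']; rfl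
  rw [h1, av_scale _ _ hZ.ne']
  simp only [av, one_mul, Finset.sum_const, nsmul_eq_mul, mul_one]
  rw [div_div]
  refine div_le_div_of_nonneg_left ?_ ?_ ?_
  · exact Finset.sum_nonneg fun τ _ => mul_nonneg (ha.le.trans (hE τ)) (hf τ)
  · have : (0 : ℝ) < (Finset.univ : Finset (I → Bool)).card := by
      exact_mod_cast Finset.univ_nonempty.card_pos
    positivity
  · calc _ = ∑ τ : I → Bool, a := by simp
      _ ≤ _ := Finset.sum_le_sum fun τ _ => hE τ

variable {w : Ω → ℝ} {X : I → Ω → ℝ} {ε R : ℝ}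

theorem abs_eps_noise (hε : 0 ≤ ε) (hR : ∀ τ ω, |noise X τ ω| ≤ R) (τ ω) :
    |ε * noise X τ ω| ≤ ε * R := by
  rw [abs_mul, abs_of_nonneg hε]; exact mul_le_mul_of_nonneg_left (hR τ ω) hε

theorem av_exp_ge (hw : ∀ ω, 0 < w ω) (hε : 0 ≤ ε) (hR : ∀ τ ω, |noise X τ ω| ≤ R) (τ) :
    1 - ε * R ≤ av w (fun ω => exp (ε * noise X τ ω)) := by
  refine le_av hw fun ω => ?_
  have h1 := add_one_le_exp (ε * noise X τ ω)
  have h2 := (abs_le.1 (abs_eps_noise hε hR τ ω)).1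
  linarith

/-- Averaging over the signs `τ` diagonalises the squared covariance with the noise. -/
theorem sum_cov_sq_eq (w F : Ω → ℝ) (X : I → Ω → ℝ) :
    ∑ i, cov w F (X i) ^ 2 = av (fun _ => 1) (fun τ => cov w F (noise X τ) ^ 2) := by
  rw [← av_rademacher_sq]
  simp only [noise, cov_lin]

theorem sum_cov_sq_bound (hw : ∀ ω, 0 < w ω) (hR : ∀ τ ω, |noise X τ ω| ≤ R) {F : Ω → ℝ} {b : ℝ}
    (hF : ∀ ω, |F ω| ≤ b) : ∑ i, cov w F (X i) ^ 2 ≤ 4 * b ^ 2 * R ^ 2 := by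
  rw [sum_cov_sq_eq]
  refine av_le (fun _ => one_pos) fun τ => ?_
  have := cov_abs_le hw hF (hR τ)
  calc _ = |cov w F (noise X τ)| ^ 2 := (sq_abs _).symm
    _ ≤ (2 * b * R) ^ 2 := by gcongr
    _ = _ := by ring

theorem abs_cov_exp_le (hw : ∀ ω, 0 < w ω) (hε : 0 ≤ ε) (hR : ∀ τ ω, |noise X τ ω| ≤ R)
    (hεR : ε * R ≤ 1) {F : Ω → ℝ} {b : ℝ} (hF : ∀ ω, |F ω| ≤ b) (τ : I → Bool) :
    |cov w F (fun ω => exp (ε * noise X τ ω))| ≤ 4 * b * (ε * R) := by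
  have h1 : cov w F (fun ω => exp (ε * noise X τ ω))
      = cov w F (fun ω => exp (ε * noise X τ ω) - 1) := by
    have := cov_add_right w F (fun ω => exp (ε * noise X τ ω) - 1) (fun _ => 1)
    rw [cov_const_right hw] at this
    simpa using this
  rw [h1]
  have h2 := cov_abs_le hw hF (g := fun ω => exp (ε * noise X τ ω) - 1) (c := 2 * (ε * R))
    fun ω => by
      have h3 := abs_eps_noise hε hR τ ω
      exact (abs_exp_sub_one_le (h3.trans hεR)).trans (by linarith)
  linarith

/-- To leading order the tilt by `ε * noise` acts linearly on covariances. -/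
theorem av_cov_exp_sq_le (hw : ∀ ω, 0 < w ω) (hε : 0 ≤ ε) (hR0 : 0 ≤ R)
    (hR : ∀ τ ω, |noise X τ ω| ≤ R)
    (hεR : ε * R ≤ 1) {F : Ω → ℝ} {b : ℝ} (hF : ∀ ω, |F ω| ≤ b) :
    av (fun _ => 1) (fun τ => cov w F (fun ω => exp (ε * noise X τ ω)) ^ 2)
      ≤ ε ^ 2 * ∑ i, cov w F (X i) ^ 2 + 12 * b ^ 2 * R ^ 3 * ε ^ 3 := by
  have hb : 0 ≤ b := (abs_nonneg _).trans (hF (Classical.arbitrary Ω))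
  rw [sum_cov_sq_eq, ← av_mul_left]
  have h0 : ∀ τ : I → Bool, (0 : ℝ) < (fun _ : I → Bool => (1 : ℝ)) τ := fun _ => one_pos
  rw [← av_const h0 (12 * b ^ 2 * R ^ 3 * ε ^ 3), ← av_add]
  refine av_mono h0 fun τ => ?_
  set c := cov w F (noise X τ) with hc
  set ρ := cov w F (fun ω => exp (ε * noise X τ ω) - 1 - ε * noise X τ ω) with hρ
  have h1 : cov w F (fun ω => exp (ε * noise X τ ω)) = ε * c + ρ := by
    have e : (fun ω => exp (ε * noise X τ ω)) = fun ω =>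
        ((exp (ε * noise X τ ω) - 1 - ε * noise X τ ω) + 1) + ε * noise X τ ω := by
      funext ω; ring
    rw [e, cov_add_right, cov_add_right, cov_const_right hw, cov_mul_right]; ring
  have h2 : |ρ| ≤ 2 * b * (ε * R) ^ 2 := cov_abs_le hw hF fun ω => by
    have h3 := abs_eps_noise hε hR τ ω
    refine (abs_exp_sub_one_sub_id_le (h3.trans hεR)).trans ?_
    rw [← sq_abs]; gcongr
  have h3 : |c| ≤ 2 * b * R := cov_abs_le hw hF (hR τ)
  rw [h1]
  have h4 : c * ρ ≤ (2 * b * R) * (2 * b * (ε * R) ^ 2) := by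
    calc c * ρ ≤ |c * ρ| := le_abs_self _
      _ = |c| * |ρ| := abs_mul _ _
      _ ≤ _ := by gcongr
  have h5 : ρ ^ 2 ≤ (2 * b * (ε * R) ^ 2) ^ 2 := by rw [← sq_abs]; gcongr
  have h6 : (2 * b * (ε * R) ^ 2) ^ 2 ≤ 4 * b ^ 2 * (ε * R) ^ 3 := by
    have : (ε * R) ^ 4 ≤ (ε * R) ^ 3 := pow_le_pow_of_le_one (by positivity) hεR (by norm_num)
    nlinarith [sq_nonneg b]
  have h7 := mul_le_mul_of_nonneg_left h4 hε
  nlinarith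

theorem inv_one_sub_sq_le {x : ℝ} (hx0 : 0 ≤ x) (hx : x ≤ 1 / 2) :
    1 / (1 - x) ^ 2 ≤ 1 + 6 * x := by
  rw [div_le_iff₀ (by nlinarith)]
  nlinarith [mul_nonneg hx0 (sub_nonneg.2 hx), mul_nonneg (mul_nonneg hx0 hx0) (sub_nonneg.2 hx)]

/-- Law of total variance for one step: the variance between the tilted means is
`ε² * ∑ i, cov F (X i) ^ 2` up to third order in `ε`. -/
theorem cov_stepW_le (hw : ∀ ω, 0 < w ω) (hε : 0 ≤ ε) (hR0 : 0 ≤ R)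
    (hR : ∀ τ ω, |noise X τ ω| ≤ R)
    (hεR : ε * R ≤ 1 / 2) {F : Ω → ℝ} {b : ℝ} (hF : ∀ ω, |F ω| ≤ b) :
    cov (stepW X ε w) F F
      ≤ av (mass X ε w) (fun τ => cov (tilt w (fun ω => ε * noise X τ ω)) F F)
        + (ε ^ 2 * ∑ i, cov w F (X i) ^ 2 + 72 * b ^ 2 * R ^ 3 * ε ^ 3) := by
  have hb : 0 ≤ b := (abs_nonneg _).trans (hF (Classical.arbitrary Ω))
  have hx0 : 0 ≤ ε * R := by positivity
  have ha : 0 < 1 - ε * R := by linarith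
  have hE := av_exp_ge hw hε hR
  have hmix := cov_mix (W := fun τ => tilt w (fun ω => ε * noise X τ ω))
    (fun τ => tilt_pos hw _) F
  change cov (stepW X ε w) F F = av (mass X ε w) _ + cov (mass X ε w) _ _ at hmix
  rw [hmix]
  gcongr
  refine (cov_self_le (mass_pos hw X ε) _ (av w F)).trans ?_
  refine (av_mass_le hw ha hE fun τ => sq_nonneg _).trans ?_
  set S := ∑ i, cov w F (X i) ^ 2 with hS
  have hS0 : 0 ≤ S := Finset.sum_nonneg fun i _ => sq_nonneg _
  have hS1 : S ≤ 4 * b ^ 2 * R ^ 2 := sum_cov_sq_bound hw hR hF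
  have h1 : av (fun _ => 1) (fun τ => av w (fun ω => exp (ε * noise X τ ω)) *
      (av (tilt w (fun ω => ε * noise X τ ω)) F - av w F) ^ 2)
      ≤ av (fun _ => 1) (fun τ => cov w F (fun ω => exp (ε * noise X τ ω)) ^ 2)
        / (1 - ε * R) := by
    rw [div_eq_mul_inv, ← av_mul_right]
    refine av_mono (fun _ => one_pos) fun τ => ?_
    have hEτ := hE τ
    rw [av_tilt_sub hw]
    generalize av w (fun ω => exp (ε * noise X τ ω)) = E at hEτ ⊢
    have hE0 : 0 < E := ha.trans_le hEτ
    calc _ = cov w F (fun ω => exp (ε * noise X τ ω)) ^ 2 * E⁻¹ := by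
          generalize cov w F _ = c
          field_simp
      _ ≤ _ := by gcongr
  have h2 := av_cov_exp_sq_le hw hε hR0 hR (by linarith) hF
  rw [← hS] at h2
  calc _ ≤ (ε ^ 2 * S + 12 * b ^ 2 * R ^ 3 * ε ^ 3) / (1 - ε * R) / (1 - ε * R) := by
        gcongr; exact h1.trans (by gcongr)
    _ = (ε ^ 2 * S + 12 * b ^ 2 * R ^ 3 * ε ^ 3) * (1 / (1 - ε * R) ^ 2) := by
        field_simp
    _ ≤ (ε ^ 2 * S + 12 * b ^ 2 * R ^ 3 * ε ^ 3) * (1 + 6 * (ε * R)) := by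
        gcongr; exact inv_one_sub_sq_le hx0 hεR
    _ ≤ _ := by
        have e1 : ε ^ 2 * S * (6 * (ε * R)) ≤ ε ^ 2 * (4 * b ^ 2 * R ^ 2) * (6 * (ε * R)) := by
          gcongr
        have e2 : 12 * b ^ 2 * R ^ 3 * ε ^ 3 * (6 * (ε * R))
            ≤ 12 * b ^ 2 * R ^ 3 * ε ^ 3 * 3 := by
          gcongr; linarith
        nlinarith

theorem mul_log_taylor {y : ℝ} (hy : |y| ≤ 1 / 2) :
    (1 + y) * log (1 + y) - y ≤ y ^ 2 * (1 / 2 + 4 * |y|) := by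
  have h := abs_log_sub_add_sum_range_le (x := -y) (by rw [abs_neg]; linarith) 2
  simp only [Finset.sum_range_succ, Finset.sum_range_zero, abs_neg, sub_neg_eq_add] at h
  have h1 : |y| ^ 3 / (1 - |y|) ≤ 2 * |y| ^ 3 := by
    rw [div_le_iff₀ (by linarith)]
    nlinarith [pow_nonneg (abs_nonneg y) 3]
  have h2 := (abs_le.1 (h.trans h1)).2
  norm_num at h2
  have h3 : log (1 + y) ≤ y - y ^ 2 / 2 + 2 * |y| ^ 3 := by linarith
  have h4 := (abs_le.1 hy).1
  have h5 := (abs_le.1 hy).2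
  have h6 := mul_le_mul_of_nonneg_left h3 (by linarith : 0 ≤ 1 + y)
  have h7 : |y| ^ 3 = y ^ 2 * |y| := by rw [pow_succ, sq_abs]
  rw [h7] at h6
  have h8 : (1 + y) * (y ^ 2 * |y|) ≤ (3 / 2) * (y ^ 2 * |y|) := by
    gcongr; linarith
  have h9 : -(y ^ 3) ≤ y ^ 2 * |y| := by
    have := mul_le_mul_of_nonneg_left (neg_abs_le y) (sq_nonneg y)
    nlinarith
  nlinarith [mul_nonneg (sq_nonneg y) (abs_nonneg y)]

/-- Chain rule of entropy for one step: the entropy of the tilted means of `g` is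
`ε² * ∑ i, cov g (X i) ^ 2 / (2 ⟨g⟩)` up to third order in `ε`. -/
theorem ent_stepW_le (hw : ∀ ω, 0 < w ω) (hε : 0 ≤ ε) (hR0 : 0 ≤ R)
    (hR : ∀ τ ω, |noise X τ ω| ≤ R)
    (hεR : ε * R ≤ 1 / 2) {g : Ω → ℝ} {a b : ℝ} (ha : 0 < a) (hga : ∀ ω, a ≤ g ω)
    (hgb : ∀ ω, g ω ≤ b) (hεb : 8 * b * R / a * ε ≤ 1 / 2) :
    ent (stepW X ε w) g
      ≤ av (mass X ε w) (fun τ => ent (tilt w (fun ω => ε * noise X τ ω)) g)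
        + (ε ^ 2 * (∑ i, cov w g (X i) ^ 2) / (2 * av w g)
          + (4 * (8 * (8 * b * R / a) + 30 * R) * b ^ 2 * R ^ 2 + 240 * b ^ 2 * R ^ 3) / (2 * a)
            * ε ^ 3) := by
  have hg : ∀ ω, 0 < g ω := fun ω => ha.trans_le (hga ω)
  have hF : ∀ ω, |g ω| ≤ b := fun ω => by rw [abs_of_pos (hg ω)]; exact hgb ω
  have hb : 0 ≤ b := (abs_nonneg _).trans (hF (Classical.arbitrary Ω))
  have hx0 : 0 ≤ ε * R := by positivity
  have hc : 0 < 1 - ε * R := by linarith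
  have hE := av_exp_ge hw hε hR
  have hG0 : a ≤ av w g := le_av hw hga
  have hGpos : 0 < av w g := ha.trans_le hG0
  have hmix := ent_mix (W := fun τ => tilt w (fun ω => ε * noise X τ ω))
    (fun τ => tilt_pos hw _) g
  change ent (stepW X ε w) g = av (mass X ε w) _ + ent (mass X ε w) _ at hmix
  rw [hmix]
  gcongr
  have hGτ : ∀ τ, 0 < av (tilt w (fun ω => ε * noise X τ ω)) g := fun τ =>
    av_pos (tilt_pos hw _) hg
  refine (ent_le (mass_pos hw X ε) hGτ hGpos).trans ?_
  refine (av_mass_le hw hc hE fun τ => mul_log_div_nonneg (hGτ τ) hGpos).trans ?_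
  set S := ∑ i, cov w g (X i) ^ 2 with hS
  set κ := 8 * b * R / a with hκ
  have hκ0 : 0 ≤ κ := by positivity
  have hS0 : 0 ≤ S := Finset.sum_nonneg fun i _ => sq_nonneg _
  have hS1 : S ≤ 4 * b ^ 2 * R ^ 2 := sum_cov_sq_bound hw hR hF
  have h1 : av (fun _ => 1) (fun τ => av w (fun ω => exp (ε * noise X τ ω)) *
      (av (tilt w (fun ω => ε * noise X τ ω)) g *
        log (av (tilt w (fun ω => ε * noise X τ ω)) g / av w g)
        - av (tilt w (fun ω => ε * noise X τ ω)) g + av w g))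
      ≤ av (fun _ => 1) (fun τ => cov w g (fun ω => exp (ε * noise X τ ω)) ^ 2)
        * ((1 / 2 + 4 * (κ * ε)) / (av w g * (1 - ε * R))) := by
    rw [← av_mul_right]
    refine av_mono (fun _ => one_pos) fun τ => ?_
    have hEτ := hE τ
    have hsub := av_tilt_sub hw (fun ω => ε * noise X τ ω) g
    have hA := abs_cov_exp_le hw hε hR (by linarith) hF τ
    generalize cov w g (fun ω => exp (ε * noise X τ ω)) = A at hsub hA ⊢
    generalize av w (fun ω => exp (ε * noise X τ ω)) = E at hEτ hsub ⊢
    generalize av (tilt w (fun ω => ε * noise X τ ω)) g = G at hsub ⊢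
    generalize av w g = G₀ at hG0 hGpos hsub ⊢
    have hE0 : 0 < E := hc.trans_le hEτ
    set y := A / (G₀ * E) with hy
    have hGy : G = G₀ * (1 + y) := by
      rw [hy]; field_simp; field_simp at hsub; linarith
    have hyκ : |y| ≤ κ * ε := by
      rw [hy, abs_div, abs_of_pos (mul_pos hGpos hE0), div_le_iff₀ (mul_pos hGpos hE0)]
      have : a * (1 / 2) ≤ G₀ * E := by gcongr; linarith
      calc |A| ≤ 4 * b * (ε * R) := hA
        _ = κ * ε * (a * (1 / 2)) := by rw [hκ]; field_simp; ring
        _ ≤ _ := by gcongr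
    have ht := mul_log_taylor (hyκ.trans hεb)
    have hdiv : G / G₀ = 1 + y := by rw [hGy]; field_simp
    calc E * (G * log (G / G₀) - G + G₀)
        = E * (G₀ * ((1 + y) * log (1 + y) - y)) := by rw [hdiv, hGy]; ring
      _ ≤ E * (G₀ * (y ^ 2 * (1 / 2 + 4 * (κ * ε)))) := by
          gcongr; exact ht.trans (by gcongr)
      _ = A ^ 2 * ((1 / 2 + 4 * (κ * ε)) / (G₀ * E)) := by rw [hy]; field_simp
      _ ≤ _ := by gcongr
  have h2 := av_cov_exp_sq_le hw hε hR0 hR (by linarith) hF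
  rw [← hS] at h2
  calc _ ≤ (ε ^ 2 * S + 12 * b ^ 2 * R ^ 3 * ε ^ 3)
          * ((1 / 2 + 4 * (κ * ε)) / (av w g * (1 - ε * R))) / (1 - ε * R) := by
        gcongr; exact h1.trans (by gcongr)
    _ = (ε ^ 2 * S + 12 * b ^ 2 * R ^ 3 * ε ^ 3) * ((1 + 8 * (κ * ε))
          * (1 / (1 - ε * R) ^ 2)) / (2 * av w g) := by
        field_simp; ring
    _ ≤ (ε ^ 2 * S + 12 * b ^ 2 * R ^ 3 * ε ^ 3) * ((1 + 8 * (κ * ε))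
          * (1 + 6 * (ε * R))) / (2 * av w g) := by
        gcongr; exact inv_one_sub_sq_le hx0 hεR
    _ ≤ (ε ^ 2 * S + (4 * (8 * κ + 30 * R) * b ^ 2 * R ^ 2 + 240 * b ^ 2 * R ^ 3) * ε ^ 3)
          / (2 * av w g) := by
        gcongr
        have e0 : (1 + 8 * (κ * ε)) * (1 + 6 * (ε * R)) ≤ 1 + (8 * κ + 30 * R) * ε := by
          have : κ * ε * (ε * R) ≤ 1 / 2 * (ε * R) := by gcongr
          nlinarith
        have e0' : (1 + 8 * (κ * ε)) * (1 + 6 * (ε * R)) ≤ 20 := by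
          calc _ ≤ (1 + 8 * (1 / 2)) * (1 + 6 * (1 / 2)) := by gcongr
            _ = (20 : ℝ) := by norm_num
        have e1 : ε ^ 2 * S * ((1 + 8 * (κ * ε)) * (1 + 6 * (ε * R)))
            ≤ ε ^ 2 * S * (1 + (8 * κ + 30 * R) * ε) := by gcongr
        have e2 : ε ^ 2 * S * ((8 * κ + 30 * R) * ε)
            ≤ ε ^ 2 * (4 * b ^ 2 * R ^ 2) * ((8 * κ + 30 * R) * ε) := by gcongr
        have e3 : 12 * b ^ 2 * R ^ 3 * ε ^ 3 * ((1 + 8 * (κ * ε)) * (1 + 6 * (ε * R)))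
            ≤ 12 * b ^ 2 * R ^ 3 * ε ^ 3 * 20 := by gcongr
        nlinarith
    _ = ε ^ 2 * S / (2 * av w g) + (4 * (8 * κ + 30 * R) * b ^ 2 * R ^ 2 + 240 * b ^ 2 * R ^ 3)
          / (2 * av w g) * ε ^ 3 := by ring
    _ ≤ _ := by gcongr

end Step

/-! ### Propagation of the covariance and entropy bounds -/

section Evolution

variable {Ω Λ I : Type*} [Fintype Ω] [Nonempty Ω] [Fintype Λ] [Fintype I] [DecidableEq I]

/-- The inequality `ent g ≤ A * ⟨d⟩`, uniformly over all external fields. Here `g` is the function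
whose entropy is estimated and `d` is the density of the Dirichlet form. -/
def EntBound (S : Λ → Ω → ℝ) (g d w : Ω → ℝ) (A : ℝ) : Prop :=
  ∀ h : Λ → ℝ, ent (tilt w (lin S h)) g ≤ A * av (tilt w (lin S h)) d

/-- The linear statistics `∑ x, U i x * S x` along the rows of `U`. -/
def rows (S : Λ → Ω → ℝ) (U : I → Λ → ℝ) : I → Ω → ℝ := fun i => lin S (U i)

theorem eps_noise_rows (S : Λ → Ω → ℝ) (U : I → Λ → ℝ) (ε : ℝ) (τ : I → Bool) :
    (fun ω => ε * noise (rows S U) τ ω) = lin S (fun x => ε * ∑ i, sg (τ i) * U i x) := by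
  rw [lin_smul]
  funext ω
  simp only [noise, lin, rows, Finset.mul_sum, Finset.sum_mul]
  rw [Finset.sum_comm]
  simp only [mul_assoc]

theorem sum_cov_rows_le {S : Λ → Ω → ℝ} {U : I → Λ → ℝ} {δ : ℝ}
    (hU : ∀ c : Λ → ℝ, ∑ i, (∑ x, U i x * c x) ^ 2 ≤ δ * ∑ x, c x ^ 2) (w F : Ω → ℝ) :
    ∑ i, cov w F (rows S U i) ^ 2 ≤ δ * ∑ x, cov w F (S x) ^ 2 := by
  simp only [rows, cov_lin]
  exact hU _

theorem CovBound.mono {S : Λ → Ω → ℝ} {w : Ω → ℝ} {K K' : ℝ} (h : CovBound S w K) (hK : K ≤ K') :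
    CovBound S w K' := fun k v => (h k v).trans (by gcongr)

theorem EntBound.mono {S : Λ → Ω → ℝ} {g d w : Ω → ℝ} {A A' : ℝ} (hw : ∀ ω, 0 < w ω)
    (hd : ∀ ω, 0 ≤ d ω) (h : EntBound S g d w A) (hA : A ≤ A') : EntBound S g d w A' :=
  fun k => (h k).trans (mul_le_mul_of_nonneg_right hA (le_av (tilt_pos hw _) hd))

variable {S : Λ → Ω → ℝ} {U : I → Λ → ℝ} {w : Ω → ℝ} {δ δ' ε R K : ℝ}

/-- In one step, of duration `ε²`, the covariance bound `K` grows by at most `ε² δ' K²`; the excess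
`δ' - δ` absorbs the third-order error. -/
theorem CovBound.step (hS : ∀ x ω, |S x ω| ≤ 1)
    (hU : ∀ c : Λ → ℝ, ∑ i, (∑ x, U i x * c x) ^ 2 ≤ δ * ∑ x, c x ^ 2) (hδ : 0 ≤ δ)
    (hw : ∀ ω, 0 < w ω) (hε : 0 ≤ ε) (hR0 : 0 ≤ R) (hR : ∀ τ ω, |noise (rows S U) τ ω| ≤ R)
    (hεR : ε * R ≤ 1 / 2) (hK1 : 1 ≤ K) (hK : CovBound S w K)
    (hsmall : 72 * Fintype.card Λ * R ^ 3 * ε ≤ δ' - δ) :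
    CovBound S (stepW (rows S U) ε w) (K + ε ^ 2 * δ' * K ^ 2) := by
  intro h v
  rw [← stepW_tilt]
  have hw1 := tilt_pos hw (lin S h)
  have hK' := hK.tilt h
  generalize IsingLSI.tilt w (lin S h) = w1 at hw1 hK'
  set s := ∑ x, v x ^ 2 with hs
  have hs0 : 0 ≤ s := Finset.sum_nonneg fun x _ => sq_nonneg _
  have hF : ∀ ω, |lin S v ω| ≤ ∑ x, |v x| := fun ω => by
    refine (Finset.abs_sum_le_sum_abs _ _).trans (Finset.sum_le_sum fun x _ => ?_)
    rw [abs_mul]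
    exact mul_le_of_le_one_right (abs_nonneg _) (hS x ω)
  have hb2 : (∑ x, |v x|) ^ 2 ≤ Fintype.card Λ * s := by
    have := sq_sum_le_card_mul_sum_sq (s := Finset.univ) (f := fun x => |v x|)
    simpa only [sq_abs, Finset.card_univ] using this
  refine (cov_stepW_le hw1 hε hR0 hR hεR hF).trans ?_
  have h1 : av (mass (rows S U) ε w1)
      (fun τ => cov (IsingLSI.tilt w1 (fun ω => ε * noise (rows S U) τ ω)) (lin S v) (lin S v))
      ≤ K * s := av_le (mass_pos hw1 _ _) fun τ => by
    rw [eps_noise_rows]; exact hK' _ v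
  have h2 : ∑ i, cov w1 (lin S v) (rows S U i) ^ 2 ≤ δ * (K ^ 2 * s) :=
    (sum_cov_rows_le hU _ _).trans
      (mul_le_mul_of_nonneg_left (hK'.sum_cov_sq_le hw1 (by linarith) v) hδ)
  have h3 : 72 * (∑ x, |v x|) ^ 2 * R ^ 3 * ε ^ 3 ≤ ε ^ 2 * ((δ' - δ) * (K ^ 2 * s)) := by
    calc _ ≤ 72 * (Fintype.card Λ * s) * R ^ 3 * ε ^ 3 := by gcongr
      _ = ε ^ 2 * ((72 * Fintype.card Λ * R ^ 3 * ε) * s) := by ring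
      _ ≤ ε ^ 2 * ((δ' - δ) * (K ^ 2 * s)) := by
        have : s ≤ K ^ 2 * s := le_mul_of_one_le_left hs0 (by nlinarith)
        have h0 : 0 ≤ 72 * Fintype.card Λ * R ^ 3 * ε := by positivity
        gcongr
        exact h0.trans hsmall
  have h4 := mul_le_mul_of_nonneg_left h2 (sq_nonneg ε)
  calc _ ≤ K * s + (ε ^ 2 * (δ * (K ^ 2 * s)) + ε ^ 2 * ((δ' - δ) * (K ^ 2 * s))) := by
        gcongr
    _ = _ := by ring

/-- One step decreases the average of a nonnegative function by at most a factor `1 + O(ε)`. -/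
theorem av_le_av_stepW {X : I → Ω → ℝ} (hw : ∀ ω, 0 < w ω) (hε : 0 ≤ ε) (hR0 : 0 ≤ R)
    (hR : ∀ τ ω, |noise X τ ω| ≤ R) (hεR : ε * R ≤ 1 / 2) {d : Ω → ℝ} (hd : ∀ ω, 0 ≤ d ω) :
    av w d ≤ (1 + 6 * (ε * R)) * av (stepW X ε w) d := by
  have hx0 : 0 ≤ ε * R := by positivity
  have hD : 0 ≤ av w d := le_av hw hd
  have hmix := av_mix (W := fun τ => tilt w (fun ω => ε * noise X τ ω))
    (fun τ => tilt_pos hw _) d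
  change av (stepW X ε w) d = av (mass X ε w) _ at hmix
  rw [hmix, ← av_mul_left]
  refine le_av (mass_pos hw X ε) fun τ => ?_
  have hE0 : 0 < av w (fun ω => exp (ε * noise X τ ω)) := av_pos hw fun ω => exp_pos _
  have hE : av w (fun ω => exp (ε * noise X τ ω)) ≤ 1 + 2 * (ε * R) := av_le hw fun ω => by
    have h3 := abs_eps_noise hε hR τ ω
    have := (abs_le.1 (abs_exp_sub_one_le (h3.trans (by linarith)))).2
    linarith
  have hN : av w d * (1 - ε * R) ≤ av w (fun ω => d ω * exp (ε * noise X τ ω)) := by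
    rw [← av_mul_right]
    refine av_mono hw fun ω => mul_le_mul_of_nonneg_left ?_ (hd ω)
    have h3 := (abs_le.1 (abs_eps_noise hε hR τ ω)).1
    have := add_one_le_exp (ε * noise X τ ω)
    linarith
  rw [av_tilt hw, ← mul_div_assoc, le_div_iff₀ hE0]
  calc _ ≤ av w d * (1 + 2 * (ε * R)) := by gcongr
    _ ≤ av w d * ((1 + 6 * (ε * R)) * (1 - ε * R)) := by gcongr; nlinarith
    _ = (1 + 6 * (ε * R)) * (av w d * (1 - ε * R)) := by ring
    _ ≤ _ := by gcongr

/-- In one step, of duration `ε²`, the entropy constant `A` grows by at most `ε² δ' K A`; the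
excess `δ' - δ` and the lower bound `θ ≤ d` absorb the third-order error. -/
theorem EntBound.step
    (hU : ∀ c : Λ → ℝ, ∑ i, (∑ x, U i x * c x) ^ 2 ≤ δ * ∑ x, c x ^ 2) (hδ : 0 ≤ δ)
    (hw : ∀ ω, 0 < w ω) (hε : 0 ≤ ε) (hR0 : 0 ≤ R) (hR : ∀ τ ω, |noise (rows S U) τ ω| ≤ R)
    (hεR : ε * R ≤ 1 / 2) (hK1 : 1 ≤ K) (hK : CovBound S w K)
    {g d : Ω → ℝ} {a b θ A : ℝ} (ha : 0 < a) (hga : ∀ ω, a ≤ g ω) (hgb : ∀ ω, g ω ≤ b)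
    (hθ : 0 < θ) (hd : ∀ ω, θ ≤ d ω) (hA1 : 1 / 2 ≤ A) (hA : EntBound S g d w A)
    (hεb : 8 * b * R / a * ε ≤ 1 / 2)
    (hs1 : 6 * R * δ * ε ≤ (δ' - δ) / 2)
    (hs2 : (4 * (8 * (8 * b * R / a) + 30 * R) * b ^ 2 * R ^ 2 + 240 * b ^ 2 * R ^ 3) / (2 * a) * ε
      ≤ (δ' - δ) * θ / 4) :
    EntBound S g d (stepW (rows S U) ε w) (A * (1 + ε ^ 2 * δ' * K)) := by
  intro h
  rw [← stepW_tilt]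
  have hw1 := tilt_pos hw (lin S h)
  have hK' := hK.tilt h
  have hA' : EntBound S g d (tilt w (lin S h)) A := fun k => by
    rw [tilt_tilt, ← lin_add]; exact hA _
  have hg : ∀ ω, 0 < g ω := fun ω => ha.trans_le (hga ω)
  have hd0 : ∀ ω, 0 ≤ d ω := fun ω => hθ.le.trans (hd ω)
  generalize IsingLSI.tilt w (lin S h) = w1 at hw1 hK' hA'
  refine (ent_stepW_le hw1 hε hR0 hR hεR ha hga hgb hεb).trans ?_
  set C := (4 * (8 * (8 * b * R / a) + 30 * R) * b ^ 2 * R ^ 2 + 240 * b ^ 2 * R ^ 3) / (2 * a)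
  have hmix := av_mix (W := fun τ => tilt w1 (fun ω => ε * noise (rows S U) τ ω))
    (fun τ => tilt_pos hw1 _) d
  change av (stepW (rows S U) ε w1) d = av (mass (rows S U) ε w1) _ at hmix
  have h1 : av (mass (rows S U) ε w1)
      (fun τ => ent (tilt w1 (fun ω => ε * noise (rows S U) τ ω)) g)
      ≤ A * av (stepW (rows S U) ε w1) d := by
    rw [hmix, ← av_mul_left]
    refine av_mono (mass_pos hw1 _ _) fun τ => ?_
    rw [eps_noise_rows]; exact hA' _
  have hG : 0 < av w1 g := av_pos hw1 hg
  have h2 : ∑ i, cov w1 g (rows S U i) ^ 2 ≤ δ * (2 * K * av w1 g * ent w1 g) :=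
    (sum_cov_rows_le hU _ _).trans
      (mul_le_mul_of_nonneg_left (hK'.stability hw1 (by linarith) hg) hδ)
  have h3 : ent w1 g ≤ A * av w1 d := by
    have := hA' (fun _ => 0); rwa [lin_zero, tilt_zero] at this
  have h4 := av_le_av_stepW hw1 hε hR0 hR hεR hd0
  have h5 : θ ≤ av (stepW (rows S U) ε w1) d := le_av (stepW_pos hw1 _ _) hd
  set D := av (stepW (rows S U) ε w1) d with hD
  have hD0 : 0 < D := hθ.trans_le h5
  have hA0 : 0 < A := by linarith
  have hK0 : 0 < K := by linarith
  have h6 : ε ^ 2 * (∑ i, cov w1 g (rows S U i) ^ 2) / (2 * av w1 g)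
      ≤ ε ^ 2 * (δ * K * A * D * (1 + 6 * (ε * R))) := by
    calc _ ≤ ε ^ 2 * (δ * (2 * K * av w1 g * ent w1 g)) / (2 * av w1 g) := by gcongr
      _ = ε ^ 2 * (δ * K * ent w1 g) := by
        generalize ent w1 g = e
        field_simp
      _ ≤ ε ^ 2 * (δ * K * (A * ((1 + 6 * (ε * R)) * D))) := by
        gcongr; exact h3.trans (by gcongr)
      _ = _ := by ring
  have hAK : 1 / 2 * 1 ≤ A * K := by gcongr
  have hδδ : 0 ≤ (δ' - δ) / 2 := le_trans (by positivity) hs1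
  have h7 : C * ε ≤ (δ' - δ) / 2 * (A * K * D) := by
    refine hs2.trans ?_
    calc _ = (δ' - δ) / 2 * (1 / 2 * 1 * θ) := by ring
      _ ≤ _ := by gcongr
  have h8 : 6 * R * δ * ε * (A * K * D) ≤ (δ' - δ) / 2 * (A * K * D) := by gcongr
  have h9 : ε ^ 2 * (δ * K * A * D * (1 + 6 * (ε * R))) + C * ε ^ 3
      ≤ ε ^ 2 * (δ' * (A * K * D)) := by
    calc _ = ε ^ 2 * (δ * (A * K * D) + 6 * R * δ * ε * (A * K * D) + C * ε) := by ring
      _ ≤ ε ^ 2 * (δ * (A * K * D) + (δ' - δ) / 2 * (A * K * D) + (δ' - δ) / 2 * (A * K * D)) := by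
        gcongr
      _ = _ := by ring
  calc _ ≤ A * D + (ε ^ 2 * (δ * K * A * D * (1 + 6 * (ε * R))) + C * ε ^ 3) := by gcongr
    _ ≤ A * D + ε ^ 2 * (δ' * (A * K * D)) := by gcongr
    _ = _ := by ring

/-- One Euler step for `y' = y²` stays below the exact solution. -/
theorem riccati {u y : ℝ} (hy : 0 ≤ y) (huy : 0 < u - y) : u⁻¹ * (1 + y * u⁻¹) ≤ (u - y)⁻¹ := by
  have hu : 0 < u := by linarith
  rw [← one_div (u - y), le_div_iff₀ huy]
  have : u⁻¹ * (1 + y * u⁻¹) * (u - y) = 1 - (y * u⁻¹) ^ 2 := by field_simp; ring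
  rw [this]; nlinarith [sq_nonneg (y * u⁻¹)]

/-- Both bounds after `k` steps: they are dominated by the solution `(1 - δ' t)⁻¹` of the
Riccati equation at time `t = k ε²`. -/
theorem evolution (hS : ∀ x ω, |S x ω| ≤ 1)
    (hU : ∀ c : Λ → ℝ, ∑ i, (∑ x, U i x * c x) ^ 2 ≤ δ * ∑ x, c x ^ 2) (hδ : 0 ≤ δ)
    (hw : ∀ ω, 0 < w ω) (hε : 0 ≤ ε) (hR0 : 0 ≤ R) (hR : ∀ τ ω, |noise (rows S U) τ ω| ≤ R)
    (hεR : ε * R ≤ 1 / 2) (hK : CovBound S w 1)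
    {g d : Ω → ℝ} {a b θ : ℝ} (ha : 0 < a) (hga : ∀ ω, a ≤ g ω) (hgb : ∀ ω, g ω ≤ b)
    (hθ : 0 < θ) (hd : ∀ ω, θ ≤ d ω) (hA : EntBound S g d w (1 / 2))
    (hδ' : 0 ≤ δ')
    (hsmall : 72 * Fintype.card Λ * R ^ 3 * ε ≤ δ' - δ)
    (hεb : 8 * b * R / a * ε ≤ 1 / 2)
    (hs1 : 6 * R * δ * ε ≤ (δ' - δ) / 2)
    (hs2 : (4 * (8 * (8 * b * R / a) + 30 * R) * b ^ 2 * R ^ 2 + 240 * b ^ 2 * R ^ 3) / (2 * a) * ε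
      ≤ (δ' - δ) * θ / 4) (k : ℕ) (hk : 0 < 1 - δ' * (k * ε ^ 2)) :
    (∀ ω, 0 < (stepW (rows S U) ε)^[k] w ω) ∧
    CovBound S ((stepW (rows S U) ε)^[k] w) (1 - δ' * (k * ε ^ 2))⁻¹ ∧
    EntBound S g d ((stepW (rows S U) ε)^[k] w) (1 / 2 * (1 - δ' * (k * ε ^ 2))⁻¹) := by
  induction k with
  | zero => simpa using ⟨hw, hK, by simpa using hA⟩
  | succ k ih =>
    set u := 1 - δ' * (k * ε ^ 2) with hu
    have hy : 0 ≤ δ' * ε ^ 2 := by positivity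
    have huy : 1 - δ' * ((k + 1 : ℕ) * ε ^ 2) = u - δ' * ε ^ 2 := by rw [hu]; push_cast; ring
    rw [huy] at hk ⊢
    have hu0 : 0 < u := by linarith
    obtain ⟨h1, h2, h3⟩ := ih hu0
    have hu1 : 1 ≤ u⁻¹ := (one_le_inv₀ hu0).2 (by
      have : 0 ≤ δ' * (k * ε ^ 2) := by positivity
      linarith)
    have hric := riccati hy hk
    rw [Function.iterate_succ_apply']
    refine ⟨stepW_pos h1 _ _, ?_, ?_⟩
    · refine (CovBound.step hS hU hδ h1 hε hR0 hR hεR hu1 h2 hsmall).mono (le_trans ?_ hric)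
      exact le_of_eq (by ring)
    · refine (EntBound.step hU hδ h1 hε hR0 hR hεR hu1 h2 ha hga hgb hθ hd (by linarith) h3 hεb
        hs1 hs2).mono (stepW_pos h1 _ _) (fun ω => hθ.le.trans (hd ω)) ?_
      calc _ = 1 / 2 * (u⁻¹ * (1 + δ' * ε ^ 2 * u⁻¹)) := by ring
        _ ≤ _ := by gcongr

end Evolution

/-! ### Independent spins -/

section TwoPoint

/-- Second-order criterion for a minimum with value `0` at `b`, on the positive half-line. -/
theorem nonneg_of_deriv2_nonneg {φ φ' φ'' : ℝ → ℝ} {a b : ℝ} (ha : 0 < a) (hb : 0 < b)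
    (h1 : ∀ t, 0 < t → HasDerivAt φ (φ' t) t) (h2 : ∀ t, 0 < t → HasDerivAt φ' (φ'' t) t)
    (h3 : ∀ t, 0 < t → 0 ≤ φ'' t) (hφ : φ b = 0) (hφ' : φ' b = 0) : 0 ≤ φ a := by
  rcases lt_trichotomy a b with hab | hab | hab
  · obtain ⟨c, hc, hce⟩ := exists_hasDerivAt_eq_slope φ φ' hab
      (fun t ht => (h1 t (ha.trans_le ht.1)).continuousAt.continuousWithinAt)
      (fun t ht => h1 t (ha.trans ht.1))
    have hc0 : 0 < c := ha.trans hc.1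
    obtain ⟨e, he, hee⟩ := exists_hasDerivAt_eq_slope φ' φ'' hc.2
      (fun t ht => (h2 t (hc0.trans_le ht.1)).continuousAt.continuousWithinAt)
      (fun t ht => h2 t (hc0.trans ht.1))
    have hpos := h3 e (hc0.trans he.1)
    rw [hφ', eq_div_iff (by linarith [hc.2])] at hee
    rw [hφ, eq_div_iff (by linarith)] at hce
    have h4 : 0 ≤ φ'' e * (b - c) := mul_nonneg hpos (by linarith [hc.2])
    have h5 : φ' c * (b - a) ≤ 0 := mul_nonpos_of_nonpos_of_nonneg (by linarith) (by linarith)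
    linarith
  · rw [hab, hφ]
  · obtain ⟨c, hc, hce⟩ := exists_hasDerivAt_eq_slope φ φ' hab
      (fun t ht => (h1 t (hb.trans_le ht.1)).continuousAt.continuousWithinAt)
      (fun t ht => h1 t (hb.trans ht.1))
    have hc0 : 0 < c := hb.trans hc.1
    obtain ⟨e, he, hee⟩ := exists_hasDerivAt_eq_slope φ' φ'' hc.1
      (fun t ht => (h2 t (hb.trans_le ht.1)).continuousAt.continuousWithinAt)
      (fun t ht => h2 t (hb.trans ht.1))
    have hpos := h3 e (hb.trans he.1)
    rw [hφ', eq_div_iff (by linarith [hc.1])] at hee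
    rw [hφ, eq_div_iff (by linarith)] at hce
    have h4 : 0 ≤ φ'' e * (c - b) := mul_nonneg hpos (by linarith [hc.1])
    have h5 : 0 ≤ φ' c * (a - b) := mul_nonneg (by linarith) (by linarith)
    linarith

/-- Logarithmic Sobolev inequality on two points, for an arbitrary biased measure. -/
theorem two_point_lsi {p q a b : ℝ} (hp : 0 < p) (hq : 0 < q) (hpq : p + q = 1)
    (ha : 0 < a) (hb : 0 < b) :
    p * (a ^ 2 * log (a ^ 2)) + q * (b ^ 2 * log (b ^ 2))
      - (p * a ^ 2 + q * b ^ 2) * log (p * a ^ 2 + q * b ^ 2) ≤ 1 / 2 * (a - b) ^ 2 := by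
  have key := nonneg_of_deriv2_nonneg (a := a) (b := b)
    (φ := fun t => 1 / 2 * (t - b) ^ 2 - (p * (t ^ 2 * (2 * log t)) + q * (b ^ 2 * (2 * log b))
      - (p * t ^ 2 + q * b ^ 2) * log (p * t ^ 2 + q * b ^ 2)))
    (φ' := fun t => (t - b) - 4 * p * (t * log t) + 2 * p * (t * log (p * t ^ 2 + q * b ^ 2)))
    (φ'' := fun t => 1 - 4 * p * (log t + 1) + 2 * p * (log (p * t ^ 2 + q * b ^ 2)
      + t * (2 * p * t / (p * t ^ 2 + q * b ^ 2)))) ha hb ?_ ?_ ?_ ?_ ?_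
  · simp only [log_pow, Nat.cast_ofNat]
    linarith
  · intro t ht
    have hm : 0 < p * t ^ 2 + q * b ^ 2 := by positivity
    have d1 := hasDerivAt_log ht.ne'
    have d2 : HasDerivAt (fun t : ℝ => t ^ 2) (2 * t) t := by simpa using hasDerivAt_pow 2 t
    have d3 : HasDerivAt (fun t : ℝ => p * t ^ 2 + q * b ^ 2) (p * (2 * t)) t :=
      (d2.const_mul p).add_const _
    have d4 := d3.mul (d3.log hm.ne')
    have d5 : HasDerivAt (fun t : ℝ => (t - b) ^ 2) (2 * (t - b)) t := by
      simpa using ((hasDerivAt_id t).sub_const b).fun_pow 2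
    have := (d5.const_mul (1 / 2)).sub
      ((((d2.mul (d1.const_mul 2)).const_mul p).add_const (q * (b ^ 2 * (2 * log b)))).sub d4)
    refine this.congr_deriv ?_
    field_simp
    ring
  · intro t ht
    have hm : 0 < p * t ^ 2 + q * b ^ 2 := by positivity
    have d1 := hasDerivAt_log ht.ne'
    have d2 : HasDerivAt (fun t : ℝ => t ^ 2) (2 * t) t := by simpa using hasDerivAt_pow 2 t
    have d3 : HasDerivAt (fun t : ℝ => p * t ^ 2 + q * b ^ 2) (p * (2 * t)) t :=
      (d2.const_mul p).add_const _
    have d0 := hasDerivAt_id t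
    have := ((d0.sub_const b).sub ((d0.mul d1).const_mul (4 * p))).add
      ((d0.mul (d3.log hm.ne')).const_mul (2 * p))
    refine this.congr_deriv ?_
    simp only [id]
    field_simp
  · intro t ht
    have hm : 0 < p * t ^ 2 + q * b ^ 2 := by positivity
    set m := p * t ^ 2 + q * b ^ 2 with hmdef
    set y := p * t ^ 2 / m with hy
    have hy0 : 0 < y := by positivity
    have hl : log y = log p + 2 * log t - log m := by
      rw [hy, log_div (by positivity) hm.ne', log_mul hp.ne' (by positivity), log_pow]
      push_cast; ring
    have h1 := log_le_sub_one_of_pos (show 0 < 2 * y by positivity)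
    rw [log_mul two_ne_zero hy0.ne'] at h1
    have h2 := mul_log_sub_add_one_nonneg (show 0 < 2 * p by positivity)
    rw [log_mul two_ne_zero hp.ne'] at h2
    have h3 : t * (2 * p * t / m) = 2 * y := by rw [hy]; ring
    rw [h3]
    have h4 := mul_le_mul_of_nonneg_left h1 hp.le
    have h5 : log m = log p + 2 * log t - log y := by linarith
    rw [h5]
    nlinarith
  · have : p * b ^ 2 + q * b ^ 2 = b ^ 2 := by rw [← add_mul, hpq, one_mul]
    simp only [this, log_pow]
    push_cast
    linear_combination (-2 * b ^ 2 * log b) * hpq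
  · have : p * b ^ 2 + q * b ^ 2 = b ^ 2 := by rw [← add_mul, hpq, one_mul]
    simp only [this, log_pow]
    push_cast
    ring

/-- Minkowski's inequality for the quadratic mean over two points. -/
theorem minkowski_two {p q a b c d : ℝ} (hp : 0 < p) (hq : 0 < q) :
    (√(p * a ^ 2 + q * b ^ 2) - √(p * c ^ 2 + q * d ^ 2)) ^ 2
      ≤ p * (a - c) ^ 2 + q * (b - d) ^ 2 := by
  have h1 : 0 ≤ p * a ^ 2 + q * b ^ 2 := by positivity
  have h2 : 0 ≤ p * c ^ 2 + q * d ^ 2 := by positivity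
  have h3 : p * (a * c) + q * (b * d) ≤ √(p * a ^ 2 + q * b ^ 2) * √(p * c ^ 2 + q * d ^ 2) := by
    rw [← sqrt_mul h1]
    refine le_sqrt_of_sq_le ?_
    have : 0 ≤ p * q * (a * d - b * c) ^ 2 := by positivity
    linarith
  have h4 := sq_sqrt h1
  have h5 := sq_sqrt h2
  nlinarith

end TwoPoint

section Product

theorem av_equiv {Ω Ω' : Type*} [Fintype Ω] [Fintype Ω'] (e : Ω ≃ Ω') (w f : Ω' → ℝ) :
    av (fun ω => w (e ω)) (fun ω => f (e ω)) = av w f := by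
  simp only [av]
  rw [e.sum_comp (fun ω => w ω * f ω), e.sum_comp]

theorem ent_equiv {Ω Ω' : Type*} [Fintype Ω] [Fintype Ω'] (e : Ω ≃ Ω') (w g : Ω' → ℝ) :
    ent (fun ω => w (e ω)) (fun ω => g (e ω)) = ent w g := by
  simp only [ent, av_equiv e w g, av_equiv e w (fun ω => g ω * log (g ω))]

theorem av_prod {Ω Ω' : Type*} [Fintype Ω] [Fintype Ω'] (p : Ω → ℝ) (q : Ω' → ℝ)
    (f : Ω × Ω' → ℝ) :
    av (fun z : Ω × Ω' => p z.1 * q z.2) f = av q (fun y => av p (fun x => f (x, y))) := by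
  simp only [av]
  rw [Fintype.sum_prod_type, Fintype.sum_prod_type]
  simp only [← Finset.mul_sum, ← Finset.sum_mul, ← mul_div_assoc, ← Finset.sum_div]
  rw [div_div, Finset.sum_comm]
  congr 1
  simp only [Finset.mul_sum]
  exact Finset.sum_congr rfl fun y _ => Finset.sum_congr rfl fun x _ => by ring

/-- Chain rule for the entropy of a product measure. -/
theorem ent_prod {Ω Ω' : Type*} [Fintype Ω] [Fintype Ω'] (p : Ω → ℝ) (q : Ω' → ℝ)
    (g : Ω × Ω' → ℝ) :
    ent (fun z : Ω × Ω' => p z.1 * q z.2) g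
      = av q (fun y => ent p (fun x => g (x, y))) + ent q (fun y => av p (fun x => g (x, y))) := by
  simp only [ent, av_prod, av_sub]; ring

theorem av_bool (p f : Bool → ℝ) :
    av p f = p true / (p true + p false) * f true + p false / (p true + p false) * f false := by
  simp only [av, Fintype.sum_bool]; ring

/-- `σ` with the spin at `x` negated. -/
def flip {Λ : Type*} [DecidableEq Λ] (σ : Λ → Bool) (x : Λ) : Λ → Bool :=
  Function.update σ x (!(σ x))

/-- The product weight on spin configurations with one-site weights `p x`. -/
def prodW {Λ : Type*} [Fintype Λ] (p : Λ → Bool → ℝ) (σ : Λ → Bool) : ℝ := ∏ x, p x (σ x)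

theorem prodW_pos {Λ : Type*} [Fintype Λ] {p : Λ → Bool → ℝ} (hp : ∀ x b, 0 < p x b)
    (σ : Λ → Bool) : 0 < prodW p σ := Finset.prod_pos fun _ _ => hp _ _

/-- Tensorisation: the two-point inequality passes to product measures with the same constant. -/
theorem prod_lsi (Λ : Type*) [Fintype Λ] : ∀ [DecidableEq Λ] (p : Λ → Bool → ℝ)
    (_ : ∀ x b, 0 < p x b) (f : (Λ → Bool) → ℝ) (_ : ∀ σ, 0 < f σ),
    ent (prodW p) (fun σ => f σ ^ 2)
      ≤ 1 / 2 * ∑ x, av (prodW p) (fun σ => (f σ - f (flip σ x)) ^ 2) := by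
  refine Fintype.induction_empty_option (P := fun Λ _ => ∀ [DecidableEq Λ] (p : Λ → Bool → ℝ)
    (_ : ∀ x b, 0 < p x b) (f : (Λ → Bool) → ℝ) (_ : ∀ σ, 0 < f σ),
    ent (prodW p) (fun σ => f σ ^ 2)
      ≤ 1 / 2 * ∑ x, av (prodW p) (fun σ => (f σ - f (flip σ x)) ^ 2)) ?_ ?_ ?_ Λ
  · intro α β _ e ih _ p hp f hf
    let _ : Fintype α := Fintype.ofEquiv β e.symm
    let _ : DecidableEq α := fun a b => decidable_of_iff (e a = e b) e.injective.eq_iff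
    let E : (α → Bool) ≃ (β → Bool) := e.arrowCongr (Equiv.refl Bool)
    have hE : ∀ σ x, E σ (e x) = σ x := fun σ x => by simp [E]
    have hw : prodW (fun x b => p (e x) b) = fun σ => prodW p (E σ) := by
      funext σ
      simp only [prodW]
      rw [← e.prod_comp]
      simp only [hE]
    have hflip : ∀ σ x, E (flip σ x) = flip (E σ) (e x) := by
      intro σ x
      funext y
      obtain ⟨y, rfl⟩ := e.surjective y
      rw [hE]
      by_cases h : y = x
      · subst h; simp [flip, hE]
      · simp [flip, Function.update_of_ne h, Function.update_of_ne (e.injective.ne h), hE]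
    have := ih (fun x b => p (e x) b) (fun x b => hp _ _) (fun σ => f (E σ)) (fun σ => hf _)
    simp only [hflip] at this
    rw [hw, ent_equiv E (prodW p) (fun σ => f σ ^ 2)] at this
    refine this.trans (le_of_eq ?_)
    rw [← e.sum_comp]
    congr 1
    exact Finset.sum_congr rfl fun x _ =>
      av_equiv E (prodW p) (fun σ => (f σ - f (flip σ (e x))) ^ 2)
  · intro _ p hp f hf
    simp [ent, av, prodW]
  · intro α _ ih _ p hp f hf
    let _ : DecidableEq α := fun a b => decidable_of_iff (some a = some b) Option.some_inj
    let E : (Option α → Bool) ≃ Bool × (α → Bool) := Equiv.piOptionEquivProd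
    let w : Bool × (α → Bool) → ℝ := fun z => p none z.1 * prodW (fun x => p (some x)) z.2
    let f' : Bool × (α → Bool) → ℝ := fun z => f (E.symm z)
    have hf' : ∀ z, 0 < f' z := fun z => hf _
    have hw : prodW p = fun σ => w (E σ) := by
      funext σ
      simp [prodW, w, E, Fintype.prod_option, Equiv.piOptionEquivProd]
    have hff : f = fun σ => f' (E σ) := by funext σ; simp [f']
    have hflip0 : ∀ σ, E (flip σ none) = (!(E σ).1, (E σ).2) := by
      intro σ
      refine Prod.ext ?_ (funext fun y => ?_) <;> simp [flip, E, Equiv.piOptionEquivProd]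
    have hflip1 : ∀ σ x, E (flip σ (some x)) = ((E σ).1, flip (E σ).2 x) := by
      intro σ x
      refine Prod.ext ?_ (funext fun y => ?_)
      · simp [flip, E, Equiv.piOptionEquivProd]
      · by_cases h : y = x
        · subst h; simp [flip, E, Equiv.piOptionEquivProd]
        · simp [flip, E, Equiv.piOptionEquivProd, h, Function.update_of_ne]
    have hq := prodW_pos (p := fun x => p (some x)) (fun x b => hp _ _)
    have ih' := ih (fun x => p (some x)) (fun x b => hp _ _)
    rw [hw, hff]
    simp only [hflip0, hflip1, Fintype.sum_option]
    rw [ent_equiv E w (fun z => f' z ^ 2),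
      av_equiv E w (fun z => (f' z - f' (!z.1, z.2)) ^ 2)]
    simp only [fun x => av_equiv E w (fun z => (f' z - f' (z.1, flip z.2 x)) ^ 2)]
    simp only [w]
    generalize prodW (fun x => p (some x)) = q at hq ih'
    simp only [ent_prod, av_prod]
    have hp1 := hp none true
    have hp0 := hp none false
    set P := p none true / (p none true + p none false) with hP
    set Q := p none false / (p none true + p none false) with hQ
    have hP0 : 0 < P := by positivity
    have hQ0 : 0 < Q := by positivity
    have hPQ : P + Q = 1 := by rw [hP, hQ]; field_simp
    simp only [ent, av_bool, ← hP, ← hQ]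
    have h1 : av q (fun y => P * (f' (true, y) ^ 2 * log (f' (true, y) ^ 2))
          + Q * (f' (false, y) ^ 2 * log (f' (false, y) ^ 2))
          - (P * f' (true, y) ^ 2 + Q * f' (false, y) ^ 2)
            * log (P * f' (true, y) ^ 2 + Q * f' (false, y) ^ 2))
        ≤ 1 / 2 * av q (fun y => P * (f' (true, y) - f' (!true, y)) ^ 2
          + Q * (f' (false, y) - f' (!false, y)) ^ 2) := by
      rw [← av_mul_left]
      refine av_mono hq fun y => (two_point_lsi hP0 hQ0 hPQ (hf' _) (hf' _)).trans (le_of_eq ?_)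
      simp only [Bool.not_true, Bool.not_false]
      linear_combination (-1 / 2 * (f' (true, y) - f' (false, y)) ^ 2) * hPQ
    have h2 := ih' (fun y => √(P * f' (true, y) ^ 2 + Q * f' (false, y) ^ 2)) (fun y => by
      have := hf' (true, y)
      positivity)
    have hsq : ∀ y, √(P * f' (true, y) ^ 2 + Q * f' (false, y) ^ 2) ^ 2
        = P * f' (true, y) ^ 2 + Q * f' (false, y) ^ 2 := fun y => sq_sqrt (by positivity)
    simp only [hsq, ent] at h2
    have h3 := Finset.sum_le_sum fun x (_ : x ∈ (Finset.univ : Finset α)) =>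
      av_mono hq (f := fun y => (√(P * f' (true, y) ^ 2 + Q * f' (false, y) ^ 2)
        - √(P * f' (true, flip y x) ^ 2 + Q * f' (false, flip y x) ^ 2)) ^ 2)
        fun y => minkowski_two (a := f' (true, y)) (b := f' (false, y))
          (c := f' (true, flip y x)) (d := f' (false, flip y x)) hP0 hQ0
    linarith

variable {Λ : Type*} [Fintype Λ] [DecidableEq Λ]

/-- The spin at `x`. -/
noncomputable def spinS (x : Λ) (σ : Λ → Bool) : ℝ := sg (σ x)

theorem tilt_one_eq (h : Λ → ℝ) :
    tilt (fun _ : Λ → Bool => (1 : ℝ)) (lin spinS h) = prodW (fun x b => exp (h x * sg b)) := by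
  funext σ
  simp only [tilt, lin, spinS, prodW, one_mul, exp_sum]

/-- Independent spins have a diagonal covariance matrix with entries at most `1`. -/
theorem covBound_one : CovBound spinS (fun _ : Λ → Bool => (1 : ℝ)) 1 := by
  intro h v
  rw [tilt_one_eq]
  set p : Λ → Bool → ℝ := fun x b => exp (h x * sg b) with hp
  have hp0 : ∀ x b, 0 < p x b := fun x b => exp_pos _
  have hw := prodW_pos hp0
  set m : Λ → ℝ := fun x => (p x true - p x false) / (p x true + p x false) with hm
  set φ : Λ → Bool → ℝ := fun x b => sg b - m x with hφ
  have hc : ∀ x, p x true * φ x true + p x false * φ x false = 0 := by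
    intro x
    have h1 := hp0 x true
    have h2 := hp0 x false
    simp only [hφ, hm, sg]
    field_simp
    simp
    ring
  have hcross : ∀ x y, x ≠ y → av (prodW p) (fun σ => φ x (σ x) * φ y (σ y)) = 0 := by
    intro x y hxy
    rw [av]
    simp only [prodW]
    rw [sum_prod_centred p φ hxy (hc x), zero_div]
  have hmean : ∀ x, av (prodW p) (fun σ => φ x (σ x)) = 0 := by
    intro x
    rw [av]
    have h1 : ∀ σ : Λ → Bool, prodW p σ * φ x (σ x)
        = ∏ k, (p k (σ k) * (if k = x then φ k (σ k) else 1)) := by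
      intro σ
      rw [Finset.prod_mul_distrib]
      simp [prodW]
    simp only [h1]
    rw [sum_prod_bool (fun k b => p k b * (if k = x then φ k b else 1)),
      Finset.prod_eq_zero (Finset.mem_univ x) (by simpa using hc x), zero_div]
  have hdiag : ∀ x, av (prodW p) (fun σ => φ x (σ x) * φ x (σ x)) ≤ 1 := by
    intro x
    have h1 : (fun σ : Λ → Bool => φ x (σ x) * φ x (σ x))
        = fun σ => (1 - m x ^ 2) - 2 * m x * φ x (σ x) := by
      funext σ
      simp only [hφ]
      linear_combination sg_sq (σ x)
    rw [h1, av_sub, av_const hw, av_mul_left, hmean]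
    nlinarith [sq_nonneg (m x)]
  refine (cov_self_le hw _ (∑ x, v x * m x)).trans ?_
  have h2 : (fun σ : Λ → Bool => (lin spinS v σ - ∑ x, v x * m x) ^ 2)
      = fun σ => ∑ x, ∑ y, (v x * v y) * (φ x (σ x) * φ y (σ y)) := by
    funext σ
    rw [lin, ← Finset.sum_sub_distrib, sq, Finset.sum_mul_sum]
    exact Finset.sum_congr rfl fun x _ => Finset.sum_congr rfl fun y _ => by
      simp only [hφ, spinS]; ring
  rw [h2, av_sum, one_mul]
  refine Finset.sum_le_sum fun x _ => ?_
  rw [av_sum, Finset.sum_eq_single x]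
  · rw [av_mul_left]
    nlinarith [hdiag x, sq_nonneg (v x)]
  · intro y _ hy
    rw [av_mul_left, hcross x y hy.symm, mul_zero]
  · simp

theorem entBound_one {f d : (Λ → Bool) → ℝ} (hf : ∀ σ, 0 < f σ)
    (hd : ∀ σ, ∑ x, (f σ - f (flip σ x)) ^ 2 ≤ d σ) :
    EntBound spinS (fun σ => f σ ^ 2) d (fun _ => (1 : ℝ)) (1 / 2) := by
  intro h
  rw [tilt_one_eq]
  refine (prod_lsi Λ _ (fun x b => exp_pos _) f hf).trans ?_
  rw [← av_sum]
  have := av_mono (prodW_pos (p := fun x b => exp (h x * sg b)) fun x b => exp_pos _) hd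
  linarith

end Product

/-! ### Passage to the limit -/

section Limit

open Filter Topology

theorem one_add_sq_le_cosh (x : ℝ) : 1 + x ^ 2 / 2 ≤ cosh x := by
  have h1 : cosh x = 1 + 2 * sinh (x / 2) ^ 2 := by
    have := cosh_two_mul (x / 2)
    rw [cosh_sq, mul_div_cancel₀ x two_ne_zero] at this
    linarith
  have h2 : (x / 2) ^ 2 ≤ sinh (x / 2) ^ 2 := by
    rw [sq_le_sq, abs_sinh]
    exact self_le_sinh_iff.2 (abs_nonneg _)
  rw [h1]; linarith

theorem tendsto_cosh_pow (x : ℝ) :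
    Tendsto (fun n : ℕ => cosh (1 / √n * x) ^ n) atTop (𝓝 (exp (x ^ 2 / 2))) := by
  have hsq : ∀ n : ℕ, (1 / √n * x) ^ 2 / 2 = x ^ 2 / 2 / n := fun n => by
    rw [mul_pow, div_pow, sq_sqrt (Nat.cast_nonneg n)]; ring
  refine tendsto_of_tendsto_of_tendsto_of_le_of_le' (tendsto_one_add_div_pow_exp (x ^ 2 / 2))
    tendsto_const_nhds (Eventually.of_forall fun n => ?_) ?_
  · have h := one_add_sq_le_cosh (1 / √n * x)
    rw [hsq] at h
    exact pow_le_pow_left₀ (by positivity) h n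
  · filter_upwards [eventually_gt_atTop 0] with n hn
    have h := cosh_le_exp_half_sq (1 / √n * x)
    rw [hsq] at h
    refine (pow_le_pow_left₀ (cosh_pos _).le h n).trans (le_of_eq ?_)
    have : (n : ℝ) ≠ 0 := by positivity
    rw [← exp_nat_mul]
    congr 1
    field_simp

variable {Ω : Type*} [Fintype Ω]

theorem tendsto_av {ι : Type*} {l : Filter ι} {W : ι → Ω → ℝ} {w : Ω → ℝ}
    (h : ∀ ω, Tendsto (fun n => W n ω) l (𝓝 (w ω))) (hw : ∑ ω, w ω ≠ 0) (f : Ω → ℝ) :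
    Tendsto (fun n => av (W n) f) l (𝓝 (av w f)) :=
  (tendsto_finsetSum _ fun ω _ => (h ω).mul_const _).div (tendsto_finsetSum _ fun ω _ => h ω) hw

theorem tendsto_ent {ι : Type*} {l : Filter ι} {W : ι → Ω → ℝ} {w : Ω → ℝ}
    (h : ∀ ω, Tendsto (fun n => W n ω) l (𝓝 (w ω))) (hw : ∑ ω, w ω ≠ 0) (g : Ω → ℝ) :
    Tendsto (fun n => ent (W n) g) l (𝓝 (ent w g)) :=
  (tendsto_av h hw _).sub ((continuous_mul_log.tendsto _).comp (tendsto_av h hw g))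

theorem iterate_stepW {I : Type*} [Fintype I] [DecidableEq I] (X : I → Ω → ℝ) (ε : ℝ) (k : ℕ) :
    (stepW X ε)^[k] (fun _ => 1)
      = fun ω => (2 : ℝ) ^ (Fintype.card I * k) * ∏ i, cosh (ε * X i ω) ^ k := by
  induction k with
  | zero => funext ω; simp
  | succ k ih =>
    rw [Function.iterate_succ_apply', ih]
    funext ω
    rw [stepW_eq, Finset.prod_mul_distrib]
    simp only [Finset.prod_const, Finset.card_univ, pow_succ, Finset.prod_mul_distrib,
      mul_add, mul_one, pow_add]
    ring

end Limit

section Main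

open Filter Topology

variable {Λ I : Type*} [Fintype Λ] [DecidableEq Λ] [Fintype I] [DecidableEq I]

/-- The Ising weight `exp (1/2 * ∑ i, (∑ x, U i x * σ x)²)`. -/
noncomputable def gaussW (U : I → Λ → ℝ) (σ : Λ → Bool) : ℝ :=
  exp (1 / 2 * ∑ i, rows spinS U i σ ^ 2)

/-- The inequality with `δ` enlarged to `δ'` and the Dirichlet form enlarged by `θ`: the limit
`n → ∞` of `n` steps of size `ε = 1/√n`. -/
theorem lsi_aux {U : I → Λ → ℝ} {δ δ' θ : ℝ}
    (hU : ∀ c : Λ → ℝ, ∑ i, (∑ x, U i x * c x) ^ 2 ≤ δ * ∑ x, c x ^ 2) (hδ : 0 ≤ δ)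
    (hδδ : δ < δ') (hδ' : δ' < 1) (hθ : 0 < θ) {f : (Λ → Bool) → ℝ} (hf : ∀ σ, 0 < f σ) :
    ent (gaussW U) (fun σ => f σ ^ 2)
      ≤ 1 / 2 * (1 - δ')⁻¹ * av (gaussW U) (fun σ => ∑ x, (f σ - f (flip σ x)) ^ 2 + θ) := by
  set g : (Λ → Bool) → ℝ := fun σ => f σ ^ 2 with hg
  set d : (Λ → Bool) → ℝ := fun σ => ∑ x, (f σ - f (flip σ x)) ^ 2 + θ with hd
  obtain ⟨σa, hσa⟩ := Finite.exists_min g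
  obtain ⟨σb, hσb⟩ := Finite.exists_max g
  have ha : 0 < g σa := pow_pos (hf _) 2
  generalize g σa = a at hσa ha
  generalize g σb = b at hσb
  obtain ⟨R, hR0, hR⟩ : ∃ R : ℝ, 0 ≤ R ∧ ∀ τ σ, |noise (rows (Λ := Λ) spinS U) τ σ| ≤ R := by
    obtain ⟨z, hz⟩ := Finite.exists_max
      (fun z : (I → Bool) × (Λ → Bool) => |noise (rows (Λ := Λ) spinS U) z.1 z.2|)
    exact ⟨_, abs_nonneg _, fun τ σ => hz (τ, σ)⟩
  have hε : Tendsto (fun n : ℕ => 1 / √(n : ℝ)) atTop (𝓝 0) :=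
    tendsto_const_nhds.div_atTop (tendsto_sqrt_atTop.comp tendsto_natCast_atTop_atTop)
  have hsm : ∀ c r : ℝ, 0 < r → ∀ᶠ n : ℕ in atTop, c * (1 / √(n : ℝ)) ≤ r := fun c r hr => by
    have := hε.const_mul c
    rw [mul_zero] at this
    exact this.eventually_le_const hr
  have hlim : ∀ σ, Tendsto (fun n : ℕ => ∏ i, cosh (1 / √(n : ℝ) * rows spinS U i σ) ^ n) atTop
      (𝓝 (gaussW U σ)) := fun σ => by
    have := tendsto_finsetProd (Finset.univ : Finset I)
      (fun i _ => tendsto_cosh_pow (rows spinS U i σ))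
    convert this using 2
    rw [gaussW, ← exp_sum, Finset.mul_sum]
    congr 1
    exact Finset.sum_congr rfl fun i _ => by ring
  have hne : ∑ σ, gaussW U σ ≠ 0 := (sum_w_pos fun σ => exp_pos _).ne'
  refine le_of_tendsto_of_tendsto (tendsto_ent hlim hne g)
    ((tendsto_av hlim hne d).const_mul _) ?_
  have hη : 0 < δ' - δ := sub_pos.2 hδδ
  filter_upwards [eventually_gt_atTop 0, hsm R (1 / 2) (by norm_num),
    hsm (72 * Fintype.card Λ * R ^ 3) (δ' - δ) hη,
    hsm (8 * b * R / a) (1 / 2) (by norm_num), hsm (6 * R * δ) ((δ' - δ) / 2) (by positivity),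
    hsm ((4 * (8 * (8 * b * R / a) + 30 * R) * b ^ 2 * R ^ 2 + 240 * b ^ 2 * R ^ 3) / (2 * a))
      ((δ' - δ) * θ / 4) (by positivity)] with n hn h1 h2 h3 h4 h5
  have hnε : (n : ℝ) * (1 / √(n : ℝ)) ^ 2 = 1 := by
    have : (n : ℝ) ≠ 0 := by positivity
    rw [div_pow, sq_sqrt (Nat.cast_nonneg n)]
    field_simp
  have ev := (evolution (S := spinS (Λ := Λ)) (fun x σ => (abs_sg _).le) hU hδ
    (w := fun _ => (1 : ℝ)) (fun _ => one_pos) (by positivity) hR0 hR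
    (by rw [mul_comm]; exact h1) covBound_one ha hσa hσb hθ (d := d)
    (fun σ => le_add_of_nonneg_left (Finset.sum_nonneg fun x _ => sq_nonneg _))
    (entBound_one hf fun σ => le_add_of_nonneg_right hθ.le) (hδ.trans hδδ.le) h2 h3 h4 h5 n
    (by rw [hnε]; linarith)).2.2 (fun _ => 0)
  rw [lin_zero, tilt_zero, hnε, mul_one, iterate_stepW, ent_scale _ _ (by positivity),
    av_scale _ _ (by positivity)] at ev
  exact ev

theorem lsi_pos {U : I → Λ → ℝ} {δ : ℝ}
    (hU : ∀ c : Λ → ℝ, ∑ i, (∑ x, U i x * c x) ^ 2 ≤ δ * ∑ x, c x ^ 2) (hδ : 0 ≤ δ)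
    (hδ1 : δ < 1) {f : (Λ → Bool) → ℝ} (hf : ∀ σ, 0 < f σ) :
    ent (gaussW U) (fun σ => f σ ^ 2)
      ≤ 1 / 2 * (1 - δ)⁻¹ * av (gaussW U) (fun σ => ∑ x, (f σ - f (flip σ x)) ^ 2) := by
  set D := av (gaussW U) (fun σ => ∑ x, (f σ - f (flip σ x)) ^ 2) with hD
  have hlim : Tendsto (fun t : ℝ => 1 / 2 * (1 - (δ + t))⁻¹ * (D + t)) (𝓝[>] 0)
      (𝓝 (1 / 2 * (1 - δ)⁻¹ * D)) := by
    have : ContinuousAt (fun t : ℝ => 1 / 2 * (1 - (δ + t))⁻¹ * (D + t)) 0 := by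
      have : (1 - (δ + 0)) ≠ 0 := by simp; linarith
      fun_prop (disch := assumption)
    have := this.tendsto.mono_left (nhdsWithin_le_nhds (s := Set.Ioi 0))
    simpa using this
  refine ge_of_tendsto hlim ?_
  have h1 : ∀ᶠ t : ℝ in 𝓝[>] 0, t < 1 - δ :=
    nhdsWithin_le_nhds (eventually_lt_nhds (by linarith))
  filter_upwards [h1, self_mem_nhdsWithin] with t ht ht0
  have ht0' : 0 < t := ht0
  have := lsi_aux hU hδ (δ' := δ + t) (by linarith) (by linarith) ht0' hf
  rwa [av_add, av_const (w := gaussW U) fun σ => exp_pos _] at this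

theorem sqrt_sub_sq_le (a b : ℝ) {η : ℝ} (hη : 0 < η) :
    (√(a ^ 2 + η) - √(b ^ 2 + η)) ^ 2 ≤ (a - b) ^ 2 := by
  have h1 : 0 ≤ a ^ 2 + η := by positivity
  have h2 : 0 ≤ b ^ 2 + η := by positivity
  have h3 : a * b + η ≤ √(a ^ 2 + η) * √(b ^ 2 + η) := by
    rw [← sqrt_mul h1]
    refine le_sqrt_of_sq_le ?_
    nlinarith [mul_nonneg hη.le (sq_nonneg (a - b))]
  nlinarith [sq_sqrt h1, sq_sqrt h2]

theorem lsi_gaussW {U : I → Λ → ℝ} {δ : ℝ}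
    (hU : ∀ c : Λ → ℝ, ∑ i, (∑ x, U i x * c x) ^ 2 ≤ δ * ∑ x, c x ^ 2) (hδ : 0 ≤ δ)
    (hδ1 : δ < 1) (F : (Λ → Bool) → ℝ) :
    ent (gaussW U) (fun σ => F σ ^ 2)
      ≤ 1 / 2 * (1 - δ)⁻¹ * av (gaussW U) (fun σ => ∑ x, (F σ - F (flip σ x)) ^ 2) := by
  have hlim : Tendsto (fun η : ℝ => ent (gaussW U) (fun σ => F σ ^ 2 + η)) (𝓝[>] 0)
      (𝓝 (ent (gaussW U) (fun σ => F σ ^ 2))) := by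
    have hc : Continuous (fun η : ℝ => ent (gaussW U) (fun σ => F σ ^ 2 + η)) := by
      unfold ent av
      refine Continuous.sub (Continuous.div_const (continuous_finsetSum _ fun σ _ =>
        continuous_const.mul (continuous_mul_log.comp (continuous_const.add continuous_id))) _) ?_
      exact continuous_mul_log.comp (Continuous.div_const (continuous_finsetSum _ fun σ _ =>
        continuous_const.mul (continuous_const.add continuous_id)) _)
    simpa using (hc.tendsto 0).mono_left (nhdsWithin_le_nhds (s := Set.Ioi 0))
  refine le_of_tendsto hlim ?_
  filter_upwards [self_mem_nhdsWithin] with η hη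
  have hη' : 0 < η := hη
  have := lsi_pos hU hδ hδ1 (f := fun σ => √(F σ ^ 2 + η)) (fun σ => by positivity)
  have hsq : ∀ σ, √(F σ ^ 2 + η) ^ 2 = F σ ^ 2 + η := fun σ => sq_sqrt (by positivity)
  simp only [hsq] at this
  refine this.trans (mul_le_mul_of_nonneg_left ?_ ?_)
  · exact av_mono (fun σ => exp_pos _) fun σ => Finset.sum_le_sum fun x _ =>
      sqrt_sub_sq_le _ _ hη'
  · have : 0 < 1 - δ := by linarith
    positivity

end Main

/-- If `l ≤ M ≤ u` then `u - M = Uᵀ U` for some matrix `U`, given by its rows, and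
`|U c|² ≤ (u - l) |c|²`. -/
theorem exists_rows {Λ : Type*} [Fintype Λ] [DecidableEq Λ] {M : Matrix Λ Λ ℝ} (hM : M.IsSymm)
    {l u : ℝ} (hl : ∀ v : Λ → ℝ, l * (v ⬝ᵥ v) ≤ v ⬝ᵥ M.mulVec v)
    (hu : ∀ v : Λ → ℝ, v ⬝ᵥ M.mulVec v ≤ u * (v ⬝ᵥ v)) :
    ∃ (m : ℕ) (U : Fin m → Λ → ℝ),
      (∀ c : Λ → ℝ, ∑ i, (∑ x, U i x * c x) ^ 2 = u * (c ⬝ᵥ c) - c ⬝ᵥ M.mulVec c) ∧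
      ∀ c : Λ → ℝ, ∑ i, (∑ x, U i x * c x) ^ 2 ≤ (u - l) * ∑ x, c x ^ 2 := by
  have hquad : ∀ c : Λ → ℝ, c ⬝ᵥ (u • (1 : Matrix Λ Λ ℝ) - M).mulVec c
      = u * (c ⬝ᵥ c) - c ⬝ᵥ M.mulVec c := fun c => by
    rw [sub_mulVec, dotProduct_sub, smul_mulVec, one_mulVec, dotProduct_smul, smul_eq_mul]
  have hB : (u • (1 : Matrix Λ Λ ℝ) - M).PosSemidef := by
    refine .of_dotProduct_mulVec_nonneg ?_ fun v => ?_
    · change (u • (1 : Matrix Λ Λ ℝ) - M)ᴴ = _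
      rw [conjTranspose_eq_transpose_of_trivial, transpose_sub, transpose_smul, transpose_one,
        hM.eq]
    · rw [star_trivial, hquad]; linarith [hu v]
  obtain ⟨m, U, hUB⟩ := Matrix.posSemidef_iff_eq_sum_vecMulVec.1 hB
  have hU : ∀ c : Λ → ℝ, ∑ i, (∑ x, U i x * c x) ^ 2 = u * (c ⬝ᵥ c) - c ⬝ᵥ M.mulVec c := by
    intro c
    rw [← hquad, hUB]
    simp only [star_trivial, dotProduct, mulVec, Matrix.sum_apply, vecMulVec_apply]
    simp only [Finset.mul_sum, Finset.sum_mul, sq]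
    rw [Finset.sum_comm' (t' := Finset.univ) (s' := fun _ => Finset.univ) (by simp)]
    refine Finset.sum_congr rfl fun x _ => ?_
    rw [Finset.sum_comm]
    refine Finset.sum_congr rfl fun y _ => ?_
    exact Finset.sum_congr rfl fun i _ => by ring
  refine ⟨m, U, hU, fun c => ?_⟩
  rw [hU]
  have : ∑ x, c x ^ 2 = c ⬝ᵥ c := by simp [dotProduct, sq]
  rw [this]; linarith [hl c]

end IsingLSI

/-- Shifted-spectrum form of the main theorem for the Ising model: if the symmetric
coupling matrix `M` (not necessarily positive definite) has all its spectrum in an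
interval `[λ⁻, λ⁺]` with `δ = λ⁺ - λ⁻ < 1`, then
`Ent_ν(F²) ≤ (1/2)(1 + 2δ/(1-δ)) Σ_x ν((F(σ) - F(σˣ))²)`.
The spectral localisation is encoded by the two-sided Rayleigh quotient bound
`λ⁻ (v,v) ≤ (v, Mv) ≤ λ⁺ (v,v)` for all `v`. -/
theorem ising_LSI_shifted_spectrum
    (Λ : Type*) [Fintype Λ] [DecidableEq Λ] [Nonempty Λ]
    (M : Matrix Λ Λ ℝ) (hMsymm : M.IsSymm)
    (lam_minus lam_plus : ℝ)
    (hlower : ∀ v : Λ → ℝ, lam_minus * (v ⬝ᵥ v) ≤ v ⬝ᵥ M.mulVec v)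
    (hupper : ∀ v : Λ → ℝ, v ⬝ᵥ M.mulVec v ≤ lam_plus * (v ⬝ᵥ v))
    (δ : ℝ) (hδdef : δ = lam_plus - lam_minus) (hδ : δ < 1)
    (spin : Bool → ℝ) (hspin : spin = fun b => if b then 1 else -1)
    (ν : (Λ → Bool) → ℝ)
    (hν : ∀ σ, ν σ =
      Real.exp (-(1 / 2) * ∑ x, ∑ y, M x y * spin (σ x) * spin (σ y)) /
        ∑ σ' : Λ → Bool,
          Real.exp (-(1 / 2) * ∑ x, ∑ y, M x y * spin (σ' x) * spin (σ' y)))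
    (F : (Λ → Bool) → ℝ) :
    (∑ σ : Λ → Bool, ν σ * ((F σ) ^ 2 * Real.log ((F σ) ^ 2)))
      - (∑ σ : Λ → Bool, ν σ * (F σ) ^ 2)
          * Real.log (∑ σ : Λ → Bool, ν σ * (F σ) ^ 2)
    ≤ (1 / 2) * (1 + 2 * δ / (1 - δ)) *
        ∑ x : Λ, ∑ σ : Λ → Bool,
          ν σ * (F σ - F (Function.update σ x (!(σ x)))) ^ 2 := by
  obtain ⟨m, U, hUeq, hU⟩ := IsingLSI.exists_rows hMsymm hlower hupper
  rw [← hδdef] at hU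
  have hcard : (0 : ℝ) < Fintype.card Λ := by exact_mod_cast Fintype.card_pos
  have hδ0 : 0 ≤ δ := by
    have h := (hlower fun _ => 1).trans (hupper fun _ => 1)
    have h1 : (fun _ : Λ => (1 : ℝ)) ⬝ᵥ (fun _ => 1) = Fintype.card Λ := by simp [dotProduct]
    rw [h1] at h
    have := le_of_mul_le_mul_right h hcard
    linarith
  have hlsi := IsingLSI.lsi_gaussW hU hδ0 hδ F
  -- The Ising weight differs from `gaussW U` by a constant factor, since `∑ x, σ x ^ 2 = card Λ`.
  have hW : ∀ σ : Λ → Bool,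
      exp (-(1 / 2) * ∑ x, ∑ y, M x y * spin (σ x) * spin (σ y))
        = exp (-(1 / 2) * (lam_plus * Fintype.card Λ)) * IsingLSI.gaussW U σ := by
    intro σ
    rw [IsingLSI.gaussW, ← exp_add]
    congr 1
    have h := hUeq fun x => IsingLSI.sg (σ x)
    have h1 : (fun x => IsingLSI.sg (σ x)) ⬝ᵥ (fun x => IsingLSI.sg (σ x)) = Fintype.card Λ := by
      simp [dotProduct, IsingLSI.sg_sq]
    have h2 : (fun x => IsingLSI.sg (σ x)) ⬝ᵥ M.mulVec (fun x => IsingLSI.sg (σ x))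
        = ∑ x, ∑ y, M x y * spin (σ x) * spin (σ y) := by
      simp only [dotProduct, mulVec, Finset.mul_sum, hspin, IsingLSI.sg]
      exact Finset.sum_congr rfl fun x _ => Finset.sum_congr rfl fun y _ => by ring
    rw [h1, h2] at h
    simp only [IsingLSI.rows, IsingLSI.lin, IsingLSI.spinS]
    rw [h]; ring
  have hav : ∀ G : (Λ → Bool) → ℝ, ∑ σ, ν σ * G σ = IsingLSI.av (IsingLSI.gaussW U) G := by
    intro G
    rw [← IsingLSI.av_scale (IsingLSI.gaussW U) G
      (exp_pos (-(1 / 2) * (lam_plus * Fintype.card Λ))).ne', IsingLSI.av, Finset.sum_div]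
    refine Finset.sum_congr rfl fun σ _ => ?_
    rw [hν]
    simp only [hW]
    ring
  simp only [hav]
  rw [← IsingLSI.av_sum]
  refine hlsi.trans (mul_le_mul_of_nonneg_right ?_ ?_)
  · have h1 : 0 < 1 - δ := by linarith
    have h2 : 1 + 2 * δ / (1 - δ) = (1 - δ)⁻¹ * (1 + δ) := by field_simp; ring
    rw [h2]
    have : 0 ≤ (1 - δ)⁻¹ * δ := by positivity
    nlinarith
  · exact IsingLSI.le_av (fun σ => exp_pos _) fun σ => Finset.sum_nonneg fun x _ => sq_nonneg _
end

section
/- Let n ≥ 1, let μ be a probability measure on ℝ^n with compact support, and let c > 0. Define V : ℝ^n → ℝ by V(ψ) = −log ∫ exp(−c|ψ − σ|²/2) dμ(σ), and for ψ ∈ ℝ^n let μ_ψ be the probability measure with density e^{V(ψ)} e^{−c|ψ−σ|²/2} with respect to μ. Then V is smooth, and for every ψ, x ∈ ℝ^n, x · Hess V(ψ) x = c|x|² − c² Var_{μ_ψ}(x·σ), where Var_{μ_ψ}(x·σ) is the variance of the function σ ↦ x·σ under μ_ψ. -/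
/-!
For `μ` carried by a compact set, `ψ ↦ ∫ G (ψ, σ) ∂μ` is smooth whenever `G` is jointly smooth, and
it may be differentiated under the integral sign: on a ball times the compact set the
`ψ`-derivative of `G` is bounded by compactness (`hasFDerivAt_integral_of_compact`), and induction on
the order of differentiability gives smoothness (`contDiff_integral_of_compact`).

For the Gaussian weight this yields, with `M g ψ = ∫ g(σ) e^{-c|ψ-σ|²/2} dμ(σ)`, the recursion
`∂ₓ (M g) = -c ⟪ψ, x⟫ M g + c M (⟪x, ·⟫ g)`. Writing `Z = M 1`, `A = M ⟪x, ·⟫`, `B = M ⟪x, ·⟫²`,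
one gets `∂ₓ V = c ⟪ψ, x⟫ - c A / Z` and hence `∂ₓ² V = c |x|² - c² (B / Z - (A / Z)²)`. Since
`e^{V} = 1 / Z`, the quotients `A / Z` and `B / Z` are the first two moments of `⟪x, σ⟫` under the
tilted measure.
-/

open MeasureTheory Real
open scoped RealInnerProductSpace

section Parametric

variable {E : Type} [NormedAddCommGroup E] [NormedSpace ℝ E] [FiniteDimensional ℝ E]
  [MeasurableSpace E] [BorelSpace E]

theorem integrable_of_continuous_of_compact {F : Type} [NormedAddCommGroup F]
    {μ : Measure E} [IsFiniteMeasure μ] {K : Set E} (hK : IsCompact K) (hμ : μ Kᶜ = 0) {g : E → F} (hg : Continuous g) : Integrable g μ := by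
  obtain ⟨C, hC⟩ := hK.exists_bound_of_continuousOn hg.continuousOn
  refine Integrable.of_bound hg.aestronglyMeasurable C ?_
  have : ∀ᵐ σ ∂μ, σ ∈ K := hμ
  filter_upwards [this] with σ hσ using hC σ hσ

variable {F : Type} [NormedAddCommGroup F] [NormedSpace ℝ F]

/-- Differentiation under the integral sign; the domination comes from compactness. -/
theorem hasFDerivAt_integral_of_compact {μ : Measure E} [IsFiniteMeasure μ] {K : Set E}
    (hK : IsCompact K) (hμ : μ Kᶜ = 0) {G : E × E → F} (hG : ContDiff ℝ 1 G) (ψ : E) :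
    HasFDerivAt (fun ψ => ∫ σ, G (ψ, σ) ∂μ)
      (∫ σ, (fderiv ℝ G (ψ, σ)).comp (ContinuousLinearMap.inl ℝ E E) ∂μ) ψ := by
  have hGc : Continuous G := hG.continuous
  have hG' : Continuous (fderiv ℝ G) := hG.continuous_fderiv one_ne_zero
  have hD : Continuous fun p : E × E =>
      (fderiv ℝ G p).comp (ContinuousLinearMap.inl ℝ E E) := hG'.clm_comp continuous_const
  obtain ⟨C, hC⟩ := ((isCompact_closedBall ψ 1).prod hK).exists_bound_of_continuousOn
    hD.continuousOn
  have hae : ∀ᵐ σ ∂μ, σ ∈ K := hμ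
  refine hasFDerivAt_integral_of_dominated_of_fderiv_le (bound := fun _ => C)
    (F := fun ψ σ => G (ψ, σ))
    (F' := fun ψ σ => (fderiv ℝ G (ψ, σ)).comp (ContinuousLinearMap.inl ℝ E E))
    (Metric.closedBall_mem_nhds ψ one_pos) ?_ ?_ ?_ ?_ (integrable_const C) ?_
  · exact .of_forall fun φ => (hGc.comp (by fun_prop)).aestronglyMeasurable
  · exact integrable_of_continuous_of_compact hK hμ (hGc.comp (by fun_prop))
  · exact (hD.comp (by fun_prop : Continuous fun σ => (ψ, σ))).aestronglyMeasurable
  · filter_upwards [hae] with σ hσ φ hφ using hC (φ, σ) ⟨hφ, hσ⟩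
  · refine .of_forall fun σ φ _ => ?_
    exact ((hG.differentiable one_ne_zero) (φ, σ)).hasFDerivAt.comp φ (hasFDerivAt_prodMk_left φ σ)

/-- The induction on `k` replaces `F` by `E →L[ℝ] F`, so `F` has to be quantified inside. -/
theorem contDiff_nat_integral_of_compact {μ : Measure E} [IsFiniteMeasure μ] {K : Set E}
    (hK : IsCompact K) (hμ : μ Kᶜ = 0) (k : ℕ) :
    ∀ (F : Type) [NormedAddCommGroup F] [NormedSpace ℝ F] (G : E × E → F),
      ContDiff ℝ (⊤ : ℕ∞) G → ContDiff ℝ k (fun ψ => ∫ σ, G (ψ, σ) ∂μ) := by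
  induction k with
  | zero =>
    intro F _ _ G hG
    have h1 : ContDiff ℝ 1 G := hG.of_le (by exact_mod_cast le_top)
    exact contDiff_zero.2 <| continuous_iff_continuousAt.2 fun ψ =>
      (hasFDerivAt_integral_of_compact hK hμ h1 ψ).continuousAt
  | succ k ih =>
    intro F _ _ G hG
    have h1 : ContDiff ℝ 1 G := hG.of_le (by exact_mod_cast le_top)
    have hd := hasFDerivAt_integral_of_compact hK hμ h1
    push_cast
    refine contDiff_succ_iff_fderiv.2 ⟨fun ψ => (hd ψ).differentiableAt, by simp, ?_⟩
    rw [funext fun ψ => (hd ψ).fderiv]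
    refine ih (E →L[ℝ] F) (fun p => (fderiv ℝ G p).comp (ContinuousLinearMap.inl ℝ E E)) ?_
    exact (hG.fderiv_right (m := (⊤ : ℕ∞)) (by simp)).clm_comp contDiff_const

theorem contDiff_integral_of_compact {μ : Measure E} [IsFiniteMeasure μ] {K : Set E}
    (hK : IsCompact K) (hμ : μ Kᶜ = 0) {G : E × E → F} (hG : ContDiff ℝ (⊤ : ℕ∞) G) :
    ContDiff ℝ (⊤ : ℕ∞) (fun ψ => ∫ σ, G (ψ, σ) ∂μ) :=
  contDiff_infty.2 fun k => contDiff_nat_integral_of_compact hK hμ k F G hG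

end Parametric

section Gaussian

variable {E : Type} [NormedAddCommGroup E] [InnerProductSpace ℝ E]

theorem contDiff_gaussian_mul (c : ℝ) {g : E → ℝ} (hg : ContDiff ℝ (⊤ : ℕ∞) g) :
    ContDiff ℝ (⊤ : ℕ∞) fun p : E × E => g p.2 * exp (-(c * ‖p.1 - p.2‖ ^ 2) / 2) := by
  have h : ContDiff ℝ (⊤ : ℕ∞) fun p : E × E => ‖p.1 - p.2‖ ^ 2 :=
    (contDiff_fst.sub contDiff_snd).norm_sq ℝ
  exact (hg.comp contDiff_snd).mul (((contDiff_const.mul h).neg.div_const 2).exp)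

variable [FiniteDimensional ℝ E] [MeasurableSpace E] [BorelSpace E]

/-- The recursion `∂ₓ (M g) = -c ⟪ψ, x⟫ M g + c M (⟪x, ·⟫ g)` for Gaussian-weighted moments. -/
theorem fderiv_gaussian_moment {μ : Measure E} [IsFiniteMeasure μ] {K : Set E}
    (hK : IsCompact K) (hμ : μ Kᶜ = 0) (c : ℝ) {g : E → ℝ} (hg : ContDiff ℝ (⊤ : ℕ∞) g) (ψ x : E) :
    fderiv ℝ (fun ψ => ∫ σ, g σ * exp (-(c * ‖ψ - σ‖ ^ 2) / 2) ∂μ) ψ x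
      = -c * ⟪ψ, x⟫ * (∫ σ, g σ * exp (-(c * ‖ψ - σ‖ ^ 2) / 2) ∂μ)
        + c * ∫ σ, (⟪x, σ⟫ * g σ) * exp (-(c * ‖ψ - σ‖ ^ 2) / 2) ∂μ := by
  have hG := contDiff_gaussian_mul c hg
  have hG1 := hG.of_le (m := 1) (by exact_mod_cast le_top)
  have hgc : Continuous g := hg.continuous
  have hD : Continuous fun σ : E => (fderiv ℝ
      (fun p : E × E => g p.2 * exp (-(c * ‖p.1 - p.2‖ ^ 2) / 2)) (ψ, σ)).comp
        (ContinuousLinearMap.inl ℝ E E) :=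
    ((hG1.continuous_fderiv one_ne_zero).comp (by fun_prop : Continuous fun σ => (ψ, σ))).clm_comp
      continuous_const
  rw [(hasFDerivAt_integral_of_compact hK hμ hG1 ψ).fderiv,
    ContinuousLinearMap.integral_apply (integrable_of_continuous_of_compact hK hμ hD),
    ← integral_const_mul, ← integral_const_mul, ← integral_add]
  · refine integral_congr_ae (.of_forall fun σ => ?_)
    have h1 : HasFDerivAt (fun φ : E => g σ * exp (-(c * ‖φ - σ‖ ^ 2) / 2)) _ ψ :=
      HasFDerivAt.comp (f := fun φ : E => (φ, σ)) ψ
        ((hG1.differentiable one_ne_zero) (ψ, σ)).hasFDerivAt (hasFDerivAt_prodMk_left ψ σ)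
    have h2 : HasFDerivAt (fun φ : E => ‖φ - σ‖ ^ 2) _ ψ :=
      ((hasFDerivAt_id ψ).sub_const σ).norm_sq
    have h3 : HasFDerivAt (fun φ : E => g σ * exp (-(c * ‖φ - σ‖ ^ 2) / 2)) _ ψ :=
      (((h2.const_mul c).neg.mul_const (2 : ℝ)⁻¹).exp).const_mul (g σ)
    have h4 := DFunLike.congr_fun (h1.unique h3) x
    refine h4.trans ?_
    simp [real_inner_comm x σ]
    ring_nf
  · exact integrable_of_continuous_of_compact hK hμ (by fun_prop)
  · exact integrable_of_continuous_of_compact hK hμ (by fun_prop)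

end Gaussian

/-- The renormalised single-spin potential `V(ψ) = -log ∫ e^{-c|ψ-σ|²/2} dμ(σ)` of a
compactly supported probability measure `μ` on `ℝⁿ` is smooth, and its Hessian satisfies
`x · Hess V(ψ) x = c|x|² - c² Var_{μ_ψ}(x·σ)`, where `μ_ψ` is the tilted measure with
density `e^{V(ψ)} e^{-c|ψ-σ|²/2}` with respect to `μ`. -/
theorem renormalised_potential_hessian
    (n : ℕ) (hn : 1 ≤ n)
    (μ : Measure (EuclideanSpace ℝ (Fin n))) [IsProbabilityMeasure μ]
    (hsupp : ∃ K : Set (EuclideanSpace ℝ (Fin n)), IsCompact K ∧ μ Kᶜ = 0)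
    (c : ℝ) (hc : 0 < c)
    (V : EuclideanSpace ℝ (Fin n) → ℝ)
    (hV : ∀ ψ, V ψ = -Real.log (∫ σ, Real.exp (-(c * ‖ψ - σ‖ ^ 2) / 2) ∂μ))
    (μψ : EuclideanSpace ℝ (Fin n) → Measure (EuclideanSpace ℝ (Fin n)))
    (hμψ : ∀ ψ, μψ ψ = μ.withDensity
      (fun σ => ENNReal.ofReal (Real.exp (V ψ) * Real.exp (-(c * ‖ψ - σ‖ ^ 2) / 2)))) :
    ContDiff ℝ (⊤ : ℕ∞) V ∧
    ∀ ψ x : EuclideanSpace ℝ (Fin n),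
      fderiv ℝ (fun ψ' => fderiv ℝ V ψ' x) ψ x
        = c * ‖x‖ ^ 2
          - c ^ 2 * ((∫ σ, ⟪x, σ⟫ ^ 2 ∂(μψ ψ)) - (∫ σ, ⟪x, σ⟫ ∂(μψ ψ)) ^ 2) := by
  obtain ⟨K, hK, hμK⟩ := hsupp
  set Z : EuclideanSpace ℝ (Fin n) → ℝ :=
    fun ψ => ∫ σ, exp (-(c * ‖ψ - σ‖ ^ 2) / 2) ∂μ with hZdef
  have hZ1 : Z = fun ψ => ∫ σ, (fun _ => (1 : ℝ)) σ * exp (-(c * ‖ψ - σ‖ ^ 2) / 2) ∂μ := by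
    simp [hZdef]
  have hZpos : ∀ ψ, 0 < Z ψ := fun ψ =>
    integral_exp_pos (integrable_of_continuous_of_compact hK hμK (by fun_prop))
  have hZsm : ContDiff ℝ (⊤ : ℕ∞) Z := by
    rw [hZ1]
    exact contDiff_integral_of_compact hK hμK (contDiff_gaussian_mul c contDiff_const)
  have hVZ : V = fun ψ => -Real.log (Z ψ) := funext hV
  have hVsm : ContDiff ℝ (⊤ : ℕ∞) V := by
    rw [hVZ]
    exact (hZsm.log fun ψ => (hZpos ψ).ne').neg
  refine ⟨hVsm, fun ψ x => ?_⟩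
  have hexpV : exp (V ψ) = (Z ψ)⁻¹ := by
    rw [hVZ]; simp only [exp_neg, exp_log (hZpos ψ)]
  have hmom : ∀ f : EuclideanSpace ℝ (Fin n) → ℝ, ∫ σ, f σ ∂(μψ ψ)
      = (∫ σ, f σ * exp (-(c * ‖ψ - σ‖ ^ 2) / 2) ∂μ) / Z ψ := by
    intro f
    rw [hμψ, integral_withDensity_eq_integral_toReal_smul
      (by fun_prop) (.of_forall fun _ => ENNReal.ofReal_lt_top), div_eq_inv_mul,
      ← integral_const_mul]
    refine integral_congr_ae (.of_forall fun σ => ?_)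
    simp only [smul_eq_mul]
    rw [ENNReal.toReal_ofReal (by positivity), hexpV]
    ring
  have hx : ContDiff ℝ (⊤ : ℕ∞) fun σ : EuclideanSpace ℝ (Fin n) => ⟪x, σ⟫ :=
    contDiff_const.inner ℝ contDiff_id
  set A : EuclideanSpace ℝ (Fin n) → ℝ :=
    fun ψ => ∫ σ, ⟪x, σ⟫ * exp (-(c * ‖ψ - σ‖ ^ 2) / 2) ∂μ with hA
  have hAsm : ContDiff ℝ (⊤ : ℕ∞) A :=
    contDiff_integral_of_compact hK hμK (contDiff_gaussian_mul c hx)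
  have hZd : ∀ ψ, HasFDerivAt Z (fderiv ℝ Z ψ) ψ := fun ψ =>
    ((hZsm.differentiable (by simp)) ψ).hasFDerivAt
  have hAd : HasFDerivAt A (fderiv ℝ A ψ) ψ := ((hAsm.differentiable (by simp)) ψ).hasFDerivAt
  have hZ' : ∀ ψ, fderiv ℝ Z ψ x = -c * ⟪ψ, x⟫ * Z ψ + c * A ψ := by
    intro ψ
    have h := fderiv_gaussian_moment hK hμK c (g := fun _ => (1 : ℝ)) contDiff_const ψ x
    rw [← hZ1] at h
    simpa [hZdef, hA] using h
  have hA' : fderiv ℝ A ψ x = -c * ⟪ψ, x⟫ * A ψ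
      + c * ∫ σ, ⟪x, σ⟫ ^ 2 * exp (-(c * ‖ψ - σ‖ ^ 2) / 2) ∂μ := by
    simpa only [← pow_two] using fderiv_gaussian_moment hK hμK c hx ψ x
  have hV' : (fun ψ' => fderiv ℝ V ψ' x) = fun ψ' => c * ⟪ψ', x⟫ - c * (A ψ' * (Z ψ')⁻¹) := by
    funext φ
    have h : HasFDerivAt (fun ψ => -Real.log (Z ψ)) _ φ := ((hZd φ).log (hZpos φ).ne').neg
    rw [hVZ, h.fderiv]
    have := (hZpos φ).ne'
    simp [hZ']
    field_simp
    ring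
  have hinv : HasFDerivAt (fun ψ => (Z ψ)⁻¹) _ ψ :=
    (hasDerivAt_inv (hZpos ψ).ne').comp_hasFDerivAt ψ (hZd ψ)
  have hin : HasFDerivAt (fun ψ' : EuclideanSpace ℝ (Fin n) => ⟪ψ', x⟫) _ ψ :=
    (hasFDerivAt_id ψ).inner ℝ (hasFDerivAt_const x ψ)
  have hfin : HasFDerivAt (fun ψ' => c * ⟪ψ', x⟫ - c * (A ψ' * (Z ψ')⁻¹)) _ ψ :=
    (hin.const_mul c).sub ((hAd.mul hinv).const_mul c)
  rw [hV', hfin.fderiv, hmom, hmom]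
  change _ = c * ‖x‖ ^ 2 - c ^ 2 * (_ - (A ψ / Z ψ) ^ 2)
  have := (hZpos ψ).ne'
  simp [hZ', hA']
  field_simp
  ring
end
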